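/- arXiv:1907.01373 — 7 statements merged into one kernel-verified Lean document; each statement's English description precedes it below -/
import Mathlib

section
/- Let 0<s<1 and 1<p<∞ satisfy sp>1. There is a constant C depending only on s and p such that for every open interval I ⊆ ℝ and every continuous function f : I → ℝ one has the reverse oscillation inequality ∫_I∫_I (osc_{[x,y]} f)^p / |y-x|^{1+sp} dx dy ≤ C ∫_I∫_I |f(y)-f(x)|^p / |y-x|^{1+sp} dx dy. -/
open MeasureTheory Set ENNReal

/-- The oscillation of `f` on the set `A`, valued in `ℝ≥0∞`. -/
noncomputable def oscE (f : ℝ → ℝ) (A : Set ℝ) : ℝ≥0∞ :=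
  ⨆ z ∈ A, ⨆ t ∈ A, edist (f z) (f t)

theorem jensen1 {p : ℝ} (hp : 1 < p) (μ : Measure ℝ) [IsProbabilityMeasure μ] (g : ℝ → ℝ≥0∞)
    (hg : Measurable g) : (∫⁻ u, g u ∂μ) ^ p ≤ ∫⁻ u, g u ^ p ∂μ := by
  have h := eLpNorm'_le_eLpNorm'_of_exponent_le (f := g) (p := 1) (q := p) one_pos hp.le μ
    hg.aestronglyMeasurable
  have hp0 : 0 < p := by linarith
  simp only [eLpNorm', enorm_eq_self, rpow_one, div_one] at h
  have := ENNReal.rpow_le_rpow h hp0.le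
  rwa [← ENNReal.rpow_mul, one_div, inv_mul_cancel₀ hp0.ne', rpow_one] at this

theorem jensen2 {p : ℝ} (hp : 1 < p) (μ ν : Measure ℝ) [IsProbabilityMeasure μ]
    [IsProbabilityMeasure ν] (f : ℝ → ℝ) (hf : Measurable f) :
    (∫⁻ u, ∫⁻ v, edist (f u) (f v) ∂ν ∂μ) ^ p ≤ ∫⁻ u, ∫⁻ v, edist (f u) (f v) ^ p ∂ν ∂μ := by
  have hm : Measurable (fun q : ℝ × ℝ => edist (f q.1) (f q.2)) := by fun_prop
  refine (jensen1 hp μ _ hm.lintegral_prod_right').trans ?_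
  refine lintegral_mono fun u => ?_
  exact jensen1 hp ν _ (by fun_prop)

theorem step1 (μ ν : Measure ℝ) [IsProbabilityMeasure μ]
    [IsProbabilityMeasure ν] (f : ℝ → ℝ) (hf : Measurable f) (c : ℝ) :
    (∫⁻ u, edist c (f u) ∂μ) ≤ (∫⁻ v, edist c (f v) ∂ν) +
      ∫⁻ u, ∫⁻ v, edist (f u) (f v) ∂ν ∂μ := by
  have h : ∀ u, edist c (f u) ≤ (∫⁻ v, edist c (f v) ∂ν) + ∫⁻ v, edist (f u) (f v) ∂ν := by
    intro u
    rw [← lintegral_add_left (by fun_prop)]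
    calc edist c (f u) = ∫⁻ v, edist c (f u) ∂ν := by simp
      _ ≤ _ := lintegral_mono fun v => by
        rw [edist_comm (f u)]; exact edist_triangle _ _ _
  calc _ ≤ ∫⁻ u, ((∫⁻ v, edist c (f v) ∂ν) + ∫⁻ v, edist (f u) (f v) ∂ν) ∂μ := lintegral_mono h
    _ = _ := by rw [lintegral_add_left measurable_const]; simp

/-- normalized measure -/
noncomputable def nrm (S : Set ℝ) : Measure ℝ := (volume S)⁻¹ • volume.restrict S

theorem nrm_prob {S : Set ℝ} (h0 : volume S ≠ 0) (h1 : volume S ≠ ∞) :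
    IsProbabilityMeasure (nrm S) := by
  constructor
  simp [nrm, ENNReal.inv_mul_cancel h0 h1]

theorem lint_nrm (S : Set ℝ) (g : ℝ → ℝ≥0∞) :
    ∫⁻ u, g u ∂(nrm S) = (volume S)⁻¹ * ∫⁻ u in S, g u := by
  simp [nrm, lintegral_smul_measure]

theorem kern_le {a e R : ℝ≥0∞} {β : ℝ} (hβ : 0 < β) (h0 : e = 0 → a = 0) (hR : R ≠ ∞)
    (h : e ≤ R) : a ≤ R ^ β * (a / e ^ β) := by
  by_cases he : e = 0
  · simp [h0 he]
  have he' : e ^ β ≠ 0 := by simp [he, hβ.not_gt]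
  have het : e ^ β ≠ ∞ := ENNReal.rpow_ne_top_of_nonneg hβ.le (ne_top_of_le_ne_top hR h)
  calc a = e ^ β * (a / e ^ β) := (ENNReal.mul_div_cancel he' het).symm
    _ ≤ _ := by gcongr

theorem Ebound {p γ : ℝ} (hp : 1 < p) (hγ : 0 < γ) (f : ℝ → ℝ) (hf : Measurable f)
    (S S' J : Set ℝ) (hS : MeasurableSet S) (hS' : MeasurableSet S') (hSJ : S ⊆ J) (hSJ' : S' ⊆ J)
    (R : ℝ) (hR : 0 < R) (vS : volume S = ENNReal.ofReal R)
    (vS' : volume S' = ENNReal.ofReal (R / 2))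
    (hd : ∀ u ∈ S, ∀ v ∈ S', edist u v ≤ ENNReal.ofReal R) :
    (∫⁻ u, ∫⁻ v, edist (f u) (f v) ∂(nrm S') ∂(nrm S)) ^ p ≤
      2 * ENNReal.ofReal R ^ γ *
        ∫⁻ u in J, ∫⁻ v in J, edist (f u) (f v) ^ p / edist u v ^ (2 + γ) := by
  have h1 : ENNReal.ofReal R ≠ 0 := by simpa using hR
  have h2 : ENNReal.ofReal (R / 2) ≠ 0 := by simpa using hR
  have := nrm_prob (S := S) (by rwa [vS]) (by simp [vS])
  have := nrm_prob (S := S') (by rwa [vS']) (by simp [vS'])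
  refine (jensen2 hp _ _ f hf).trans ?_
  set A := ∫⁻ u in J, ∫⁻ v in J, edist (f u) (f v) ^ p / edist u v ^ (2 + γ)
  simp only [lint_nrm, vS, vS']
  have hmm : Measurable (fun q : ℝ × ℝ => edist (f q.1) (f q.2) ^ p) := by fun_prop
  rw [lintegral_const_mul _ hmm.lintegral_prod_right']
  have hm2 : Measurable (fun q : ℝ × ℝ => edist (f q.1) (f q.2) ^ p / edist q.1 q.2 ^ (2 + γ)) := by
    fun_prop
  have key : ∫⁻ u in S, ∫⁻ v in S', edist (f u) (f v) ^ p ≤ ENNReal.ofReal R ^ (2 + γ) * A := by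
    calc ∫⁻ u in S, ∫⁻ v in S', edist (f u) (f v) ^ p
        ≤ ∫⁻ u in S, ∫⁻ v in S', ENNReal.ofReal R ^ (2 + γ) *
            (edist (f u) (f v) ^ p / edist u v ^ (2 + γ)) := by
          refine setLIntegral_mono' hS fun u hu => setLIntegral_mono' hS' fun v hv => ?_
          refine kern_le (by linarith) (fun h => ?_) (by simp) (hd u hu v hv)
          rw [edist_eq_zero.1 h]; simp; linarith
      _ ≤ ∫⁻ u in J, ∫⁻ v in J, ENNReal.ofReal R ^ (2 + γ) *
            (edist (f u) (f v) ^ p / edist u v ^ (2 + γ)) := by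
          refine (lintegral_mono_set hSJ).trans (lintegral_mono fun u => lintegral_mono_set hSJ')
      _ = _ := by
          have : ∀ u, ∫⁻ v in J, ENNReal.ofReal R ^ (2 + γ) *
            (edist (f u) (f v) ^ p / edist u v ^ (2 + γ)) = ENNReal.ofReal R ^ (2 + γ) * ∫⁻ v in J, 
            (edist (f u) (f v) ^ p / edist u v ^ (2 + γ)) := fun u =>
              lintegral_const_mul _ (by fun_prop)
          simp only [this]
          rw [lintegral_const_mul _ hm2.lintegral_prod_right']
  calc _ ≤ (ENNReal.ofReal R)⁻¹ * ((ENNReal.ofReal (R/2))⁻¹ * (ENNReal.ofReal R ^ (2 + γ) * A)) := by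
        gcongr
    _ = _ := by
      rw [← mul_assoc, ← mul_assoc]
      congr 1
      rw [ENNReal.ofReal_rpow_of_pos hR, ENNReal.ofReal_rpow_of_pos hR,
        ← ENNReal.ofReal_inv_of_pos hR, ← ENNReal.ofReal_inv_of_pos (by positivity),
        ← ENNReal.ofReal_mul (by positivity), ← ENNReal.ofReal_mul (by positivity),
        ← ENNReal.ofReal_ofNat 2, ← ENNReal.ofReal_mul (by positivity)]
      congr 1
      rw [Real.rpow_add hR, Real.rpow_two]
      field_simp

theorem tele {D E : ℕ → ℝ≥0∞} {B q : ℝ≥0∞} (hD : ∀ k, D k ≤ D (k + 1) + E k)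
    (hE : ∀ k, E k ≤ B * q ^ k) (h0 : ∀ ε > 0, ∃ n, D n ≤ ε) : D 0 ≤ B * (1 - q)⁻¹ := by
  have h1 : ∀ n, D 0 ≤ D n + ∑ k ∈ Finset.range n, E k := by
    intro n
    induction n with
    | zero => simp
    | succ n ih =>
      rw [Finset.sum_range_succ]
      refine ih.trans ?_
      calc _ ≤ (D (n + 1) + E n) + ∑ k ∈ Finset.range n, E k := by gcongr; exact hD n
        _ = _ := by ring
  have h2 : ∀ n, D 0 ≤ D n + B * (1 - q)⁻¹ := by
    intro n
    refine (h1 n).trans ?_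
    gcongr
    calc _ ≤ ∑ k ∈ Finset.range n, B * q ^ k := Finset.sum_le_sum fun k _ => hE k
      _ ≤ ∑' k, B * q ^ k := ENNReal.sum_le_tsum _
      _ = _ := by rw [ENNReal.tsum_mul_left, ENNReal.tsum_geometric]
  refine _root_.le_of_forall_pos_le_add fun ε hε => ?_
  obtain ⟨n, hn⟩ := h0 ε hε
  refine (h2 n).trans ?_
  rw [add_comm]; gcongr

theorem chain {p γ : ℝ} (hp : 1 < p) (hγ : 0 < γ) (f : ℝ → ℝ) (hf : Measurable f)
    (x y : ℝ) (hxy : x < y) (hc : ContinuousOn f (Icc x y)) (z : ℝ) (hz : z ∈ Icc x y) :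
    ∫⁻ u, edist (f z) (f u) ∂(nrm (Icc x y)) ≤
      (2 * ENNReal.ofReal (y - x) ^ γ * ∫⁻ u in Icc x y, ∫⁻ v in Icc x y,
        edist (f u) (f v) ^ p / edist u v ^ (2 + γ)) ^ p⁻¹ *
      (1 - ENNReal.ofReal ((1 / 2) ^ (γ / p)))⁻¹ := by
  have hp0 : 0 < p := by linarith
  set A := ∫⁻ u in Icc x y, ∫⁻ v in Icc x y,
        edist (f u) (f v) ^ p / edist u v ^ (2 + γ)
  let J : ℕ → Set ℝ := fun k => Icc (z - (1/2)^k * (z - x)) (z + (1/2)^k * (y - z))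
  have hL : 0 < y - x := sub_pos.2 hxy
  have hz1 : 0 ≤ z - x := sub_nonneg.2 hz.1
  have hz2 : 0 ≤ y - z := sub_nonneg.2 hz.2
  have hk0 : ∀ k : ℕ, (0:ℝ) < (1/2)^k := fun k => by positivity
  have hk1 : ∀ k : ℕ, ((1:ℝ)/2)^k ≤ 1 := fun k => pow_le_one₀ (by norm_num) (by norm_num)
  have hJ0 : J 0 = Icc x y := by simp [J]
  have hvol : ∀ k, volume (J k) = ENNReal.ofReal ((1/2)^k * (y - x)) := by
    intro k; simp only [J, Real.volume_Icc]; congr 1; ring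
  have hpr : ∀ k, IsProbabilityMeasure (nrm (J k)) := fun k => by
    apply nrm_prob
    · rw [hvol]; have := mul_pos (hk0 k) hL; simpa using hxy
    · rw [hvol]; exact ENNReal.ofReal_ne_top
  have hsub : ∀ k, J (k+1) ⊆ J k := by
    intro k
    apply Icc_subset_Icc
    · rw [pow_succ]; nlinarith [hk0 k, mul_nonneg (hk0 k).le hz1]
    · rw [pow_succ]; nlinarith [hk0 k, mul_nonneg (hk0 k).le hz2]
  have hsub0 : ∀ k, J k ⊆ Icc x y := by
    intro k
    apply Icc_subset_Icc
    · nlinarith [hk1 k]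
    · nlinarith [hk1 k]
  rw [← hJ0]
  refine tele (D := fun k => ∫⁻ u, edist (f z) (f u) ∂(nrm (J k)))
    (E := fun k => ∫⁻ u, ∫⁻ v, edist (f u) (f v) ∂(nrm (J (k+1))) ∂(nrm (J k))) ?_ ?_ ?_
  · intro k
    have := hpr k
    have := hpr (k+1)
    exact step1 _ _ f hf _
  · intro k
    have := Ebound hp hγ f hf (J k) (J (k+1)) (Icc x y) measurableSet_Icc measurableSet_Icc
      (hsub0 k) (hsub0 _) ((1/2)^k * (y - x)) (mul_pos (hk0 k) hL) (hvol k)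
      (by rw [hvol]; congr 1; ring) (by
        intro u hu v hv
        have hv' := hsub k hv
        rw [edist_dist]
        apply ENNReal.ofReal_le_ofReal
        refine (Real.dist_le_of_mem_Icc hu hv').trans (le_of_eq ?_)
        ring)
    have h2 := ENNReal.rpow_le_rpow this (inv_nonneg.2 hp0.le)
    rw [ENNReal.rpow_rpow_inv hp0.ne'] at h2
    refine h2.trans (le_of_eq ?_)
    rw [ENNReal.ofReal_mul (hk0 k).le, ENNReal.mul_rpow_of_nonneg _ _ hγ.le]
    have : 2 * (ENNReal.ofReal ((1 / 2) ^ k) ^ γ * ENNReal.ofReal (y - x) ^ γ) * A =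
      (2 * ENNReal.ofReal (y - x) ^ γ * A) * ENNReal.ofReal ((1 / 2) ^ k) ^ γ := by ring
    rw [this, ENNReal.mul_rpow_of_nonneg _ _ (inv_nonneg.2 hp0.le)]
    congr 1
    rw [← ENNReal.rpow_mul, ENNReal.ofReal_rpow_of_pos (hk0 k), ← ENNReal.ofReal_pow (by positivity)]
    congr 1
    rw [← Real.rpow_natCast, ← Real.rpow_natCast, ← Real.rpow_mul (by norm_num), ← Real.rpow_mul (by norm_num)]
    congr 1
    ring
  · intro ε hε
    have hcz := hc z hz
    have : ∀ᶠ u in nhdsWithin z (Icc x y), edist (f u) (f z) < ε := 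
      hcz.eventually (Metric.eball_mem_nhds _ hε)
    rw [eventually_nhdsWithin_iff, Metric.eventually_nhds_iff] at this
    obtain ⟨δ, hδ, h⟩ := this
    obtain ⟨n, hn⟩ := exists_pow_lt_of_lt_one (div_pos hδ hL) (by norm_num : (1/2:ℝ) < 1)
    refine ⟨n, ?_⟩
    have := hpr n
    rw [lt_div_iff₀ hL] at hn
    calc ∫⁻ u, edist (f z) (f u) ∂(nrm (J n)) 
      _ = (volume (J n))⁻¹ * ∫⁻ u in J n, edist (f z) (f u) := lint_nrm _ _
      _ ≤ (volume (J n))⁻¹ * ∫⁻ u in J n, ε := by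
          gcongr 1
          refine setLIntegral_mono' measurableSet_Icc fun u hu => ?_
          rw [edist_comm]
          refine (h ?_ (hsub0 n hu)).le
          have hzJ : z ∈ J n := ⟨by nlinarith [hk0 n], by nlinarith [hk0 n]⟩
          refine (Real.dist_le_of_mem_Icc hu hzJ).trans_lt (lt_of_eq_of_lt ?_ hn)
          ring
      _ = ∫⁻ u, ε ∂(nrm (J n)) := (lint_nrm _ _).symm
      _ = ε := by simp

theorem morrey {p γ : ℝ} (hp : 1 < p) (hγ : 0 < γ) : ∃ K : ℝ≥0∞, K ≠ ∞ ∧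
    ∀ f : ℝ → ℝ, Measurable f → ∀ x y : ℝ, ContinuousOn f (uIcc x y) →
    oscE f (uIcc x y) ^ p ≤ K * (edist x y ^ γ * ∫⁻ u in uIcc x y, ∫⁻ v in uIcc x y,
        edist (f u) (f v) ^ p / edist u v ^ (2 + γ)) := by
  have hp0 : 0 < p := by linarith
  set Q : ℝ≥0∞ := (1 - ENNReal.ofReal ((1 / 2) ^ (γ / p)))⁻¹ with hQ
  have hQt : Q ≠ ∞ := by
    rw [hQ, ENNReal.inv_ne_top]
    refine (tsub_pos_of_lt ?_).ne'
    rw [ENNReal.ofReal_lt_one]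
    exact Real.rpow_lt_one (by norm_num) (by norm_num) (by positivity)
  refine ⟨(2 * 2 ^ p⁻¹ * Q) ^ p, ?_, ?_⟩
  · refine ENNReal.rpow_ne_top_of_nonneg hp0.le (ENNReal.mul_ne_top (ENNReal.mul_ne_top (by simp) ?_) hQt)
    exact ENNReal.rpow_ne_top_of_nonneg (by positivity) (by simp)
  intro f hf
  have main : ∀ x y : ℝ, x < y → ContinuousOn f (Icc x y) →
    oscE f (Icc x y) ^ p ≤ (2 * 2 ^ p⁻¹ * Q) ^ p * (edist x y ^ γ * ∫⁻ u in Icc x y, ∫⁻ v in Icc x y,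
        edist (f u) (f v) ^ p / edist u v ^ (2 + γ)) := by
    intro x y hxy hc
    set A := ∫⁻ u in Icc x y, ∫⁻ v in Icc x y, edist (f u) (f v) ^ p / edist u v ^ (2 + γ) with hA
    have hed : edist x y = ENNReal.ofReal (y - x) := by
      rw [edist_comm, edist_dist, Real.dist_eq, abs_of_pos (sub_pos.2 hxy)]
    have : IsProbabilityMeasure (nrm (Icc x y)) := nrm_prob (by simpa using hxy) (by simp)
    have h : oscE f (Icc x y) ≤ 2 * ((2 * edist x y ^ γ * A) ^ p⁻¹ * Q) := by
      refine iSup₂_le fun z hz => iSup₂_le fun t ht => ?_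
      have hz' := chain hp hγ f hf x y hxy hc z hz
      have ht' := chain hp hγ f hf x y hxy hc t ht
      rw [← hQ, ← hA, ← hed] at hz' ht'
      rw [two_mul]
      refine le_trans ?_ (add_le_add hz' ht')
      rw [← lintegral_add_left (by fun_prop)]
      calc edist (f z) (f t) = ∫⁻ v, edist (f z) (f t) ∂(nrm (Icc x y)) := by simp
        _ ≤ _ := lintegral_mono fun v => by
          simp only
          rw [edist_comm (f t)]; exact edist_triangle _ _ _
    refine (ENNReal.rpow_le_rpow h hp0.le).trans (le_of_eq ?_)
    rw [mul_assoc 2 _ A, ENNReal.mul_rpow_of_nonneg 2 _ (inv_nonneg.2 hp0.le)]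
    have : 2 * (2 ^ p⁻¹ * (edist x y ^ γ * A) ^ p⁻¹ * Q) = (2 * 2 ^ p⁻¹ * Q) * (edist x y ^ γ * A) ^ p⁻¹ := by
      ring
    rw [this, ENNReal.mul_rpow_of_nonneg _ _ hp0.le, ENNReal.rpow_inv_rpow hp0.ne']
  intro x y hc
  rcases lt_trichotomy x y with h | h | h
  · rw [uIcc_of_le h.le] at hc ⊢
    exact main x y h hc
  · subst h
    simp [oscE, hp0]
  · rw [uIcc_of_ge h.le] at hc ⊢
    rw [edist_comm]
    exact main y x h hc

theorem tail0 {c r : ℝ} (hc : 0 < c) (hr : 0 < r) :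
    ∫⁻ x in Ici r, ENNReal.ofReal (|x| ^ (-(1 + c))) = ENNReal.ofReal (r ^ (-c) / c) := by
  rw [setLIntegral_congr Ioi_ae_eq_Ici.symm]
  have h1 := integral_Ioi_rpow_of_lt (a := -(1 + c)) (by linarith) hr
  have h2 := integrableOn_Ioi_rpow_of_lt (a := -(1 + c)) (by linarith) hr
  have e : -(1 + c) + 1 = -c := by ring
  rw [e, neg_div_neg_eq] at h1
  rw [← h1, ofReal_integral_eq_lintegral_ofReal h2]
  · refine setLIntegral_congr_fun measurableSet_Ioi fun x hx => ?_
    rw [abs_of_pos (hr.trans hx)]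
  · refine (ae_restrict_iff' measurableSet_Ioi).2 (Filter.Eventually.of_forall fun x hx => ?_)
    exact Real.rpow_nonneg (hr.trans hx).le _

theorem tail1 {c r : ℝ} (hc : 0 < c) (hr : 0 < r) (m : ℝ) :
    ∫⁻ x, ({x : ℝ | r ≤ |x - m|}.indicator (fun x => ENNReal.ofReal (|x - m| ^ (-(1 + c))))) x
      ≤ 2 * ENNReal.ofReal (r ^ (-c) / c) := by
  have h := lintegral_sub_right_eq_self (μ := (volume : Measure ℝ))
    ({x : ℝ | r ≤ |x|}.indicator (fun x => ENNReal.ofReal (|x| ^ (-(1 + c))))) m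
  have e : (fun x : ℝ => ({x : ℝ | r ≤ |x|}.indicator
      (fun x => ENNReal.ofReal (|x| ^ (-(1 + c))))) (x - m)) =
      ({x : ℝ | r ≤ |x - m|}.indicator (fun x => ENNReal.ofReal (|x - m| ^ (-(1 + c))))) := by
    ext x; simp [indicator]
  rw [e] at h
  have hms : MeasurableSet {x : ℝ | r ≤ |x|} := measurableSet_le (by fun_prop) (by fun_prop)
  rw [h, lintegral_indicator hms]
  have hs : {x : ℝ | r ≤ |x|} = Ici r ∪ Iic (-r) := by
    ext x; simp only [mem_ofPred_eq, le_abs, mem_union, mem_Ici, mem_Iic]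
    constructor <;> rintro (h | h) <;> [left; right; left; right] <;> linarith
  rw [hs, two_mul]
  refine (lintegral_union_le _ _ _).trans ?_
  rw [tail0 hc hr]
  gcongr
  rw [← tail0 hc hr, ← lintegral_indicator measurableSet_Iic, ← lintegral_indicator measurableSet_Ici,
    ← lintegral_neg_eq_self]
  refine lintegral_mono fun x => ?_
  simp [indicator]

theorem geom1 {u v x y : ℝ} (hxy : x ≤ y) (hu : u ∈ Icc x y) (hv : v ∈ Icc x y) :
    |u - v| / 2 ≤ |x - (u + v) / 2| ∧ |u - v| / 2 ≤ |y - (u + v) / 2| ∧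
      |x - (u + v) / 2| ≤ |x - y| ∧ |y - (u + v) / 2| ≤ |x - y| := by
  obtain ⟨h1, h2⟩ := hu
  obtain ⟨h3, h4⟩ := hv
  rw [abs_of_nonpos (by linarith : x - y ≤ 0), abs_of_nonpos (by linarith : x - (u + v) / 2 ≤ 0),
    abs_of_nonneg (by linarith : 0 ≤ y - (u + v) / 2)]
  rcases abs_cases (u - v) with h | h <;> refine ⟨?_, ?_, ?_, ?_⟩ <;> linarith

theorem geom {u v x y : ℝ} (hu : u ∈ uIcc x y) (hv : v ∈ uIcc x y) :
    |u - v| / 2 ≤ |x - (u + v) / 2| ∧ |u - v| / 2 ≤ |y - (u + v) / 2| ∧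
      |x - (u + v) / 2| ≤ |x - y| ∧ |y - (u + v) / 2| ≤ |x - y| := by
  rcases le_total x y with h | h
  · rw [uIcc_of_le h] at hu hv
    exact geom1 h hu hv
  · rw [uIcc_of_ge h] at hu hv
    obtain ⟨a, b, c, d⟩ := geom1 h hu hv
    rw [abs_sub_comm x y]
    exact ⟨b, a, d, c⟩

theorem kernel_bound {γ : ℝ} (hγ : 0 < γ) : ∃ K : ℝ≥0∞, K ≠ ∞ ∧ ∀ u v : ℝ, u ≠ v →
    ∫⁻ P : ℝ × ℝ, ({P : ℝ × ℝ | u ∈ uIcc P.1 P.2 ∧ v ∈ uIcc P.1 P.2}.indicator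
      (fun P => edist P.1 P.2 ^ (-(2 + γ)))) P ≤ K * edist u v ^ (-γ) := by
  refine ⟨ENNReal.ofReal (16 / γ ^ 2 * 2 ^ γ), by simp, fun u v huv => ?_⟩
  set m := (u + v) / 2 with hm
  set r := |u - v| / 2 with hr'
  have hr : 0 < r := by have := abs_pos.2 (sub_ne_zero.2 huv); positivity
  set φ : ℝ → ℝ≥0∞ := {x : ℝ | r ≤ |x - m|}.indicator
    (fun x => ENNReal.ofReal (|x - m| ^ (-(1 + γ / 2)))) with hφ
  have hφm : Measurable φ := by
    refine Measurable.indicator (by fun_prop) (measurableSet_le (by fun_prop) (by fun_prop))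
  have hpt : ∀ P : ℝ × ℝ, ({P : ℝ × ℝ | u ∈ uIcc P.1 P.2 ∧ v ∈ uIcc P.1 P.2}.indicator
      (fun P => edist P.1 P.2 ^ (-(2 + γ)))) P ≤ φ P.1 * φ P.2 := by
    rintro ⟨x, y⟩
    refine indicator_le' (s := {P : ℝ × ℝ | u ∈ uIcc P.1 P.2 ∧ v ∈ uIcc P.1 P.2})
      (f := (fun P => edist P.1 P.2 ^ (-(2 + γ)))) (g := fun P => φ P.1 * φ P.2) ?_ ?_ (x, y)
    · rintro ⟨x, y⟩ ⟨hu, hv⟩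
      simp only at hu hv ⊢
      have hx : r ≤ |x - m| ∧ r ≤ |y - m| ∧ |x - m| ≤ |x - y| ∧ |y - m| ≤ |x - y| := by
        exact geom hu hv
      obtain ⟨h1, h2, h3, h4⟩ := hx
      rw [hφ, indicator_of_mem (by exact h1), indicator_of_mem (by exact h2)]
      have hxm : 0 < |x - m| := hr.trans_le h1
      have hym : 0 < |y - m| := hr.trans_le h2
      have hxy : 0 < |x - y| := hxm.trans_le h3
      rw [edist_dist, Real.dist_eq, ENNReal.ofReal_rpow_of_pos hxy,
        ← ENNReal.ofReal_mul (by positivity)]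
      apply ENNReal.ofReal_le_ofReal
      have e : -(2 + γ) = -(1 + γ / 2) + -(1 + γ / 2) := by ring
      rw [e, Real.rpow_add hxy]
      have hn : -(1 + γ / 2) ≤ 0 := by linarith
      exact mul_le_mul (Real.rpow_le_rpow_of_nonpos hxm h3 hn) (Real.rpow_le_rpow_of_nonpos hym h4 hn)
        (by positivity) (by positivity)
    · intro _ _; exact zero_le
  refine (lintegral_mono hpt).trans ?_
  rw [Measure.volume_eq_prod, lintegral_prod_mul hφm.aemeasurable hφm.aemeasurable]
  have ht := tail1 (c := γ / 2) (by positivity) hr m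
  refine (mul_le_mul' ht ht).trans (le_of_eq ?_)
  have hd : 0 < |u - v| := abs_pos.2 (sub_ne_zero.2 huv)
  rw [edist_dist, Real.dist_eq, ENNReal.ofReal_rpow_of_pos hd, ← ENNReal.ofReal_mul (by positivity),
    ← ENNReal.ofReal_ofNat 2, ← ENNReal.ofReal_mul (by positivity), ← ENNReal.ofReal_mul (by positivity)]
  congr 1
  have e1 : |u - v| = 2 * r := by rw [hr']; ring
  have e2 : r ^ (-γ) = r ^ (-(γ/2)) * r ^ (-(γ/2)) := by rw [← Real.rpow_add hr]; congr 1; ring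
  rw [e1, Real.mul_rpow (by norm_num) hr.le, e2, Real.rpow_neg (by norm_num : (0:ℝ) ≤ 2) γ]
  have := Real.rpow_pos_of_pos (by norm_num : (0:ℝ) < 2) γ
  field_simp
  norm_num

theorem main_meas {p γ : ℝ} (hp : 1 < p) (hγ : 0 < γ) : ∃ K : ℝ≥0∞, K ≠ ∞ ∧
    ∀ I : Set ℝ, IsOpen I → I.OrdConnected →
      ∀ f : ℝ → ℝ, ContinuousOn f I → Measurable f →
        (∫⁻ x in I, ∫⁻ y in I,
            oscE f (uIcc x y ∩ I) ^ p / edist x y ^ (2 + 2 * γ)) ≤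
          K * ∫⁻ x in I, ∫⁻ y in I,
              edist (f x) (f y) ^ p / edist x y ^ (2 + 2 * γ) := by
  obtain ⟨K1, hK1, H1⟩ := morrey hp hγ
  obtain ⟨K2, hK2, H2⟩ := kernel_bound hγ
  have hp0 : 0 < p := by linarith
  refine ⟨K1 * K2, ENNReal.mul_ne_top hK1 hK2, fun I hI hIc f hfc hf => ?_⟩
  set G : ℝ × ℝ → ℝ≥0∞ := (I ×ˢ I).indicator
    (fun q => edist (f q.1) (f q.2) ^ p / edist q.1 q.2 ^ (2 + γ)) with hG
  have hGm : Measurable G :=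
    Measurable.indicator (by fun_prop) (hI.measurableSet.prod hI.measurableSet)
  set T : Set ((ℝ × ℝ) × (ℝ × ℝ)) :=
    {z | z.2.1 ∈ uIcc z.1.1 z.1.2 ∧ z.2.2 ∈ uIcc z.1.1 z.1.2} with hT
  have hTm : MeasurableSet T := by
    apply IsClosed.measurableSet
    simp only [hT, uIcc, mem_Icc, ofPred_and]
    exact ((isClosed_le (by fun_prop) (by fun_prop)).inter (isClosed_le (by fun_prop) (by fun_prop))).inter
      ((isClosed_le (by fun_prop) (by fun_prop)).inter (isClosed_le (by fun_prop) (by fun_prop)))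
  set F : (ℝ × ℝ) × (ℝ × ℝ) → ℝ≥0∞ :=
    T.indicator (fun z => edist z.1.1 z.1.2 ^ (-(2 + γ)) * G z.2) with hF
  have hFm : Measurable F := Measurable.indicator (by fun_prop) hTm
  have hpt : ∀ x ∈ I, ∀ y ∈ I, oscE f (uIcc x y ∩ I) ^ p / edist x y ^ (2 + 2 * γ) ≤
      K1 * ∫⁻ q, F ((x, y), q) := by
    intro x hx y hy
    have hsub : uIcc x y ⊆ I := hIc.uIcc_subset hx hy
    rw [inter_eq_left.2 hsub]
    by_cases hxy : x = y
    · subst hxy; simp [oscE, hp0]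
    have he0 : edist x y ≠ 0 := by simpa using hxy
    have het : edist x y ≠ ∞ := edist_ne_top _ _
    have hA : ∫⁻ q, F ((x, y), q) = edist x y ^ (-(2 + γ)) * 
        ∫⁻ u in uIcc x y, ∫⁻ v in uIcc x y, edist (f u) (f v) ^ p / edist u v ^ (2 + γ) := by
      have hm2 : Measurable (fun q : ℝ × ℝ => edist (f q.1) (f q.2) ^ p / edist q.1 q.2 ^ (2 + γ)) := by
        fun_prop
      have : ∀ q, F ((x, y), q) = edist x y ^ (-(2 + γ)) * (uIcc x y ×ˢ uIcc x y).indicator 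
          (fun q => edist (f q.1) (f q.2) ^ p / edist q.1 q.2 ^ (2 + γ)) q := by
        rintro ⟨u, v⟩
        by_cases huv : u ∈ uIcc x y ∧ v ∈ uIcc x y
        · rw [hF, indicator_of_mem (by exact huv), indicator_of_mem (by exact huv), hG,
            indicator_of_mem (by exact ⟨hsub huv.1, hsub huv.2⟩)]
        · rw [hF, indicator_of_notMem (by exact huv), indicator_of_notMem (by exact huv), mul_zero]
      have hms : MeasurableSet (uIcc x y ×ˢ uIcc x y) := measurableSet_uIcc.prod measurableSet_uIcc
      simp only [this]
      rw [lintegral_const_mul _ (hm2.indicator hms), lintegral_indicator hms,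
        Measure.volume_eq_prod, ← Measure.prod_restrict, lintegral_prod _ hm2.aemeasurable]
    rw [hA, ENNReal.div_le_iff (by simp [he0])
      (ENNReal.rpow_ne_top_of_nonneg (by linarith) het)]
    refine (H1 f hf x y (hfc.mono hsub)).trans (le_of_eq ?_)
    have e : γ = -(2 + γ) + (2 + 2 * γ) := by ring
    conv_lhs => rw [e, ENNReal.rpow_add _ _ he0 het, ← e]
    ring
  calc _ ≤ ∫⁻ x in I, ∫⁻ y in I, K1 * ∫⁻ q, F ((x, y), q) :=
        setLIntegral_mono' hI.measurableSet fun x hx => setLIntegral_mono' hI.measurableSet fun y hy =>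
          hpt x hx y hy
    _ ≤ ∫⁻ x, ∫⁻ y, K1 * ∫⁻ q, F ((x, y), q) :=
        (setLIntegral_le_lintegral _ _).trans (lintegral_mono fun x => setLIntegral_le_lintegral _ _)
    _ = K1 * ∫⁻ P : ℝ × ℝ, ∫⁻ q, F (P, q) := by
        have hm3 : Measurable fun P : ℝ × ℝ => ∫⁻ q, F (P, q) := hFm.lintegral_prod_right'
        rw [← lintegral_const_mul _ hm3]
        exact (lintegral_prod _ (hm3.const_mul _).aemeasurable).symm
    _ = K1 * ∫⁻ q : ℝ × ℝ, ∫⁻ P, F (P, q) := by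
        rw [lintegral_lintegral_swap (f := fun P q => F (P, q)) hFm.aemeasurable]
    _ ≤ K1 * ∫⁻ q : ℝ × ℝ, K2 * (I ×ˢ I).indicator
          (fun q => edist (f q.1) (f q.2) ^ p / edist q.1 q.2 ^ (2 + 2 * γ)) q := by
        gcongr with q
        obtain ⟨u, v⟩ := q
        by_cases huv : u = v
        · subst huv
          have : ∀ P, F (P, (u, u)) = 0 := by
            intro P
            simp [hF, hG, indicator, hp0]
          simp [this]
        have he0 : edist u v ≠ 0 := by simpa using huv
        have het : edist u v ≠ ∞ := edist_ne_top _ _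
        have : ∀ P, F (P, (u, v)) = ({P : ℝ × ℝ | u ∈ uIcc P.1 P.2 ∧ v ∈ uIcc P.1 P.2}.indicator
            (fun P => edist P.1 P.2 ^ (-(2 + γ)))) P * G (u, v) := by
          intro P
          by_cases h : u ∈ uIcc P.1 P.2 ∧ v ∈ uIcc P.1 P.2
          · rw [hF, indicator_of_mem (by exact h), indicator_of_mem (by exact h)]
          · rw [hF, indicator_of_notMem (by exact h), indicator_of_notMem (by exact h), zero_mul]
        simp only [this]
        have hms : MeasurableSet {P : ℝ × ℝ | u ∈ uIcc P.1 P.2 ∧ v ∈ uIcc P.1 P.2} := by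
          have h0 : Measurable (fun P : ℝ × ℝ => (P, ((u, v) : ℝ × ℝ))) := by fun_prop
          exact h0 hTm
        rw [lintegral_mul_const _ (Measurable.indicator (by fun_prop) hms)]
        refine (mul_le_mul_left (H2 u v huv) _).trans (le_of_eq ?_)
        rw [mul_assoc]
        congr 1
        simp only [hG, indicator]
        split_ifs
        · have e : 2 + 2 * γ = γ + (2 + γ) := by ring
          rw [e, div_eq_mul_inv, div_eq_mul_inv, ← ENNReal.rpow_neg, ← ENNReal.rpow_neg, neg_add γ,
            ENNReal.rpow_add _ _ he0 het]
          ring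
        · simp
    _ = _ := by
        have hm2 : Measurable (fun q : ℝ × ℝ => edist (f q.1) (f q.2) ^ p / edist q.1 q.2 ^ (2 + 2 * γ)) := by
          fun_prop
        have hms := hI.measurableSet.prod hI.measurableSet
        rw [lintegral_const_mul _ (hm2.indicator hms), lintegral_indicator hms,
        Measure.volume_eq_prod, ← Measure.prod_restrict, lintegral_prod _ hm2.aemeasurable, mul_assoc]

/-- **Reverse oscillation inequality.** For `0 < s < 1`, `1 < p` with `sp > 1`, there is a
constant `C = C(s,p)` such that for every open interval `I ⊆ ℝ` (an open order-connected set)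
and every continuous `f : I → ℝ`,
`∫_I ∫_I (osc_{[x,y]} f)^p / |y-x|^{1+sp} ≤ C ∫_I ∫_I |f(y)-f(x)|^p / |y-x|^{1+sp}`. -/
theorem reverse_oscillation_inequality (s p : ℝ) (hs0 : 0 < s) (hs1 : s < 1)
    (hp1 : 1 < p) (hsp : 1 < s * p) :
    ∃ C : ℝ, 0 < C ∧ ∀ I : Set ℝ, IsOpen I → I.OrdConnected →
      ∀ f : ℝ → ℝ, ContinuousOn f I →
        (∫⁻ x in I, ∫⁻ y in I,
            oscE f (uIcc x y ∩ I) ^ p / edist x y ^ (1 + s * p)) ≤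
          ENNReal.ofReal C *
            ∫⁻ x in I, ∫⁻ y in I,
              edist (f x) (f y) ^ p / edist x y ^ (1 + s * p) := by
  have hγ : 0 < (s * p - 1) / 2 := by linarith
  obtain ⟨K, hK, H⟩ := main_meas hp1 hγ
  have e : 2 + 2 * ((s * p - 1) / 2) = 1 + s * p := by ring
  rw [e] at H
  refine ⟨K.toReal + 1, by positivity, fun I hI hIc f hf => ?_⟩
  have hle : K ≤ ENNReal.ofReal (K.toReal + 1) := by
    rw [← ENNReal.ofReal_toReal hK]
    apply ENNReal.ofReal_le_ofReal
    rw [ENNReal.ofReal_toReal hK]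
    linarith
  set g : ℝ → ℝ := I.indicator f with hg
  have hgf : ∀ x ∈ I, g x = f x := fun x hx => indicator_of_mem hx f
  have hgc : ContinuousOn g I := hf.congr hgf
  have hgm : Measurable g := by
    classical
    have : g = I.piecewise f (fun _ => 0) := by ext x; simp [hg, indicator, piecewise]
    rw [this]
    exact hf.measurable_piecewise continuousOn_const hI.measurableSet
  have h := H I hI hIc g hgc hgm
  have hosc : ∀ x y, oscE g (uIcc x y ∩ I) = oscE f (uIcc x y ∩ I) := by
    intro x y
    unfold oscE
    refine iSup_congr fun z => iSup_congr fun hz => iSup_congr fun t => iSup_congr fun ht => ?_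
    rw [hgf z hz.2, hgf t ht.2]
  simp only [hosc] at h
  refine h.trans ?_
  refine mul_le_mul' hle (le_of_eq ?_)
  refine setLIntegral_congr_fun hI.measurableSet fun x hx => ?_
  refine setLIntegral_congr_fun hI.measurableSet fun y hy => ?_
  simp only [hgf x hx, hgf y hy]
end

section
/- Let 1<p<∞ and 1/p<σ<1. There is a constant C depending only on σ and p such that for every metric space (X,d), every interval (a,b) ⊆ ℝ, every continuous map u : (a,b) → X and all a<x<y<b, one has osc_{[x,y]} u ≤ C (y-x)^{σ-1/p} ( ∫_x^y ∫_x^y d(u(z),u(t))^p / |z-t|^{1+σp} dz dt )^{1/p}. -/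
open MeasureTheory Set ENNReal

namespace OscMorrey

lemma jensen {α : Type*} [MeasurableSpace α] (μ : Measure α) [IsProbabilityMeasure μ]
    (p : ℝ) (hp : 1 < p) (f : α → ℝ≥0∞) (hf : AEMeasurable f μ) :
    (∫⁻ a, f a ∂μ) ^ p ≤ ∫⁻ a, f a ^ p ∂μ := by
  have hpq := Real.HolderConjugate.conjExponent hp
  have h := ENNReal.lintegral_mul_le_Lp_mul_Lq μ hpq hf (aemeasurable_const (b := (1 : ℝ≥0∞)))
  have h1 : (∫⁻ a, f a ∂μ) ≤ (∫⁻ a, f a ^ p ∂μ) ^ (1 / p) := by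
    simpa using h
  calc (∫⁻ a, f a ∂μ) ^ p ≤ ((∫⁻ a, f a ^ p ∂μ) ^ (1 / p)) ^ p :=
        ENNReal.rpow_le_rpow h1 (by linarith)
    _ = _ := by
        rw [← ENNReal.rpow_mul, one_div_mul_cancel (by linarith), ENNReal.rpow_one]

/-- shrinking intervals around `w` -/
def I (x y w r : ℝ) : Set ℝ := Ioo (w - (w - x) * r) (w + (y - w) * r)

lemma vol_I (x y w r : ℝ) : volume (I x y w r) = ENNReal.ofReal ((y - x) * r) := by
  rw [I, Real.volume_Ioo]; congr 1; ring

lemma I_sub (x y w r s : ℝ) (hx : x ≤ w) (hy : w ≤ y) (hrs : r ≤ s) :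
    I x y w r ⊆ I x y w s := by
  apply Ioo_subset_Ioo <;> nlinarith

lemma I_one (x y w : ℝ) : I x y w 1 = Ioo x y := by
  rw [I]; congr 1 <;> ring

/-- normalized measure -/
noncomputable def m (x y w r : ℝ) : Measure ℝ :=
  (volume (I x y w r))⁻¹ • volume.restrict (I x y w r)

lemma m_prob (x y w r : ℝ) (hxy : x < y) (hr : 0 < r) : IsProbabilityMeasure (m x y w r) := by
  constructor
  have hpos : 0 < (y - x) * r := mul_pos (by linarith) hr
  simp only [m, Measure.smul_apply, Measure.restrict_apply MeasurableSet.univ, univ_inter,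
    smul_eq_mul]
  rw [vol_I]
  exact ENNReal.inv_mul_cancel (by simpa using hpos) ENNReal.ofReal_ne_top

lemma kernel_bound {X : Type*} [MetricSpace X] (v : ℝ → X) (p e l : ℝ) (hp : 0 < p) (he : 0 < e)
    (z t : ℝ) (h : dist z t ≤ l) :
    edist (v z) (v t) ^ p ≤
      ENNReal.ofReal l ^ e * (edist (v z) (v t) ^ p / edist z t ^ e) := by
  rcases eq_or_ne z t with rfl | hne
  · simp [hp]
  have h0 : edist z t ^ e ≠ 0 := by
    simp [ENNReal.rpow_eq_zero_iff, hne, edist_ne_top]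
  have h1 : edist z t ^ e ≠ ⊤ := ENNReal.rpow_ne_top_of_nonneg he.le (edist_ne_top _ _)
  calc edist (v z) (v t) ^ p = edist z t ^ e * (edist (v z) (v t) ^ p / edist z t ^ e) :=
        (ENNReal.mul_div_cancel h0 h1).symm
    _ ≤ _ := by
        gcongr
        rw [edist_dist]
        exact ENNReal.ofReal_le_ofReal h

lemma D_bound {X : Type*} [MetricSpace X] (v : ℝ → X) (hv : Continuous v) (p σ : ℝ)
    (hp : 1 < p) (hσ : 1 / p < σ) (x y w r : ℝ) (hx : x ≤ w) (hy : w ≤ y) (hxy : x < y)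
    (hr : 0 < r) (hr1 : r ≤ 1) :
    (∫⁻ z, ∫⁻ t, edist (v z) (v t) ∂(m x y w (r / 2)) ∂(m x y w r)) ≤
      ENNReal.ofReal (2 ^ (1 / p) * ((y - x) * r) ^ (σ - 1 / p)) *
        (∫⁻ z in Ioo x y, ∫⁻ t in Ioo x y,
          edist (v z) (v t) ^ p / edist z t ^ (1 + σ * p)) ^ (1 / p) := by
  have hp0 : 0 < p := by linarith
  have hσ0 : 0 < σ := lt_trans (by positivity) hσ
  set G := ∫⁻ z in Ioo x y, ∫⁻ t in Ioo x y,
          edist (v z) (v t) ^ p / edist z t ^ (1 + σ * p) with hG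
  set l := (y - x) * r with hl
  have hl0 : 0 < l := mul_pos (by linarith) hr
  have he : 0 < 1 + σ * p := by positivity
  have := m_prob x y w r hxy hr
  have := m_prob x y w (r / 2) hxy (by linarith)
  have hd : Measurable (fun q : ℝ × ℝ => edist (v q.1) (v q.2)) := by
    apply Continuous.measurable
    fun_prop
  have hd1 : ∀ z, Measurable (fun t : ℝ => edist (v z) (v t)) := fun z =>
    hd.comp measurable_prodMk_left
  have key : (∫⁻ z, ∫⁻ t, edist (v z) (v t) ∂(m x y w (r / 2)) ∂(m x y w r)) ^ p ≤
      ENNReal.ofReal (2 * l ^ (σ * p - 1)) * G := by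
    calc _ ≤ ∫⁻ z, (∫⁻ t, edist (v z) (v t) ∂(m x y w (r / 2))) ^ p ∂(m x y w r) :=
          jensen _ p hp _ hd.lintegral_prod_right'.aemeasurable
      _ ≤ ∫⁻ z, ∫⁻ t, edist (v z) (v t) ^ p ∂(m x y w (r / 2)) ∂(m x y w r) :=
          lintegral_mono fun z => jensen _ p hp _ (hd1 z).aemeasurable
      _ = (ENNReal.ofReal l)⁻¹ * ((ENNReal.ofReal (l / 2))⁻¹ *
            ∫⁻ z in I x y w r, ∫⁻ t in I x y w (r / 2), edist (v z) (v t) ^ p) := by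
          simp only [m, lintegral_smul_measure, vol_I, smul_eq_mul]
          rw [lintegral_const_mul' _ _ (by
            simp only [ne_eq, ENNReal.inv_eq_top, ENNReal.ofReal_eq_zero, not_le]
            have : 0 < l / 2 := by linarith
            rwa [← mul_div_assoc]), ← mul_div_assoc]
      _ ≤ (ENNReal.ofReal l)⁻¹ * ((ENNReal.ofReal (l / 2))⁻¹ *
            ∫⁻ z in I x y w r, ∫⁻ t in I x y w r, ENNReal.ofReal l ^ (1 + σ * p) *
              (edist (v z) (v t) ^ p / edist z t ^ (1 + σ * p))) := by
          gcongr _ * (_ * ?_)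
          apply setLIntegral_mono' measurableSet_Ioo
          intro z hz
          refine (lintegral_mono_set (I_sub x y w (r / 2) r hx hy (by linarith))).trans ?_
          apply setLIntegral_mono' measurableSet_Ioo
          intro t ht
          apply kernel_bound v p _ l hp0 he
          rw [Real.dist_eq, abs_le]
          obtain ⟨h1, h2⟩ := hz
          obtain ⟨h3, h4⟩ := ht
          constructor <;> nlinarith
      _ = (ENNReal.ofReal l)⁻¹ * ((ENNReal.ofReal (l / 2))⁻¹ * (ENNReal.ofReal l ^ (1 + σ * p) *
            ∫⁻ z in I x y w r, ∫⁻ t in I x y w r,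
              (edist (v z) (v t) ^ p / edist z t ^ (1 + σ * p)))) := by
          have hne : ENNReal.ofReal l ^ (1 + σ * p) ≠ ⊤ :=
            ENNReal.rpow_ne_top_of_nonneg he.le ENNReal.ofReal_ne_top
          simp_rw [lintegral_const_mul' _ _ hne]
      _ ≤ (ENNReal.ofReal l)⁻¹ * ((ENNReal.ofReal (l / 2))⁻¹ *
            (ENNReal.ofReal l ^ (1 + σ * p) * G)) := by
          have hs : I x y w r ⊆ Ioo x y := I_one x y w ▸ I_sub x y w r 1 hx hy hr1
          gcongr _ * (_ * (_ * ?_))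
          refine (lintegral_mono_set hs).trans ?_
          exact lintegral_mono fun z => lintegral_mono_set hs
      _ = ENNReal.ofReal (2 * l ^ (σ * p - 1)) * G := by
          rw [← ENNReal.ofReal_inv_of_pos hl0, ← ENNReal.ofReal_inv_of_pos (half_pos hl0),
            ENNReal.ofReal_rpow_of_pos hl0, ← mul_assoc, ← mul_assoc,
            ← ENNReal.ofReal_mul (by positivity), ← ENNReal.ofReal_mul (by positivity)]
          congr 2
          rw [show 1 + σ * p = (σ * p - 1) + 1 + 1 by ring, Real.rpow_add_one hl0.ne',
            Real.rpow_add_one hl0.ne']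
          field_simp
  calc _ = ((∫⁻ z, ∫⁻ t, edist (v z) (v t) ∂(m x y w (r / 2)) ∂(m x y w r)) ^ p) ^ (1 / p) := by
        rw [← ENNReal.rpow_mul, mul_one_div_cancel hp0.ne', ENNReal.rpow_one]
    _ ≤ (ENNReal.ofReal (2 * l ^ (σ * p - 1)) * G) ^ (1 / p) :=
        ENNReal.rpow_le_rpow key (by positivity)
    _ = _ := by
        rw [ENNReal.mul_rpow_of_nonneg _ _ (by positivity),
          ENNReal.ofReal_rpow_of_nonneg (by positivity) (by positivity),
          Real.mul_rpow (by positivity) (by positivity), ← Real.rpow_mul hl0.le]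
        congr 4
        field_simp

lemma step {X : Type*} [MetricSpace X] (v : ℝ → X) (hv : Continuous v)
    (μ ν : Measure ℝ) [IsProbabilityMeasure μ] [IsProbabilityMeasure ν] (c : X) :
    (∫⁻ z, edist c (v z) ∂μ) ≤ (∫⁻ t, edist c (v t) ∂ν) + ∫⁻ z, ∫⁻ t, edist (v z) (v t) ∂ν ∂μ := by
  have hm : Measurable (fun t : ℝ => edist c (v t)) := by
    apply Continuous.measurable
    fun_prop
  calc (∫⁻ z, edist c (v z) ∂μ) = ∫⁻ z, ∫⁻ _t, edist c (v z) ∂ν ∂μ := by simp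
    _ ≤ ∫⁻ z, ∫⁻ t, (edist c (v t) + edist (v z) (v t)) ∂ν ∂μ := by
        refine lintegral_mono fun z => lintegral_mono fun t => ?_
        rw [edist_comm (v z)]
        exact edist_triangle _ _ _
    _ = _ := by
        simp_rw [lintegral_add_left hm]
        rw [lintegral_add_left measurable_const]
        simp

lemma mean_bound {X : Type*} [MetricSpace X] (v : ℝ → X) (hv : Continuous v) (p σ : ℝ)
    (hp : 1 < p) (hσ : 1 / p < σ) (x y w : ℝ) (hx : x ≤ w) (hy : w ≤ y) (hxy : x < y) :
    (∫⁻ z, edist (v w) (v z) ∂(m x y w 1)) ≤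
      ENNReal.ofReal (2 ^ (1 / p) * (1 - (1 / 2 : ℝ) ^ (σ - 1 / p))⁻¹ * (y - x) ^ (σ - 1 / p)) *
        (∫⁻ z in Ioo x y, ∫⁻ t in Ioo x y,
          edist (v z) (v t) ^ p / edist z t ^ (1 + σ * p)) ^ (1 / p) := by
  set G := ∫⁻ z in Ioo x y, ∫⁻ t in Ioo x y,
          edist (v z) (v t) ^ p / edist z t ^ (1 + σ * p) with hG
  set β := σ - 1 / p with hβ
  have hβ0 : 0 < β := by linarith
  set ρ := (1 / 2 : ℝ) ^ β with hρ
  have hρ0 : 0 < ρ := by positivity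
  have hρ1 : ρ < 1 := Real.rpow_lt_one (by norm_num) (by norm_num) hβ0
  have hL : 0 < y - x := by linarith
  have ind : ∀ n : ℕ, (∫⁻ z, edist (v w) (v z) ∂(m x y w 1)) ≤
      (∫⁻ z, edist (v w) (v z) ∂(m x y w ((1 / 2) ^ n))) +
      ENNReal.ofReal (2 ^ (1 / p) * (∑ i ∈ Finset.range n, ρ ^ i) * (y - x) ^ β) * G ^ (1 / p) := by
    intro n
    induction n with
    | zero => simp
    | succ n ih =>
      refine ih.trans ?_
      have hr : (0 : ℝ) < (1 / 2) ^ n := by positivity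
      have hr1 : (1 / 2 : ℝ) ^ n ≤ 1 := pow_le_one₀ (by norm_num) (by norm_num)
      have hD := D_bound v hv p σ hp hσ x y w ((1 / 2) ^ n) hx hy hxy hr hr1
      rw [← hG, ← hβ] at hD
      have := m_prob x y w ((1 / 2) ^ n) hxy hr
      have := m_prob x y w ((1 / 2) ^ n / 2) hxy (by linarith)
      have hS := (step v hv (m x y w ((1 / 2) ^ n)) (m x y w ((1 / 2) ^ n / 2)) (v w)).trans
        (add_le_add_right hD _)
      have e1 : (1 / 2 : ℝ) ^ (n + 1) = (1 / 2) ^ n / 2 := by ring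
      have e2 : ((1 / 2 : ℝ) ^ n) ^ β = ρ ^ n := by
        rw [hρ, ← Real.rpow_natCast, ← Real.rpow_natCast, ← Real.rpow_mul (by norm_num),
          ← Real.rpow_mul (by norm_num), mul_comm]
      rw [Real.mul_rpow hL.le hr.le, e2] at hS
      refine (add_le_add_left hS _).trans ?_
      rw [e1, add_assoc, ← add_mul, ← ENNReal.ofReal_add (by positivity) (by positivity),
        Finset.sum_range_succ]
      apply le_of_eq
      congr 3
      ring
  refine ENNReal.le_of_forall_pos_le_add fun ε hε _ => ?_
  obtain ⟨δ, hδ, hc⟩ := Metric.continuousAt_iff.1 hv.continuousAt (ε : ℝ) hε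
  obtain ⟨n, hn⟩ := exists_pow_lt_of_lt_one (div_pos hδ hL) (show (1 / 2 : ℝ) < 1 by norm_num)
  have hr : (0 : ℝ) < (1 / 2) ^ n := by positivity
  rw [lt_div_iff₀ hL] at hn
  have := m_prob x y w ((1 / 2) ^ n) hxy hr
  have hsmall : (∫⁻ z, edist (v w) (v z) ∂(m x y w ((1 / 2) ^ n))) ≤ ε := by
    calc _ ≤ ∫⁻ _z, (ε : ℝ≥0∞) ∂(m x y w ((1 / 2) ^ n)) := by
          apply lintegral_mono_ae
          apply Measure.ae_smul_measure
          filter_upwards [ae_restrict_mem measurableSet_Ioo] with z hz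
          have : dist z w < δ := by
            rw [Real.dist_eq, abs_lt]
            obtain ⟨h1, h2⟩ := hz
            constructor <;> nlinarith
          have h := hc this
          rw [edist_comm, edist_nndist]
          exact_mod_cast h.le
      _ = ε := by rw [lintegral_const, measure_univ, mul_one]
  refine (ind n).trans ?_
  rw [add_comm]
  refine add_le_add ?_ hsmall
  gcongr
  rw [← tsum_geometric_of_lt_one hρ0.le hρ1]
  exact (summable_geometric_of_lt_one hρ0.le hρ1).sum_le_tsum _ (fun i _ => by positivity)

end OscMorrey


open MeasureTheory Set ENNReal

/-- **Morrey-type oscillation estimate for metric-space valued maps.**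
For `1 < p < ∞` and `1/p < σ < 1`, there is a constant `C = C(σ,p)` such that for every
metric space `X`, every interval `(a,b) ⊆ ℝ`, every continuous `u : (a,b) → X` and all
`a < x < y < b`,
`osc_{[x,y]} u ≤ C (y-x)^{σ-1/p} (∫_x^y ∫_x^y d(u(z),u(t))^p/|z-t|^{1+σp} dz dt)^{1/p}`. -/
theorem oscillation_morrey_estimate (σ p : ℝ) (hp1 : 1 < p) (hσ1 : 1 / p < σ)
    (hσ2 : σ < 1) :
    ∃ C : ℝ, 0 < C ∧ ∀ (X : Type*) [MetricSpace X] (a b : ℝ) (u : ℝ → X),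
      ContinuousOn u (Ioo a b) → ∀ x y : ℝ, a < x → x < y → y < b →
        (⨆ z ∈ Icc x y, ⨆ t ∈ Icc x y, edist (u z) (u t)) ≤
          ENNReal.ofReal (C * (y - x) ^ (σ - 1 / p)) *
            (∫⁻ z in Ioo x y, ∫⁻ t in Ioo x y,
                edist (u z) (u t) ^ p / edist z t ^ (1 + σ * p)) ^ (1 / p) := by
  have hρ1 : (1 / 2 : ℝ) ^ (σ - 1 / p) < 1 :=
    Real.rpow_lt_one (by norm_num) (by norm_num) (by linarith)
  have hK : 0 < (2 : ℝ) ^ (1 / p) * (1 - (1 / 2 : ℝ) ^ (σ - 1 / p))⁻¹ :=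
    mul_pos (by positivity) (inv_pos.2 (by linarith))
  refine ⟨2 * ((2 : ℝ) ^ (1 / p) * (1 - (1 / 2 : ℝ) ^ (σ - 1 / p))⁻¹), by linarith, ?_⟩
  intro X _ a b u hu x y hax hxy hyb
  set v : ℝ → X := fun s => u (projIcc x y hxy.le s) with hvdef
  have hsub : Icc x y ⊆ Ioo a b := fun s hs => ⟨by linarith [hs.1], by linarith [hs.2]⟩
  have hv : Continuous v :=
    (hu.mono hsub).comp_continuous (continuous_subtype_val.comp continuous_projIcc)
      (fun s => (projIcc x y hxy.le s).2)
  have huv : ∀ s ∈ Icc x y, u s = v s := by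
    intro s hs
    simp only [hvdef, projIcc_of_mem hxy.le hs]
  have hG : (∫⁻ z in Ioo x y, ∫⁻ t in Ioo x y,
        edist (u z) (u t) ^ p / edist z t ^ (1 + σ * p)) =
      ∫⁻ z in Ioo x y, ∫⁻ t in Ioo x y, edist (v z) (v t) ^ p / edist z t ^ (1 + σ * p) := by
    apply setLIntegral_congr_fun measurableSet_Ioo
    intro z hz
    apply setLIntegral_congr_fun measurableSet_Ioo
    intro t ht
    simp only [huv z (Ioo_subset_Icc_self hz), huv t (Ioo_subset_Icc_self ht)]
  rw [hG]
  refine iSup₂_le fun z hz => iSup₂_le fun t ht => ?_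
  rw [huv z hz, huv t ht]
  have bz := OscMorrey.mean_bound v hv p σ hp1 hσ1 x y z hz.1 hz.2 hxy
  have bt := OscMorrey.mean_bound v hv p σ hp1 hσ1 x y t ht.1 ht.2 hxy
  have hmm : OscMorrey.m x y t 1 = OscMorrey.m x y z 1 := by
    simp only [OscMorrey.m, OscMorrey.I_one]
  rw [hmm] at bt
  have := OscMorrey.m_prob x y z 1 hxy one_pos
  have hm : Measurable (fun s : ℝ => edist (v z) (v s)) := by
    apply Continuous.measurable
    fun_prop
  calc edist (v z) (v t) = ∫⁻ _s, edist (v z) (v t) ∂(OscMorrey.m x y z 1) := by simp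
    _ ≤ ∫⁻ s, (edist (v z) (v s) + edist (v t) (v s)) ∂(OscMorrey.m x y z 1) :=
        lintegral_mono fun s => edist_triangle_right _ _ _
    _ = (∫⁻ s, edist (v z) (v s) ∂(OscMorrey.m x y z 1)) +
          ∫⁻ s, edist (v t) (v s) ∂(OscMorrey.m x y z 1) := lintegral_add_left hm _
    _ ≤ _ := add_le_add bz bt
    _ = _ := by
        have hL : 0 ≤ (y - x) ^ (σ - 1 / p) := Real.rpow_nonneg (by linarith) _
        rw [← add_mul, ← ENNReal.ofReal_add (mul_nonneg hK.le hL) (mul_nonneg hK.le hL)]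
        congr 2
        ring
end

section
/- Let 0<s<1 and 1<p<∞ satisfy sp>1. There is a constant C depending only on s and p with the following property. Let (Ñ, d_Ñ) and (N, d_N) be metric spaces and π : Ñ → N be nonexpansive (d_N(π(a),π(b)) ≤ d_Ñ(a,b) for all a,b) and an isometry at scale ρ>0 (d_N(π(a),π(b)) = d_Ñ(a,b) whenever d_Ñ(a,b) ≤ ρ). Assume Ñ has diameter at most D < ∞. Then for every interval I ⊆ ℝ and every continuous map ũ : I → Ñ, writing u := π ∘ ũ, one has ∫_I∫_I d_Ñ(ũ(x),ũ(y))^p/|x-y|^{1+sp} dx dy ≤ C · max(1, D/ρ)^p · ∫_I∫_I d_N(u(x),u(y))^p/|x-y|^{1+sp} dx dy. -/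
open MeasureTheory Set ENNReal

namespace LiftAux

/-- Scaling of an integral towards a point of the interval. -/
lemma scale (a b x : ℝ) (hx : x ∈ Icc a b) (h : ℝ → ℝ≥0∞) (hh : Measurable h) :
    ∫⁻ y in Icc a b, h ((x + y) / 2) ≤ 2 * ∫⁻ y in Icc a b, h y := by
  have hm : Measurable ((Icc a b).indicator h) := hh.indicator measurableSet_Icc
  have h1 : ∫⁻ y in Icc a b, h ((x + y) / 2)
      ≤ ∫⁻ y, (Icc a b).indicator h ((x + y) / 2) := by
    rw [← lintegral_indicator measurableSet_Icc]
    apply lintegral_mono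
    intro y
    by_cases hy : y ∈ Icc a b
    · have : (x + y) / 2 ∈ Icc a b := by
        constructor <;> linarith [hx.1, hx.2, hy.1, hy.2]
      simp [indicator_of_mem hy, indicator_of_mem this]
    · simp [indicator_of_notMem hy]
  refine h1.trans (le_of_eq ?_)
  have h2 : ∫⁻ y, (Icc a b).indicator h ((x + y) / 2)
      = ∫⁻ y, (Icc a b).indicator h (2⁻¹ * y) := by
    rw [← lintegral_add_left_eq_self (fun y => (Icc a b).indicator h (2⁻¹ * y)) x]
    congr 1; ext y; congr 1; ring
  rw [h2, ← lintegral_indicator measurableSet_Icc]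
  have h3 := Real.smul_map_volume_mul_left (a := (2⁻¹ : ℝ)) (by norm_num)
  have h4 : ∫⁻ y, (Icc a b).indicator h y
      = ENNReal.ofReal |(2⁻¹ : ℝ)| * ∫⁻ y, (Icc a b).indicator h (2⁻¹ * y) := by
    conv_lhs => rw [← h3]
    rw [lintegral_smul_measure, lintegral_map hm (by fun_prop), smul_eq_mul]
  rw [h4, ← mul_assoc]
  have : (2 : ℝ≥0∞) * ENNReal.ofReal |(2⁻¹ : ℝ)| = 1 := by
    rw [abs_of_pos (by norm_num), ENNReal.ofReal_inv_of_pos (by norm_num)]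
    simp [ENNReal.mul_inv_cancel]
  rw [this, one_mul]

variable {X : Type*} [MetricSpace X]

open Classical in
/-- Truncated kernel. -/
noncomputable def A (w : ℝ → X) (q : ℝ) (t : ℝ≥0∞) (x y : ℝ) : ℝ≥0∞ :=
  if t < edist (w x) (w y) then (edist x y ^ q)⁻¹ else 0

lemma A_meas (w : ℝ → X) (hw : Continuous w) (q : ℝ) (t : ℝ≥0∞) :
    Measurable (Function.uncurry (A w q t)) := by
  unfold A Function.uncurry
  refine Measurable.ite ?_ (by fun_prop) measurable_const
  have : Continuous (fun a : ℝ × ℝ => edist (w a.1) (w a.2)) := by fun_prop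
  exact (isOpen_lt continuous_const this).measurableSet

lemma A_mid (w : ℝ → X) (q : ℝ) (hq : 0 < q) (t : ℝ≥0∞) (x y : ℝ) :
    A w q t x y ≤ ENNReal.ofReal (2 ^ (-q)) *
      (A w q (t / 2) x ((x + y) / 2) + A w q (t / 2) y ((x + y) / 2)) := by
  have key : ∀ x y : ℝ, (edist x y ^ q)⁻¹ =
      ENNReal.ofReal (2 ^ (-q)) * (edist x ((x + y) / 2) ^ q)⁻¹ := by
    intro x y
    have h1 : edist x y = 2 * edist x ((x + y) / 2) := by
      rw [edist_dist, edist_dist, Real.dist_eq, Real.dist_eq]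
      have : |x - y| = 2 * |x - (x + y) / 2| := by
        rw [show x - (x + y) / 2 = (x - y) / 2 by ring, abs_div]
        norm_num; ring
      rw [this, ENNReal.ofReal_mul (by norm_num)]; simp
    rw [h1, ENNReal.mul_rpow_of_nonneg _ _ hq.le, ENNReal.mul_inv, Real.rpow_neg (by norm_num),
      ENNReal.ofReal_inv_of_pos (by positivity), ← ENNReal.ofReal_rpow_of_pos (by norm_num)]
    · simp
    · left; simp
    · left; simp [hq.le]
  by_cases h : t < edist (w x) (w y)
  · have h2 : t / 2 < edist (w x) (w ((x + y) / 2)) ∨ t / 2 < edist (w y) (w ((x + y) / 2)) := by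
      by_contra! hc
      have := edist_triangle_right (w x) (w y) (w ((x + y) / 2))
      have h3 := this.trans (add_le_add hc.1 hc.2)
      rw [ENNReal.add_halves] at h3
      exact absurd h (not_lt.mpr h3)
    rcases h2 with h2 | h2
    · calc A w q t x y = ENNReal.ofReal (2 ^ (-q)) * A w q (t / 2) x ((x + y) / 2) := by
            simp only [A, if_pos h, if_pos h2]; exact key x y
        _ ≤ _ := by gcongr; exact le_self_add
    · calc A w q t x y = ENNReal.ofReal (2 ^ (-q)) * A w q (t / 2) y ((x + y) / 2) := by
            simp only [A, if_pos h, if_pos h2]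
            rw [edist_comm x y, key y x, add_comm y x]
        _ ≤ _ := by gcongr; exact le_add_self
  · simp [A, h]

/-- Kernel measure of the set where the oscillation exceeds `t`. -/
noncomputable def M (w : ℝ → X) (a b q : ℝ) (t : ℝ≥0∞) : ℝ≥0∞ :=
  ∫⁻ x in Icc a b, ∫⁻ y in Icc a b, A w q t x y

lemma M_le (w : ℝ → X) (hw : Continuous w) (a b q : ℝ) (hq : 0 < q) (t : ℝ≥0∞) :
    M w a b q t ≤ ENNReal.ofReal (2 ^ (2 - q)) * M w a b q (t / 2) := by
  have hA := A_meas w hw q (t / 2)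
  have hA1 : Measurable (fun z : ℝ × ℝ => A w q (t / 2) z.1 ((z.1 + z.2) / 2)) :=
    hA.comp (by fun_prop : Measurable (fun z : ℝ × ℝ => (z.1, (z.1 + z.2) / 2)))
  have hA2 : Measurable (fun z : ℝ × ℝ => A w q (t / 2) z.2 ((z.1 + z.2) / 2)) :=
    hA.comp (by fun_prop : Measurable (fun z : ℝ × ℝ => (z.2, (z.1 + z.2) / 2)))
  have hAx : ∀ x, Measurable (fun y => A w q (t / 2) x y) := fun x =>
    hA.comp (by fun_prop : Measurable (fun y : ℝ => (x, y)))
  have s1 : ∫⁻ x in Icc a b, ∫⁻ y in Icc a b, A w q (t / 2) x ((x + y) / 2)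
      ≤ 2 * M w a b q (t / 2) := by
    rw [M, ← lintegral_const_mul' _ _ (by simp)]
    exact setLIntegral_mono' measurableSet_Icc fun x hx => scale a b x hx _ (hAx x)
  have s2 : ∫⁻ x in Icc a b, ∫⁻ y in Icc a b, A w q (t / 2) y ((x + y) / 2)
      ≤ 2 * M w a b q (t / 2) := by
    rw [lintegral_lintegral_swap hA2.aemeasurable]
    refine le_trans (le_of_eq ?_) s1
    refine lintegral_congr fun x => lintegral_congr fun y => ?_
    rw [add_comm y x]
  calc M w a b q t ≤ ∫⁻ x in Icc a b, ∫⁻ y in Icc a b, ENNReal.ofReal (2 ^ (-q)) *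
      (A w q (t / 2) x ((x + y) / 2) + A w q (t / 2) y ((x + y) / 2)) := by
        unfold M
        gcongr with x y
        exact A_mid w q hq t x y
    _ = ENNReal.ofReal (2 ^ (-q)) *
      ((∫⁻ x in Icc a b, ∫⁻ y in Icc a b, A w q (t / 2) x ((x + y) / 2)) +
        ∫⁻ x in Icc a b, ∫⁻ y in Icc a b, A w q (t / 2) y ((x + y) / 2)) := by
        simp_rw [lintegral_const_mul' (ENNReal.ofReal (2 ^ (-q))) _ (by simp)]
        congr 1
        rw [← lintegral_add_left hA1.lintegral_prod_right']
        congr 1; ext x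
        have hx1 : Measurable (fun y => A w q (t / 2) x ((x + y) / 2)) :=
          hA1.comp (by fun_prop : Measurable (fun y : ℝ => (x, y)))
        exact lintegral_add_left hx1 _
    _ ≤ ENNReal.ofReal (2 ^ (-q)) * (2 * M w a b q (t / 2) + 2 * M w a b q (t / 2)) := by
        gcongr
    _ = _ := by
        rw [← two_mul, ← mul_assoc, ← mul_assoc]
        congr 1
        rw [sub_eq_add_neg, Real.rpow_add (by norm_num), ENNReal.ofReal_mul (by positivity)]
        have : ENNReal.ofReal (2 ^ (2 : ℝ)) = 2 * 2 := by
          rw [show ((2 : ℝ) ^ (2 : ℝ)) = 2 * 2 by norm_num, ENNReal.ofReal_mul (by norm_num)]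
          simp
        rw [this]; ring

lemma M_fin (w : ℝ → X) (hw : Continuous w) (a b q : ℝ) (hq : 0 < q) (r : ℝ) (hr : 0 < r) :
    M w a b q (ENNReal.ofReal r) ≠ ⊤ := by
  have huc := isCompact_Icc.uniformContinuousOn_of_continuous (hw.continuousOn (s := Icc a b))
  rw [Metric.uniformContinuousOn_iff] at huc
  obtain ⟨δ, hδ, H⟩ := huc r hr
  have hk : ((ENNReal.ofReal δ) ^ q)⁻¹ ≠ ⊤ := by
    simp [ENNReal.rpow_eq_zero_iff, hδ, hq.not_gt]
  have : M w a b q (ENNReal.ofReal r) ≤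
      ∫⁻ x in Icc a b, ∫⁻ y in Icc a b, ((ENNReal.ofReal δ) ^ q)⁻¹ := by
    refine setLIntegral_mono' measurableSet_Icc fun x hx =>
      setLIntegral_mono' measurableSet_Icc fun y hy => ?_
    unfold A
    split_ifs with h
    · have : δ ≤ dist x y := by
        by_contra! hc
        have h5 := H x hx y hy hc
        rw [edist_dist, ENNReal.ofReal_lt_ofReal_iff_of_nonneg hr.le] at h
        linarith
      rw [edist_dist]
      gcongr
    · simp
  refine ne_top_of_le_ne_top ?_ this
  simp only [lintegral_const]
  refine ENNReal.mul_ne_top (ENNReal.mul_ne_top hk ?_) ?_ <;> simp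

lemma absorb (m n : ℝ≥0∞) (c : ℝ) (hc0 : 0 < c) (hc : c < 1) (hm : m ≠ ⊤)
    (h : m ≤ ENNReal.ofReal c * (m + n)) : m ≤ ENNReal.ofReal (c / (1 - c)) * n := by
  have h1 : 0 < c / (1 - c) := div_pos hc0 (by linarith)
  by_cases hn : n = ⊤
  · rw [hn, ENNReal.mul_top (by simpa using h1)]; exact le_top
  lift m to NNReal using hm
  lift n to NNReal using hn
  have h2 : (m : ℝ) ≤ c * (m + n) := by
    have := ENNReal.toReal_mono (by finiteness) h
    simpa [ENNReal.toReal_mul, ENNReal.toReal_add, hc0.le] using this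
  have h3 : (m : ℝ) ≤ c / (1 - c) * n := by
    rw [div_mul_eq_mul_div, le_div_iff₀ (by linarith)]; linarith
  rw [← ENNReal.toReal_le_toReal (by finiteness) (by finiteness)]
  simpa [ENNReal.toReal_mul, h1.le] using h3

lemma compact_case {Y : Type*} [MetricSpace Y] (p q c : ℝ) (hp : 0 < p) (hq : 0 < q)
    (hcdef : c = 2 ^ (2 - q)) (hc : c < 1) (π : X → Y) (ρ D : ℝ) (hρ : 0 < ρ)
    (h2 : ∀ a b : X, dist a b ≤ ρ → dist (π a) (π b) = dist a b)
    (h3 : ∀ a b : X, dist a b ≤ D) (w : ℝ → X) (hw : Continuous w) (a b : ℝ) :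
    (∫⁻ x in Icc a b, ∫⁻ y in Icc a b, edist (w x) (w y) ^ p / edist x y ^ q) ≤
      ENNReal.ofReal (1 + 2 ^ p * (c / (1 - c))) * ENNReal.ofReal (max 1 (D / ρ)) ^ p *
      ∫⁻ x in Icc a b, ∫⁻ y in Icc a b, edist (π (w x)) (π (w y)) ^ p / edist x y ^ q := by
  have hc0 : 0 < c := by rw [hcdef]; positivity
  have hD : 0 ≤ D := by simpa using h3 (w 0) (w 0)
  set r := ENNReal.ofReal ρ with hr
  set G := ∫⁻ x in Icc a b, ∫⁻ y in Icc a b, edist (π (w x)) (π (w y)) ^ p / edist x y ^ q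
    with hG
  have hA := A_meas w hw q r
  have hAx : ∀ x, Measurable (fun y => A w q r x y) := fun x =>
    hA.comp (by fun_prop : Measurable (fun y : ℝ => (x, y)))
  have hAi : Measurable (fun x => ∫⁻ y in Icc a b, A w q r x y) := hA.lintegral_prod_right'
  have hiso : ∀ x y, edist (w x) (w y) ≤ r → edist (π (w x)) (π (w y)) = edist (w x) (w y) := by
    intro x y h
    rw [edist_dist, hr, ENNReal.ofReal_le_ofReal_iff hρ.le] at h
    rw [edist_dist, edist_dist, h2 _ _ h]
  have hr0 : r ≠ 0 := by simpa [hr] using hρ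
  have hrt : r ≠ ⊤ := by simp [hr]
  set e := (r / 2) ^ p with he
  have he0 : e ≠ 0 := by
    simp [he, ENNReal.rpow_eq_zero_iff, ENNReal.div_eq_zero_iff, hr0, hp.not_gt]
  have het : e ≠ ⊤ := by
    simp [he, ENNReal.rpow_eq_top_iff, ENNReal.div_eq_top, hrt, hr0, hp.not_gt]
  -- the lower level set
  have hhalf : M w a b q (r / 2) ≤ M w a b q r + e⁻¹ * G := by
    have hei : e⁻¹ ≠ ⊤ := by simpa using he0
    rw [M, M, hG, ← lintegral_const_mul' _ _ hei, ← lintegral_add_left hAi]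
    refine lintegral_mono fun x => ?_
    rw [← lintegral_const_mul' _ _ hei, ← lintegral_add_left (hAx x)]
    refine lintegral_mono fun y => ?_
    by_cases hgt : r < edist (w x) (w y)
    · have : r / 2 < edist (w x) (w y) := lt_of_le_of_lt ENNReal.half_le_self hgt
      simp only [A, if_pos hgt, if_pos this]
      exact le_self_add
    · by_cases hh : r / 2 < edist (w x) (w y)
      · simp only [A, if_pos hh, if_neg hgt, zero_add, hiso x y (not_lt.mp hgt)]
        rw [div_eq_mul_inv, ← mul_assoc]
        refine le_mul_of_one_le_left (by simp) ?_
        rw [← ENNReal.inv_mul_cancel he0 het]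
        gcongr
        exact ENNReal.rpow_le_rpow hh.le hp.le
      · simp [A, hh]
  have habs : M w a b q r ≤ ENNReal.ofReal (c / (1 - c)) * (e⁻¹ * G) := by
    refine absorb _ _ c hc0 hc (M_fin w hw a b q hq ρ hρ) ?_
    refine (M_le w hw a b q hq r).trans ?_
    rw [hcdef]
    gcongr
  have hmain : (∫⁻ x in Icc a b, ∫⁻ y in Icc a b, edist (w x) (w y) ^ p / edist x y ^ q) ≤
      G + ENNReal.ofReal D ^ p * M w a b q r := by
    have hDt : ENNReal.ofReal D ^ p ≠ ⊤ := by simp [hp.le]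
    rw [M, hG, ← lintegral_const_mul' _ _ hDt, ← lintegral_add_right _ (hAi.const_mul _)]
    refine lintegral_mono fun x => ?_
    rw [← lintegral_const_mul' _ _ hDt, ← lintegral_add_right _ ((hAx x).const_mul _)]
    refine lintegral_mono fun y => ?_
    by_cases hgt : r < edist (w x) (w y)
    · simp only [A, if_pos hgt]
      refine le_trans ?_ le_add_self
      rw [div_eq_mul_inv]
      gcongr
      rw [edist_dist]
      exact ENNReal.ofReal_le_ofReal (h3 _ _)
    · rw [hiso x y (not_lt.mp hgt)]
      exact le_self_add
  set Mx := max 1 (D / ρ) with hMx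
  have hone : 1 ≤ ENNReal.ofReal Mx ^ p :=
    ENNReal.one_le_rpow (by simp [hMx]) hp
  have hDe : ENNReal.ofReal D ^ p * e⁻¹ ≤ ENNReal.ofReal (2 ^ p) * ENNReal.ofReal Mx ^ p := by
    rw [← ENNReal.ofReal_rpow_of_pos (by norm_num), ← ENNReal.mul_rpow_of_nonneg _ _ hp.le, he,
      ← ENNReal.inv_rpow, ← ENNReal.mul_rpow_of_nonneg _ _ hp.le]
    refine ENNReal.rpow_le_rpow ?_ hp.le
    have : r / 2 = ENNReal.ofReal (ρ / 2) := by
      rw [hr, ENNReal.ofReal_div_of_pos (by norm_num)]; simp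
    rw [this, ← ENNReal.ofReal_inv_of_pos (by positivity), ← ENNReal.ofReal_mul hD,
      ← ENNReal.ofReal_mul (by norm_num)]
    apply ENNReal.ofReal_le_ofReal
    calc D * (ρ / 2)⁻¹ = 2 * (D / ρ) := by field_simp
      _ ≤ 2 * Mx := by gcongr; exact le_max_right _ _
  have hcc : 0 < c / (1 - c) := div_pos hc0 (by linarith)
  calc _ ≤ G + ENNReal.ofReal D ^ p * M w a b q r := hmain
    _ ≤ G + ENNReal.ofReal D ^ p * (ENNReal.ofReal (c / (1 - c)) * (e⁻¹ * G)) := by gcongr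
    _ = 1 * G + (ENNReal.ofReal D ^ p * e⁻¹) * ENNReal.ofReal (c / (1 - c)) * G := by ring
    _ ≤ ENNReal.ofReal Mx ^ p * G + (ENNReal.ofReal (2 ^ p) * ENNReal.ofReal Mx ^ p) *
        ENNReal.ofReal (c / (1 - c)) * G := by gcongr
    _ = _ := by
      rw [ENNReal.ofReal_add (by norm_num) (by positivity), ENNReal.ofReal_mul (by positivity)]
      simp only [ENNReal.ofReal_one]
      ring

end LiftAux

/-- **One-dimensional lifting estimate.** For `0 < s < 1`, `1 < p` with `sp > 1`, there is a
constant `C = C(s,p)` such that whenever `π : Ñ → N` between metric spaces is nonexpansive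
and an isometry at scale `ρ > 0`, `Ñ` has diameter at most `D`, `I ⊆ ℝ` is an interval and
`ũ : I → Ñ` is continuous, then, with `u := π ∘ ũ`,
`∫_I∫_I d_Ñ(ũ(x),ũ(y))^p/|x-y|^{1+sp} ≤ C max(1,D/ρ)^p ∫_I∫_I d_N(u(x),u(y))^p/|x-y|^{1+sp}`. -/
theorem lifting_one_dimensional_estimate (s p : ℝ) (hs0 : 0 < s) (hs1 : s < 1)
    (hp1 : 1 < p) (hsp : 1 < s * p) :
    ∃ C : ℝ, 0 < C ∧
      ∀ (Ntl N : Type*) [MetricSpace Ntl] [MetricSpace N] (π : Ntl → N) (ρ D : ℝ),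
        0 < ρ →
        (∀ a b : Ntl, dist (π a) (π b) ≤ dist a b) →
        (∀ a b : Ntl, dist a b ≤ ρ → dist (π a) (π b) = dist a b) →
        (∀ a b : Ntl, dist a b ≤ D) →
        ∀ I : Set ℝ, I.OrdConnected →
        ∀ ut : ℝ → Ntl, ContinuousOn ut I →
          (∫⁻ x in I, ∫⁻ y in I,
              edist (ut x) (ut y) ^ p / edist x y ^ (1 + s * p)) ≤
            ENNReal.ofReal C * ENNReal.ofReal (max 1 (D / ρ)) ^ p *
              ∫⁻ x in I, ∫⁻ y in I,
                edist (π (ut x)) (π (ut y)) ^ p / edist x y ^ (1 + s * p) := by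
  have h2p : (2 : ℝ) ^ (2 - (1 + s * p)) < 1 :=
    Real.rpow_lt_one_of_one_lt_of_neg (by norm_num) (by linarith)
  set c : ℝ := 2 ^ (2 - (1 + s * p)) with hc
  have hc0 : 0 < c := by rw [hc]; positivity
  have hcc : 0 < c / (1 - c) := div_pos hc0 (by linarith)
  refine ⟨1 + 2 ^ p * (c / (1 - c)), by positivity, ?_⟩
  intro X Y _ _ π ρ D hρ _ h2 h3 I hI ut hut
  have hq : 0 < 1 + s * p := by linarith
  have hp : 0 < p := by linarith
  -- compact subintervals
  have hK : ∀ a b, Icc a b ⊆ I →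
      (∫⁻ x in Icc a b, ∫⁻ y in Icc a b, edist (ut x) (ut y) ^ p / edist x y ^ (1 + s * p)) ≤
      ENNReal.ofReal (1 + 2 ^ p * (c / (1 - c))) * ENNReal.ofReal (max 1 (D / ρ)) ^ p *
      ∫⁻ x in I, ∫⁻ y in I, edist (π (ut x)) (π (ut y)) ^ p / edist x y ^ (1 + s * p) := by
    intro a b hab
    rcases lt_or_ge b a with h | h
    · simp [Icc_eq_empty_of_lt h]
    set w : ℝ → X := fun x => ut (projIcc a b h x) with hw
    have hwc : Continuous w := by
      refine (hut.mono hab).comp_continuous ?_ (fun x => (projIcc a b h x).2)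
      exact continuous_subtype_val.comp continuous_projIcc
    have hweq : ∀ x ∈ Icc a b, w x = ut x := by
      intro x hx; simp [hw, projIcc_of_mem h hx]
    have := LiftAux.compact_case p (1 + s * p) c hp hq hc h2p π ρ D hρ h2 h3 w hwc a b
    have e1 : (∫⁻ x in Icc a b, ∫⁻ y in Icc a b,
          edist (ut x) (ut y) ^ p / edist x y ^ (1 + s * p)) =
        ∫⁻ x in Icc a b, ∫⁻ y in Icc a b, edist (w x) (w y) ^ p / edist x y ^ (1 + s * p) := by
      refine setLIntegral_congr_fun measurableSet_Icc fun x hx =>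
        setLIntegral_congr_fun measurableSet_Icc fun y hy => ?_
      simp only [hweq x hx, hweq y hy]
    have e2 : (∫⁻ x in Icc a b, ∫⁻ y in Icc a b,
          edist (π (w x)) (π (w y)) ^ p / edist x y ^ (1 + s * p)) =
        ∫⁻ x in Icc a b, ∫⁻ y in Icc a b,
          edist (π (ut x)) (π (ut y)) ^ p / edist x y ^ (1 + s * p) := by
      refine setLIntegral_congr_fun measurableSet_Icc fun x hx =>
        setLIntegral_congr_fun measurableSet_Icc fun y hy => ?_
      simp only [hweq x hx, hweq y hy]
    rw [e1]
    refine this.trans ?_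
    rw [e2]
    gcongr
  have hIm : MeasurableSet I := hI.measurableSet
  rcases I.eq_empty_or_nonempty with rfl | hne
  · simp
  have : Nonempty I := hne.to_subtype
  set d : ℕ → ℝ := fun n => (TopologicalSpace.denseSeq I n : ℝ) with hd
  have hdI : ∀ n, d n ∈ I := fun n => (TopologicalSpace.denseSeq I n).2
  set J : Set ℝ := ⋃ i : ℕ × ℕ, Icc (d i.1) (d i.2) with hJ
  have hJI : J ⊆ I := iUnion_subset fun i => hI.out (hdI _) (hdI _)
  have hdense : ∀ x ∈ I, ∀ y ∈ I, x < y → (∃ n, d n < y) ∧ (∃ n, x < d n) := by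
    intro x hx y hy hxy
    constructor
    · have ho : IsOpen {z : I | (z : ℝ) < y} := isOpen_lt continuous_subtype_val continuous_const
      obtain ⟨n, hn⟩ := (TopologicalSpace.denseRange_denseSeq I).exists_mem_open ho ⟨⟨x, hx⟩, hxy⟩
      exact ⟨n, hn⟩
    · have ho : IsOpen {z : I | x < (z : ℝ)} := isOpen_lt continuous_const continuous_subtype_val
      obtain ⟨n, hn⟩ := (TopologicalSpace.denseRange_denseSeq I).exists_mem_open ho ⟨⟨y, hy⟩, hxy⟩
      exact ⟨n, hn⟩
  have hnull : volume (I \ J) = 0 := by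
    have hsub : I \ J ⊆ {x | IsLeast I x} ∪ {x | IsGreatest I x} := by
      rintro x ⟨hx, hxJ⟩
      by_contra hcon
      simp only [mem_union, mem_ofPred_eq, not_or, IsLeast, IsGreatest, hx, true_and,
        mem_lowerBounds, mem_upperBounds, not_forall, not_le] at hcon
      obtain ⟨⟨y, hy, hyx⟩, ⟨z, hz, hxz⟩⟩ := hcon
      obtain ⟨n, hn⟩ := (hdense y hy x hx hyx).1
      obtain ⟨m, hm⟩ := (hdense x hx z hz hxz).2
      exact hxJ (mem_iUnion.2 ⟨(n, m), hn.le, hm.le⟩)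
    have hs1 : {x | IsLeast I x}.Subsingleton := fun x hx y hy => IsLeast.unique hx hy
    have hs2 : {x | IsGreatest I x}.Subsingleton := fun x hx y hy => IsGreatest.unique hx hy
    exact measure_mono_null hsub
      (measure_union_null (hs1.measure_zero volume) (hs2.measure_zero volume))
  have hae : (J : Set ℝ) =ᵐ[volume] I :=
    Filter.EventuallyLE.antisymm (HasSubset.Subset.eventuallyLE hJI) (ae_le_set.2 hnull)
  have hres : volume.restrict I = volume.restrict J := (Measure.restrict_congr_set hae).symm
  have hFm : ∀ S : Set ℝ, MeasurableSet S → S ⊆ I → AEMeasurable (Function.uncurry fun x y =>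
      edist (ut x) (ut y) ^ p / edist x y ^ (1 + s * p))
      ((volume.restrict S).prod (volume.restrict S)) := by
    intro S hS hSI
    rw [Measure.prod_restrict]
    have hc1 : ContinuousOn (fun z : ℝ × ℝ => edist (ut z.1) (ut z.2)) (S ×ˢ S) := by
      have k1 : ContinuousOn (fun z : ℝ × ℝ => ut z.1) (S ×ˢ S) :=
        (hut.mono hSI).comp continuousOn_fst fun z hz => hz.1
      have k2 : ContinuousOn (fun z : ℝ × ℝ => ut z.2) (S ×ˢ S) :=
        (hut.mono hSI).comp continuousOn_snd fun z hz => hz.2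
      exact continuous_edist.comp_continuousOn (k1.prodMk k2)
    have hm1 := hc1.aemeasurable (μ := (volume : Measure ℝ).prod volume) (hS.prod hS)
    refine (hm1.pow_const p).div (Measurable.aemeasurable ?_)
    exact (measurable_fst.edist measurable_snd).pow_const _
  have hdir0 : ∀ i j : ℕ × ℕ, ∃ k : ℕ × ℕ, Icc (d i.1) (d i.2) ⊆ Icc (d k.1) (d k.2) ∧
      Icc (d j.1) (d j.2) ⊆ Icc (d k.1) (d k.2) := by
    intro i j
    obtain ⟨m, hm1, hm2⟩ : ∃ m, d m ≤ d i.1 ∧ d m ≤ d j.1 := by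
      rcases le_total (d i.1) (d j.1) with h | h
      · exact ⟨_, le_rfl, h⟩
      · exact ⟨_, h, le_rfl⟩
    obtain ⟨n, hn1, hn2⟩ : ∃ n, d i.2 ≤ d n ∧ d j.2 ≤ d n := by
      rcases le_total (d i.2) (d j.2) with h | h
      · exact ⟨_, h, le_rfl⟩
      · exact ⟨_, le_rfl, h⟩
    exact ⟨(m, n), Icc_subset_Icc hm1 hn1, Icc_subset_Icc hm2 hn2⟩
  have hJ2 : J ×ˢ J = ⋃ i : ℕ × ℕ, Icc (d i.1) (d i.2) ×ˢ Icc (d i.1) (d i.2) := by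
    ext ⟨x, y⟩
    simp only [hJ, mem_prod, mem_iUnion]
    constructor
    · rintro ⟨⟨i, hi⟩, ⟨j, hj⟩⟩
      obtain ⟨k, hk1, hk2⟩ := hdir0 i j
      exact ⟨k, hk1 hi, hk2 hj⟩
    · rintro ⟨i, hi, hj⟩
      exact ⟨⟨i, hi⟩, ⟨i, hj⟩⟩
  have hdir : Directed (· ⊆ ·)
      (fun i : ℕ × ℕ => Icc (d i.1) (d i.2) ×ˢ Icc (d i.1) (d i.2)) := by
    intro i j
    obtain ⟨k, hk1, hk2⟩ := hdir0 i j
    exact ⟨k, prod_mono hk1 hk1, prod_mono hk2 hk2⟩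
  have hL : (∫⁻ x in I, ∫⁻ y in I, edist (ut x) (ut y) ^ p / edist x y ^ (1 + s * p)) =
      ∫⁻ z in J ×ˢ J, Function.uncurry (fun x y =>
        edist (ut x) (ut y) ^ p / edist x y ^ (1 + s * p)) z := by
    rw [lintegral_lintegral (hFm I hIm subset_rfl), hres, Measure.prod_restrict]
    rfl
  rw [hL, hJ2, setLIntegral_iUnion_of_directed _ hdir]
  refine iSup_le fun i => ?_
  have hi : Icc (d i.1) (d i.2) ⊆ I := hI.out (hdI _) (hdI _)
  refine le_trans (le_of_eq ?_) (hK _ _ hi)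
  rw [lintegral_lintegral (hFm _ measurableSet_Icc hi), Measure.prod_restrict]
  rfl
end

section
/- Let 0<s<1, 1≤p<∞ and m > 0. Let (M, d) be a connected compact metric space equipped with a finite Borel measure μ which is positive on every nonempty open set, and let (C_j)_{j∈J} be a finite family of open subsets of M covering M. Then there is a constant C (depending on s, p, m, M, μ and the cover) such that for every metric space (X, d_X) and every Borel measurable map u : M → X, ∫_M∫_M d_X(u(x),u(y))^p dμ(x) dμ(y) ≤ C Σ_{j∈J} ∫_{C_j}∫_{C_j} d_X(u(x),u(y))^p / d(x,y)^{m+sp} dμ(x) dμ(y). -/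
open MeasureTheory Set ENNReal

/-- Abstract kernels: symmetric, quasi-triangle, measurable in the second variable. -/
structure GoodKer {M : Type*} [MeasurableSpace M] (c : ℝ≥0∞) (f : M → M → ℝ≥0∞) : Prop where
  symm : ∀ x y, f x y = f y x
  tri : ∀ x y z, f x z ≤ c * (f x y + f y z)
  meas : ∀ x, Measurable (f x)

theorem ker_trans {M : Type*} [MeasurableSpace M] (μ : Measure M) [IsFiniteMeasure μ]
    {c : ℝ≥0∞} (hc : c ≠ ⊤) {f : M → M → ℝ≥0∞} (hf : GoodKer c f) (A B D : Set M) :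
    μ B * ∫⁻ x in A, ∫⁻ z in D, f x z ∂μ ∂μ ≤
      c * (μ D * (∫⁻ x in A, ∫⁻ y in B, f x y ∂μ ∂μ)
        + μ A * ∫⁻ z in D, ∫⁻ y in B, f z y ∂μ ∂μ) := by
  have hB : μ B ≠ ⊤ := measure_ne_top μ B
  have hD : μ D ≠ ⊤ := measure_ne_top μ D
  have h1 : ∀ x z, μ B * f x z ≤ c * ((∫⁻ y in B, f x y ∂μ) + ∫⁻ y in B, f z y ∂μ) := by
    intro x z
    calc μ B * f x z = ∫⁻ y in B, f x z ∂μ := by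
          rw [setLIntegral_const, mul_comm]
      _ ≤ ∫⁻ y in B, c * (f x y + f z y) ∂μ := by
          refine lintegral_mono fun y => ?_
          have := hf.tri x y z
          rwa [hf.symm y z] at this
      _ = _ := by
          rw [lintegral_const_mul' _ _ hc, lintegral_add_left (hf.meas x)]
  have h2 : ∀ x, μ B * (∫⁻ z in D, f x z ∂μ) ≤
      c * (μ D * (∫⁻ y in B, f x y ∂μ) + ∫⁻ z in D, ∫⁻ y in B, f z y ∂μ ∂μ) := by
    intro x
    rw [← lintegral_const_mul' _ _ hB]
    refine (lintegral_mono fun z => h1 x z).trans_eq ?_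
    rw [lintegral_const_mul' _ _ hc, lintegral_add_left measurable_const, setLIntegral_const,
      mul_comm (μ D)]
  rw [← lintegral_const_mul' _ _ hB]
  refine (lintegral_mono fun x => h2 x).trans_eq ?_
  rw [lintegral_const_mul' _ _ hc, lintegral_add_right _ measurable_const, setLIntegral_const,
    lintegral_const_mul' _ _ hD, mul_comm (μ A)]

theorem ker_core {M : Type*} [MetricSpace M] [ConnectedSpace M]
    [MeasurableSpace M] (μ : Measure M) [IsFiniteMeasure μ]
    (hμ : ∀ U : Set M, IsOpen U → U.Nonempty → 0 < μ U)
    {ι : Type*} [Fintype ι] (Cov : ι → Set M) (hCopen : ∀ j, IsOpen (Cov j))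
    (hCcover : univ ⊆ ⋃ j, Cov j) {c : ℝ≥0∞} (hc : c ≠ ⊤) :
    ∃ K : ℝ≥0∞, K ≠ ⊤ ∧ ∀ f : M → M → ℝ≥0∞, GoodKer c f →
      (∫⁻ x, ∫⁻ y, f x y ∂μ ∂μ) ≤ K * ∑ j, ∫⁻ x in Cov j, ∫⁻ y in Cov j, f x y ∂μ ∂μ := by
  classical
  -- comparability of two sets
  let P : Set M → Set M → Prop := fun A B => ∃ K : ℝ≥0∞, K ≠ ⊤ ∧ ∀ f : M → M → ℝ≥0∞,
    GoodKer c f → (∫⁻ x in A, ∫⁻ y in B, f x y ∂μ ∂μ) ≤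
      K * ∑ j, ∫⁻ x in Cov j, ∫⁻ y in Cov j, f x y ∂μ ∂μ
  have hself : ∀ (f : M → M → ℝ≥0∞) (j : ι) (B : Set M), B ⊆ Cov j →
      (∫⁻ x in Cov j, ∫⁻ y in B, f x y ∂μ ∂μ) ≤
      ∑ j, ∫⁻ x in Cov j, ∫⁻ y in Cov j, f x y ∂μ ∂μ := by
    intro f j B hB
    refine (lintegral_mono fun x => lintegral_mono_set hB).trans ?_
    exact Finset.single_le_sum (f := fun j => ∫⁻ x in Cov j, ∫⁻ y in Cov j, f x y ∂μ ∂μ)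
      (fun _ _ => zero_le) (Finset.mem_univ j)
  have hstep : ∀ (A V : Set M) (j : ι), IsOpen V → (V ∩ Cov j).Nonempty → P A V →
      P A (Cov j) := by
    rintro A V j hV hne ⟨K, hK, hP⟩
    have hpos : 0 < μ (V ∩ Cov j) := hμ _ (hV.inter (hCopen j)) hne
    have hfin : μ (V ∩ Cov j) ≠ ⊤ := measure_ne_top _ _
    refine ⟨(μ (V ∩ Cov j))⁻¹ * (c * (μ (Cov j) * K + μ A)), ?_, fun f hf => ?_⟩
    · exact ENNReal.mul_ne_top (ENNReal.inv_ne_top.2 hpos.ne')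
        (ENNReal.mul_ne_top hc (ENNReal.add_ne_top.2
          ⟨ENNReal.mul_ne_top (measure_ne_top _ _) hK, measure_ne_top _ _⟩))
    · have h := ker_trans μ hc hf A (V ∩ Cov j) (Cov j)
      have h1 : (∫⁻ x in A, ∫⁻ y in V ∩ Cov j, f x y ∂μ ∂μ) ≤ _ :=
        (lintegral_mono fun x => lintegral_mono_set inter_subset_left).trans (hP f hf)
      have h2 := hself f j (V ∩ Cov j) inter_subset_right
      set S := ∑ j, ∫⁻ x in Cov j, ∫⁻ y in Cov j, f x y ∂μ ∂μ
      have h3 : μ (V ∩ Cov j) * ∫⁻ x in A, ∫⁻ z in Cov j, f x z ∂μ ∂μ ≤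
          c * (μ (Cov j) * (K * S) + μ A * S) := h.trans (by gcongr)
      calc _ = (μ (V ∩ Cov j))⁻¹ * (μ (V ∩ Cov j) * ∫⁻ x in A, ∫⁻ z in Cov j, f x z ∂μ ∂μ) := by
            rw [← mul_assoc, ENNReal.inv_mul_cancel hpos.ne' hfin, one_mul]
        _ ≤ (μ (V ∩ Cov j))⁻¹ * (c * (μ (Cov j) * (K * S) + μ A * S)) := by gcongr
        _ = _ := by ring
  have hcov : ∀ x, ∃ j, x ∈ Cov j := fun x => mem_iUnion.1 (hCcover (mem_univ x))
  -- connectedness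
  have hconn : ∀ i k, (Cov i).Nonempty → (Cov k).Nonempty → P (Cov i) (Cov k) := by
    intro i k ⟨a, ha⟩ ⟨b, hb⟩
    let T : Set M := {y | ∃ V, IsOpen V ∧ y ∈ V ∧ P (Cov i) V}
    have hTo : IsOpen T := by
      rw [isOpen_iff_forall_mem_open]
      rintro y ⟨V, hV, hy, hP⟩
      exact ⟨V, fun z hz => ⟨V, hV, hz, hP⟩, hV, hy⟩
    have hTc : IsClosed T := by
      refine isClosed_of_closure_subset fun y hy => ?_
      obtain ⟨j, hj⟩ := hcov y
      obtain ⟨z, hz, V, hV, hzV, hP⟩ := mem_closure_iff.1 hy _ (hCopen j) hj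
      exact ⟨Cov j, hCopen j, hj, hstep _ V j hV ⟨z, hzV, hz⟩ hP⟩
    have haT : a ∈ T := ⟨Cov i, hCopen i, ha, 1, ENNReal.one_ne_top, fun f _ => by
      rw [one_mul]; exact hself f i _ Subset.rfl⟩
    have hTu : T = univ := IsClopen.eq_univ ⟨hTc, hTo⟩ ⟨a, haT⟩
    obtain ⟨V, hV, hbV, hP⟩ : b ∈ T := hTu ▸ mem_univ b
    exact hstep _ V k hV ⟨b, hbV, hb⟩ hP
  have hall : ∀ i k, P (Cov i) (Cov k) := by
    intro i k
    rcases (Cov i).eq_empty_or_nonempty with h | h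
    · exact ⟨0, ENNReal.zero_ne_top, fun f _ => by simp [h]⟩
    rcases (Cov k).eq_empty_or_nonempty with h' | h'
    · exact ⟨0, ENNReal.zero_ne_top, fun f _ => by simp [h']⟩
    exact hconn i k h h'
  choose K hK hP using hall
  -- glue on the right
  have hU : (⋃ j, Cov j) = univ := univ_subset_iff.1 hCcover
  have hsub : ∀ g : M → ℝ≥0∞, ∫⁻ x, g x ∂μ ≤ ∑ j, ∫⁻ x in Cov j, g x ∂μ := by
    intro g
    have := lintegral_iUnion_le (μ := μ) Cov g
    rwa [hU, Measure.restrict_univ, tsum_fintype] at this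
  obtain ⟨a⟩ : Nonempty M := inferInstance
  obtain ⟨k, hk⟩ := hcov a
  have hpos : 0 < μ (Cov k) := hμ _ (hCopen k) ⟨a, hk⟩
  have hfin : μ (Cov k) ≠ ⊤ := measure_ne_top _ _
  refine ⟨(μ (Cov k))⁻¹ * (c * (μ univ * (∑ j, K j k) + μ univ * (∑ j, K j k))), ?_,
    fun f hf => ?_⟩
  · have h1 : μ univ * (∑ j, K j k) ≠ ⊤ := ENNReal.mul_ne_top (measure_ne_top _ _)
      (ENNReal.sum_ne_top.2 fun j _ => hK j k)
    exact ENNReal.mul_ne_top (ENNReal.inv_ne_top.2 hpos.ne')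
      (ENNReal.mul_ne_top hc (ENNReal.add_ne_top.2 ⟨h1, h1⟩))
  · have h := ker_trans μ hc hf univ (Cov k) univ
    have h1 : (∫⁻ x, ∫⁻ y in Cov k, f x y ∂μ ∂μ) ≤ (∑ j, K j k) *
        ∑ j, ∫⁻ x in Cov j, ∫⁻ y in Cov j, f x y ∂μ ∂μ := by
      rw [Finset.sum_mul]
      exact (hsub _).trans (Finset.sum_le_sum fun j _ => hP j k f hf)
    simp only [Measure.restrict_univ] at h
    set S := ∑ j, ∫⁻ x in Cov j, ∫⁻ y in Cov j, f x y ∂μ ∂μ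
    set L := ∑ j, K j k
    have h3 : μ (Cov k) * ∫⁻ x, ∫⁻ z, f x z ∂μ ∂μ ≤
        c * (μ univ * (L * S) + μ univ * (L * S)) := h.trans (by gcongr)
    calc _ = (μ (Cov k))⁻¹ * (μ (Cov k) * ∫⁻ x, ∫⁻ z, f x z ∂μ ∂μ) := by
          rw [← mul_assoc, ENNReal.inv_mul_cancel hpos.ne' hfin, one_mul]
      _ ≤ (μ (Cov k))⁻¹ * (c * (μ univ * (L * S) + μ univ * (L * S))) := by gcongr
      _ = _ := by ring

/-- **Poincaré-type patching estimate.** Let `0 < s < 1`, `1 ≤ p < ∞`, `m > 0`. Let `M` be a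
connected compact metric space with a finite Borel measure `μ` positive on nonempty open
sets, and let `(C_j)` be a finite open cover of `M`. Then there is a constant `C` such that
for every metric space `X` and every Borel measurable `u : M → X`,
`∫_M∫_M d_X(u(x),u(y))^p dμ dμ ≤ C ∑_j ∫_{C_j}∫_{C_j} d_X(u(x),u(y))^p/d(x,y)^{m+sp} dμ dμ`. -/
theorem poincare_patching_estimate (s p m : ℝ) (hs0 : 0 < s) (hs1 : s < 1) (hp1 : 1 ≤ p)
    (hm : 0 < m) (M : Type*) [MetricSpace M] [CompactSpace M] [ConnectedSpace M]
    [MeasurableSpace M] [BorelSpace M] (μ : Measure M) [IsFiniteMeasure μ]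
    (hμ : ∀ U : Set M, IsOpen U → U.Nonempty → 0 < μ U)
    (ι : Type*) [Fintype ι] (Cov : ι → Set M) (hCopen : ∀ j, IsOpen (Cov j))
    (hCcover : univ ⊆ ⋃ j, Cov j) :
    ∃ C : ℝ, 0 < C ∧
      ∀ (X : Type*) [MetricSpace X] [MeasurableSpace X] [BorelSpace X] (u : M → X),
        Measurable u →
        (∫⁻ x, ∫⁻ y, edist (u x) (u y) ^ p ∂μ ∂μ) ≤
          ENNReal.ofReal C *
            ∑ j : ι, ∫⁻ x in Cov j, ∫⁻ y in Cov j,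
              edist (u x) (u y) ^ p / edist x y ^ (m + s * p) ∂μ ∂μ := by
  obtain ⟨K, hK, hmain⟩ := ker_core μ hμ Cov hCopen hCcover (c := 2 ^ (p - 1))
    (ENNReal.rpow_ne_top_of_nonneg (by linarith) (by simp))
  have hq : 0 < m + s * p := by positivity
  set D : ℝ≥0∞ := Metric.ediam (univ : Set M) with hDdef
  have hD : D ≠ ⊤ := (isCompact_univ : IsCompact (univ : Set M)).isBounded.ediam_ne_top
  set W : ℝ≥0∞ := D ^ (m + s * p) with hWdef
  have hW : W ≠ ⊤ := ENNReal.rpow_ne_top_of_nonneg hq.le hD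
  refine ⟨(K * W).toReal + 1, by positivity, ?_⟩
  intro X _ _ _ u hu
  have hgood : GoodKer (2 ^ (p - 1)) (fun x y : M => edist (u x) (u y) ^ p) := by
    refine ⟨fun x y => by rw [edist_comm], fun x y z => ?_, fun x => ?_⟩
    · exact (ENNReal.rpow_le_rpow (edist_triangle _ (u y) _) (by linarith)).trans
        (ENNReal.rpow_add_le_mul_rpow_add_rpow _ _ hp1)
    · have h1 : Measurable fun z : X => edist (u x) z :=
        (continuous_const.edist continuous_id).measurable
      exact (h1.comp hu).pow_const p
  have hpt : ∀ x y : M, edist (u x) (u y) ^ p ≤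
      W * (edist (u x) (u y) ^ p / edist x y ^ (m + s * p)) := by
    intro x y
    rcases eq_or_ne x y with rfl | hxy
    · simp [ENNReal.zero_rpow_of_pos (by linarith : 0 < p)]
    · have he : edist x y ^ (m + s * p) ≠ 0 := by
        rw [Ne, ENNReal.rpow_eq_zero_iff]
        simp [hxy, hq.not_gt, edist_ne_top]
      have he' : edist x y ^ (m + s * p) ≠ ⊤ :=
        ENNReal.rpow_ne_top_of_nonneg hq.le (edist_ne_top _ _)
      calc edist (u x) (u y) ^ p = edist x y ^ (m + s * p) *
            (edist (u x) (u y) ^ p / edist x y ^ (m + s * p)) :=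
              (ENNReal.mul_div_cancel he he').symm
        _ ≤ _ := by
          gcongr
          exact ENNReal.rpow_le_rpow
            (Metric.edist_le_ediam_of_mem (mem_univ x) (mem_univ y)) hq.le
  have hKW : K * W ≤ ENNReal.ofReal ((K * W).toReal + 1) := by
    rw [← ENNReal.ofReal_toReal (ENNReal.mul_ne_top hK hW)]
    refine ENNReal.ofReal_le_ofReal ?_
    rw [ENNReal.ofReal_toReal (ENNReal.mul_ne_top hK hW)]
    linarith
  refine (hmain _ hgood).trans ?_
  refine le_trans ?_ (mul_le_mul_left hKW _)
  rw [mul_assoc]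
  refine mul_le_mul_right ?_ K
  rw [Finset.mul_sum]
  refine Finset.sum_le_sum fun j _ => ?_
  rw [← lintegral_const_mul' _ _ hW]
  refine lintegral_mono fun x => ?_
  rw [← lintegral_const_mul' _ _ hW]
  exact lintegral_mono fun y => hpt x y
end

section
/- Let 0<s<1, 1≤p<∞ and m > 0. Let (M, d) be a connected compact metric space equipped with a finite Borel measure μ which is positive on every nonempty open set, and let (C_j)_{j∈J} be a finite family of open subsets of M covering M. Then there is a constant C (depending on s, p, m, M, μ and the cover) such that for every metric space (X, d_X) and every Borel measurable map u : M → X, ∫_M∫_M d_X(u(x),u(y))^p / d(x,y)^{m+sp} dμ(x) dμ(y) ≤ C Σ_{j∈J} ∫_{C_j}∫_{C_j} d_X(u(x),u(y))^p / d(x,y)^{m+sp} dμ(x) dμ(y). -/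
open MeasureTheory Set ENNReal

/-- Splitting lemma for sets with uncountable image. -/
lemma big_splitting {Y Z : Type*} [MetricSpace Y] [SecondCountableTopology Y] [MetricSpace Z]
    (f : Y → Z) (hf : Continuous f) (C : Set Y) (hC : IsClosed C) (hunc : ¬ (f '' C).Countable)
    (ε : ℝ≥0∞) (hε : 0 < ε) :
    ∃ C₀ C₁ : Set Y, (IsClosed C₀ ∧ ¬ (f '' C₀).Countable ∧ C₀ ⊆ C ∧ Metric.ediam C₀ ≤ ε) ∧
      (IsClosed C₁ ∧ ¬ (f '' C₁).Countable ∧ C₁ ⊆ C ∧ Metric.ediam C₁ ≤ ε) ∧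
      Disjoint (f '' C₀) (f '' C₁) := by
  set S : Set Y := {y | y ∈ C ∧ ∀ U ∈ nhds y, ¬ (f '' (U ∩ C)).Countable} with hS
  have h1 : (f '' (C \ S)).Countable := by
    have h : ∀ y ∈ C \ S, ∃ U ∈ nhds y, (f '' (U ∩ C)).Countable := by
      intro y hy
      by_contra hcon
      push Not at hcon
      exact hy.2 ⟨hy.1, hcon⟩
    choose! U hU hUc using h
    obtain ⟨t, htS, htc, hcov⟩ := TopologicalSpace.countable_cover_nhdsWithin
      (f := U) (s := C \ S) (fun x hx => mem_nhdsWithin_of_mem_nhds (hU x hx))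
    refine (htc.biUnion (fun y hy => hUc y (htS hy))).mono ?_
    rintro _ ⟨y, hy, rfl⟩
    obtain ⟨z, hz, hyz⟩ := mem_iUnion₂.1 (hcov hy)
    exact mem_iUnion₂.2 ⟨z, hz, y, ⟨hyz, hy.1⟩, rfl⟩
  have h2 : ¬ (f '' S).Countable := by
    intro h
    apply hunc
    refine (h1.union h).mono ?_
    rw [← image_union]
    apply image_mono
    intro y hy
    by_cases h : y ∈ S
    · exact Or.inr h
    · exact Or.inl ⟨hy, h⟩
  have h3 : (f '' S).Nontrivial := by
    by_contra hcon
    exact h2 (not_nontrivial_iff.1 hcon).countable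
  obtain ⟨_, ⟨y0, hy0, rfl⟩, _, ⟨y1, hy1, rfl⟩, hne⟩ := h3
  obtain ⟨W0, W1, h0m, h0o, h1m, h1o, hd⟩ : ∃ W0 W1, W0 ∈ nhds (f y0) ∧ IsClosed W0 ∧
      W1 ∈ nhds (f y1) ∧ IsClosed W1 ∧ Disjoint W0 W1 := by
    have := dist_pos.2 hne
    refine ⟨Metric.closedBall (f y0) (dist (f y0) (f y1) / 3),
      Metric.closedBall (f y1) (dist (f y0) (f y1) / 3),
      Metric.closedBall_mem_nhds _ (by positivity), Metric.isClosed_closedBall,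
      Metric.closedBall_mem_nhds _ (by positivity), Metric.isClosed_closedBall,
      Metric.closedBall_disjoint_closedBall (by linarith)⟩
  have key : ∀ y ∈ S, ∀ W ∈ nhds (f y), IsClosed W → ∃ C₀ : Set Y, (IsClosed C₀ ∧
      ¬ (f '' C₀).Countable ∧ C₀ ⊆ C ∧ Metric.ediam C₀ ≤ ε) ∧ f '' C₀ ⊆ W := by
    intro y hy W hW hWc
    refine ⟨Metric.closedEBall y (ε / 2) ∩ f ⁻¹' W ∩ C, ⟨?_, ?_, inter_subset_right, ?_⟩, ?_⟩
    · exact (Metric.isClosed_closedEBall.inter (hWc.preimage hf)).inter hC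
    · apply hy.2
      refine Filter.inter_mem (Metric.closedEBall_mem_nhds _ ?_) (hf.continuousAt hW)
      exact ENNReal.half_pos hε.ne'
    · refine (Metric.ediam_mono (inter_subset_left.trans inter_subset_left)).trans ?_
      refine (Metric.ediam_closedEBall_le).trans ?_
      rw [mul_comm, ENNReal.div_mul_cancel] <;> norm_num
    · rintro _ ⟨z, hz, rfl⟩
      exact hz.1.2
  obtain ⟨C0, hC0, hC0W⟩ := key y0 hy0 W0 h0m h0o
  obtain ⟨C1, hC1, hC1W⟩ := key y1 hy1 W1 h1m h1o
  exact ⟨C0, C1, hC0, hC1, hd.mono hC0W hC1W⟩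

open CantorScheme in
/-- An uncountable continuous image of a Polish space has at least continuum many points. -/
lemma exists_cantor_injective {Y Z : Type*} [MetricSpace Y] [CompleteSpace Y]
    [SecondCountableTopology Y] [MetricSpace Z]
    (f : Y → Z) (hf : Continuous f) (hunc : ¬ (range f).Countable) :
    ∃ g : (ℕ → Bool) → Y, Function.Injective (f ∘ g) := by
  obtain ⟨u, -, upos', hu⟩ := exists_seq_strictAnti_tendsto' (zero_lt_one' ℝ≥0∞)
  have upos := fun n => (upos' n).1
  let P := Subtype fun E : Set Y => IsClosed E ∧ ¬ (f '' E).Countable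
  choose C0 C1 h0 h1 hdisj using
    fun {C : Set Y} (hC : IsClosed C) (hun : ¬ (f '' C).Countable) {ε : ℝ≥0∞} (hε : 0 < ε) =>
    big_splitting f hf C hC hun ε hε
  let DP : List Bool → P := fun l => by
    induction l with
    | nil => exact ⟨univ, ⟨isClosed_univ, by rwa [image_univ]⟩⟩
    | cons a l ih =>
      cases a
      · use C0 ih.property.1 ih.property.2 (upos (l.length + 1))
        exact ⟨(h0 _ _ _).1, (h0 _ _ _).2.1⟩
      use C1 ih.property.1 ih.property.2 (upos (l.length + 1))
      exact ⟨(h1 _ _ _).1, (h1 _ _ _).2.1⟩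
  let D : List Bool → Set Y := fun l => (DP l).val
  have hanti : ClosureAntitone D := by
    refine Antitone.closureAntitone ?_ fun l => (DP l).property.1
    intro l a
    cases a
    · exact (h0 _ _ _).2.2.1
    exact (h1 _ _ _).2.2.1
  have hdiam : VanishingDiam D := by
    intro x
    apply tendsto_of_tendsto_of_tendsto_of_le_of_le' tendsto_const_nhds hu
    · simp
    rw [Filter.eventually_atTop]
    refine ⟨1, fun m (hm : 1 ≤ m) => ?_⟩
    rw [Nat.one_le_iff_ne_zero] at hm
    rcases Nat.exists_eq_succ_of_ne_zero hm with ⟨n, rfl⟩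
    dsimp
    cases x n
    · convert! (h0 _ _ _).2.2.2
      rw [PiNat.res_length]
    convert! (h1 _ _ _).2.2.2
    rw [PiNat.res_length]
  have hdisj' : CantorScheme.Disjoint (fun l => f '' D l) := by
    rintro l (a | a) (b | b) hab <;> try contradiction
    · exact hdisj _ _ _
    exact (hdisj _ _ _).symm
  have hne : ∀ l, (D l).Nonempty := by
    intro l
    by_contra hcon
    apply (DP l).property.2
    have : (DP l).val = ∅ := not_nonempty_iff_eq_empty.1 hcon
    rw [this]
    simp
  have hdom : ∀ {x : ℕ → Bool}, x ∈ (inducedMap D).1 := fun {x} => by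
    rw [hanti.map_of_vanishingDiam hdiam hne]
    apply mem_univ
  refine ⟨fun x => (inducedMap D).2 ⟨x, hdom⟩, ?_⟩
  intro x y hxy
  have hmem : ∀ (x : ℕ → Bool) (n : ℕ),
      f ((inducedMap D).2 ⟨x, hdom⟩) ∈ f '' D (PiNat.res x n) :=
    fun x n => mem_image_of_mem f (map_mem (A := D) ⟨x, hdom⟩ n)
  simp only [Function.comp_apply] at hxy
  apply PiNat.res_injective
  ext n : 1
  induction n with
  | zero => simp
  | succ n ih =>
    simp only [PiNat.res_succ, List.cons.injEq]
    refine ⟨?_, ih⟩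
    by_contra hcon
    have h := hdisj' (PiNat.res x n) hcon
    have hx := hmem x (n + 1)
    have hy := hmem y (n + 1)
    rw [PiNat.res_succ] at hx hy
    rw [← hxy, ← ih] at hy
    exact disjoint_left.1 h hx hy

open Cardinal in
/-- Separated sets for a Borel map out of a compact metric space are countable. -/
lemma countable_of_separated {M X : Type*} [MetricSpace M] [CompactSpace M]
    [MeasurableSpace M] [BorelSpace M] [MetricSpace X] [MeasurableSpace X] [BorelSpace X]
    (u : M → X) (hu : Measurable u) (ε : ℝ) (hε : 0 < ε) (S : Set M)
    (hS : S.Pairwise fun x y => ε ≤ dist (u x) (u y)) : S.Countable := by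
  by_contra hunc
  have hinj : InjOn u S := by
    intro x hx y hy hxy
    by_contra hne
    have : ε ≤ dist (u x) (u y) := hS hx hy hne
    rw [hxy, dist_self] at this
    linarith
  have hmeas : ∀ A ⊆ S, MeasurableSet (u ⁻¹' (u '' A)) := by
    intro A hA
    apply hu
    apply IsClosed.measurableSet
    apply Metric.isClosed_of_pairwise_le_dist hε
    rintro _ ⟨x, hx, rfl⟩ _ ⟨y, hy, rfl⟩ hne
    exact hS (hA hx) (hA hy) (fun h => hne (by rw [h]))
  set B : Set M := u ⁻¹' (u '' S) with hB
  have hBm : MeasurableSet B := hmeas S subset_rfl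
  have : StandardBorelSpace B := hBm.standardBorel
  choose r hrS hr using fun x : B => (x.2 : ∃ z, z ∈ S ∧ u z = u x)
  have hrange : range r = S := by
    apply subset_antisymm
    · rintro _ ⟨x, rfl⟩
      exact hrS x
    · intro x hx
      let y : B := ⟨x, x, hx, rfl⟩
      exact ⟨y, hinj (hrS y) hx (hr y)⟩
  have hrm : Measurable r := by
    intro A _
    have : r ⁻¹' A = Subtype.val ⁻¹' (u ⁻¹' (u '' (A ∩ S))) := by
      ext x
      constructor
      · intro hx
        exact ⟨r x, ⟨hx, hrS x⟩, hr x⟩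
      · rintro ⟨z, ⟨hzA, hzS⟩, hz⟩
        have : r x = z := hinj (hrS x) hzS ((hr x).trans hz.symm)
        rw [mem_preimage, this]
        exact hzA
    rw [this]
    exact measurable_subtype_coe (hmeas _ inter_subset_right)
  have han : AnalyticSet (r '' univ) := MeasurableSet.univ.analyticSet_image hrm
  rw [image_univ, hrange, analyticSet_iff_exists_polishSpace_range] at han
  obtain ⟨Y, tY, pY, f, hf, hfS⟩ := han
  let := TopologicalSpace.upgradeIsCompletelyMetrizable Y
  obtain ⟨g, hg⟩ := exists_cantor_injective f hf (by rwa [hfS])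
  -- every subset of the Cantor space gives a Borel set
  let G : Set (ℕ → Bool) → {t : Set M | MeasurableSet t} := fun A =>
    ⟨u ⁻¹' (u '' ((f ∘ g) '' A)), hmeas _ (by
      rw [← hfS]; rintro _ ⟨x, -, rfl⟩; exact mem_range_self _)⟩
  have hG : Function.Injective G := by
    intro A A' hAA
    have h : u ⁻¹' (u '' ((f ∘ g) '' A)) = u ⁻¹' (u '' ((f ∘ g) '' A')) :=
      congrArg Subtype.val hAA
    have hsub : ∀ x, (f ∘ g) x ∈ S := fun x => by rw [← hfS]; exact mem_range_self _
    have hrec : ∀ A : Set (ℕ → Bool), ∀ x,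
        x ∈ A ↔ (f ∘ g) x ∈ u ⁻¹' (u '' ((f ∘ g) '' A)) := by
      intro A x
      constructor
      · intro hx
        exact ⟨_, ⟨x, hx, rfl⟩, rfl⟩
      · rintro ⟨_, ⟨y, hy, rfl⟩, hyx⟩
        have := hg (hinj (hsub y) (hsub x) hyx)
        rwa [← this]
    ext x
    rw [hrec A, hrec A', h]
  have hle1 := Cardinal.lift_mk_le_lift_mk_of_injective hG
  obtain ⟨b, hbc, hb⟩ := MeasurableSpace.CountablyGenerated.isCountablyGenerated (α := M)
  have hle2 : #{t : Set M | MeasurableSet t} ≤ 𝔠 := by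
    subst hb
    exact MeasurableSpace.cardinal_measurableSet_le_continuum
      ((Cardinal.le_aleph0_iff_set_countable.2 hbc).trans aleph0_le_continuum)
  have hle3 : #(Set (ℕ → Bool)) = 2 ^ 𝔠 := by
    rw [Cardinal.mk_set]
    simp
  rw [hle3] at hle1
  have hle4 := hle1.trans (Cardinal.lift_le.2 hle2)
  simp only [Cardinal.lift_continuum, Cardinal.lift_power, Cardinal.lift_ofNat] at hle4
  exact absurd (Cardinal.cantor 𝔠) (not_lt.2 hle4)

lemma stronglyMeasurable_of_measurable {M X : Type*} [MetricSpace M] [CompactSpace M]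
    [MeasurableSpace M] [BorelSpace M] [MetricSpace X] [MeasurableSpace X] [BorelSpace X]
    (u : M → X) (hu : Measurable u) : StronglyMeasurable u := by
  rw [stronglyMeasurable_iff_measurable_separable]
  refine ⟨hu, ?_⟩
  have h : ∀ n : ℕ, ∃ S : Set M, S.Countable ∧ ∀ x, ∃ y ∈ S, dist (u x) (u y) < 1 / ((n : ℝ) + 1) := by
    intro n
    have hpos : (0 : ℝ) < 1 / ((n : ℝ) + 1) := by positivity
    obtain ⟨S, hS⟩ := zorn_subset
      {S : Set M | S.Pairwise fun x y => 1 / ((n : ℝ) + 1) ≤ dist (u x) (u y)} (by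
        intro c hc hchain
        refine ⟨⋃₀ c, ?_, fun s hs => subset_sUnion_of_mem hs⟩
        exact (pairwise_sUnion hchain.directedOn).2 fun s hs => hc hs)
    refine ⟨S, countable_of_separated u hu _ hpos S hS.prop, fun x => ?_⟩
    by_contra hcon
    push Not at hcon
    have hins : insert x S ∈ {S : Set M | S.Pairwise fun x y => 1 / ((n : ℝ) + 1) ≤ dist (u x) (u y)} := by
      refine Set.Pairwise.insert hS.prop fun y hy _ => ⟨hcon y hy, ?_⟩
      rw [dist_comm]
      exact hcon y hy
    have hxS : x ∈ S := hS.le_of_ge hins (subset_insert _ _) (mem_insert _ _)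
    have := hcon x hxS
    rw [dist_self] at this
    linarith
  choose S hSc hS using h
  refine ⟨u '' ⋃ n, S n, (countable_iUnion hSc).image u, ?_⟩
  rintro _ ⟨x, rfl⟩
  rw [Metric.mem_closure_iff]
  intro ε hε
  obtain ⟨n, hn⟩ := exists_nat_one_div_lt hε
  obtain ⟨y, hy, hxy⟩ := hS n x
  exact ⟨u y, ⟨y, mem_iUnion.2 ⟨n, hy⟩, rfl⟩, hxy.trans hn⟩

lemma measurable_edist_uncurry {M X : Type*} [MetricSpace M] [CompactSpace M]
    [MeasurableSpace M] [BorelSpace M] [MetricSpace X] [MeasurableSpace X] [BorelSpace X]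
    (u : M → X) (hu : Measurable u) : Measurable fun z : M × M => edist (u z.1) (u z.2) := by
  have h := stronglyMeasurable_of_measurable u hu
  exact (h.comp_measurable measurable_fst).edist (h.comp_measurable measurable_snd) |>.measurable

/-- Admissible kernels: measurable with a quasi-triangle inequality. -/
def AdmKernel {M : Type*} [MeasurableSpace M] (K : ℝ≥0∞) (D : M → M → ℝ≥0∞) : Prop :=
  Measurable (Function.uncurry D) ∧ (∀ x y z, D x z ≤ K * (D x y + D y z))

/-- The integral over `U × V` is controlled by the sum over the cover. -/
def GoodPair {M ι : Type*} [MeasurableSpace M] [Fintype ι] (μ : Measure M) (K : ℝ≥0∞)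
    (Cov : ι → Set M) (U V : Set M) : Prop :=
  ∃ C : ℝ≥0∞, C ≠ ⊤ ∧ ∀ D : M → M → ℝ≥0∞, AdmKernel K D →
    ∫⁻ x in U, ∫⁻ y in V, D x y ∂μ ∂μ ≤ C * ∑ j, ∫⁻ x in Cov j, ∫⁻ y in Cov j, D x y ∂μ ∂μ

section Good
variable {M ι : Type*} [MeasurableSpace M] [Fintype ι] {μ : Measure M} [IsFiniteMeasure μ]
  {K : ℝ≥0∞} {Cov : ι → Set M}

lemma GoodPair.mono {U V U' V' : Set M} (h : GoodPair μ K Cov U V) (hU : U' ⊆ U) (hV : V' ⊆ V) :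
    GoodPair μ K Cov U' V' := by
  obtain ⟨C, hC, h⟩ := h
  refine ⟨C, hC, fun D hD => le_trans ?_ (h D hD)⟩
  exact (lintegral_mono_set hU).trans (lintegral_mono fun x => lintegral_mono_set hV)

lemma GoodPair.union_right {U V V' : Set M} (h : GoodPair μ K Cov U V)
    (h' : GoodPair μ K Cov U V') : GoodPair μ K Cov U (V ∪ V') := by
  obtain ⟨C, hC, h⟩ := h
  obtain ⟨C', hC', h'⟩ := h'
  refine ⟨C + C', by simp [hC, hC'], fun D hD => ?_⟩
  rw [add_mul]
  refine le_trans ?_ (add_le_add (h D hD) (h' D hD))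
  have m1 : Measurable fun x => ∫⁻ y in V, D x y ∂μ := hD.1.lintegral_prod_right'
  rw [← lintegral_add_left m1]
  exact lintegral_mono fun x => lintegral_union_le _ _ _

lemma GoodPair.union_left {U U' V : Set M} (h : GoodPair μ K Cov U V)
    (h' : GoodPair μ K Cov U' V) : GoodPair μ K Cov (U ∪ U') V := by
  obtain ⟨C, hC, h⟩ := h
  obtain ⟨C', hC', h'⟩ := h'
  refine ⟨C + C', by simp [hC, hC'], fun D hD => ?_⟩
  rw [add_mul]
  exact le_trans (lintegral_union_le _ _ _) (add_le_add (h D hD) (h' D hD))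

lemma GoodPair.trans (hK : K ≠ ⊤) {U N W : Set M} (hN : μ N ≠ 0)
    (h : GoodPair μ K Cov U N) (h' : GoodPair μ K Cov N W) : GoodPair μ K Cov U W := by
  obtain ⟨C, hC, h⟩ := h
  obtain ⟨C', hC', h'⟩ := h'
  have hNt : μ N ≠ ⊤ := measure_ne_top μ N
  refine ⟨(μ N)⁻¹ * (K * (μ W * C + μ U * C')), ?_, fun D hD => ?_⟩
  · have := measure_ne_top μ W
    have := measure_ne_top μ U
    have := ENNReal.inv_ne_top.2 hN
    finiteness
  obtain ⟨hDm, hDt⟩ := hD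
  have m1 : Measurable fun x => ∫⁻ y in N, D x y ∂μ := hDm.lintegral_prod_right'
  have m2 : Measurable fun z => ∫⁻ y in N, D y z ∂μ :=
    (hDm.comp measurable_swap).lintegral_prod_right'
  have hswap : ∫⁻ z in W, ∫⁻ y in N, D y z ∂μ ∂μ = ∫⁻ y in N, ∫⁻ z in W, D y z ∂μ ∂μ :=
    lintegral_lintegral_swap (f := fun z y => D y z) (hDm.comp measurable_swap).aemeasurable
  have key : μ N * ∫⁻ x in U, ∫⁻ z in W, D x z ∂μ ∂μ ≤
      K * (μ W * ∫⁻ x in U, ∫⁻ y in N, D x y ∂μ ∂μ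
        + μ U * ∫⁻ y in N, ∫⁻ z in W, D y z ∂μ ∂μ) := by
    have hpt : ∀ x z, μ N * D x z ≤ K * (∫⁻ y in N, D x y ∂μ + ∫⁻ y in N, D y z ∂μ) := by
      intro x z
      have mx : Measurable fun y => D x y := hDm.comp measurable_prodMk_left
      have mz : Measurable fun y => D y z := hDm.comp measurable_prodMk_right
      calc μ N * D x z = ∫⁻ y in N, D x z ∂μ := by
            rw [setLIntegral_const, mul_comm]
        _ ≤ ∫⁻ y in N, K * (D x y + D y z) ∂μ := lintegral_mono fun y => hDt x y z
        _ = _ := by rw [lintegral_const_mul' _ _ hK, lintegral_add_left mx]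
    calc μ N * ∫⁻ x in U, ∫⁻ z in W, D x z ∂μ ∂μ
        = ∫⁻ x in U, ∫⁻ z in W, μ N * D x z ∂μ ∂μ := by
          rw [← lintegral_const_mul' _ _ hNt]
          simp_rw [lintegral_const_mul' _ _ hNt]
      _ ≤ ∫⁻ x in U, ∫⁻ z in W, K * (∫⁻ y in N, D x y ∂μ + ∫⁻ y in N, D y z ∂μ) ∂μ ∂μ :=
          lintegral_mono fun x => lintegral_mono fun z => hpt x z
      _ = K * ∫⁻ x in U, ((∫⁻ y in N, D x y ∂μ) * μ W
            + ∫⁻ z in W, ∫⁻ y in N, D y z ∂μ ∂μ) ∂μ := by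
          rw [← lintegral_const_mul' _ _ hK]
          refine lintegral_congr fun x => ?_
          rw [lintegral_const_mul' _ _ hK, lintegral_add_left measurable_const, setLIntegral_const]
      _ = _ := by
          rw [lintegral_add_left (m1.mul_const _), lintegral_mul_const _ m1, setLIntegral_const,
            hswap, mul_comm (μ W), mul_comm (μ U)]
  set T := ∑ j, ∫⁻ x in Cov j, ∫⁻ y in Cov j, D x y ∂μ ∂μ
  calc ∫⁻ x in U, ∫⁻ z in W, D x z ∂μ ∂μ
      = (μ N)⁻¹ * (μ N * ∫⁻ x in U, ∫⁻ z in W, D x z ∂μ ∂μ) := by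
        rw [← mul_assoc, ENNReal.inv_mul_cancel hN hNt, one_mul]
    _ ≤ (μ N)⁻¹ * (K * (μ W * (C * T) + μ U * (C' * T))) := by
        refine mul_le_mul_right (key.trans ?_) _
        gcongr
        · exact h D ⟨hDm, hDt⟩
        · exact h' D ⟨hDm, hDt⟩
    _ = _ := by ring

lemma goodPair_cov (j : ι) : GoodPair μ K Cov (Cov j) (Cov j) := by
  refine ⟨1, by simp, fun D _ => ?_⟩
  rw [one_mul]
  exact Finset.single_le_sum (f := fun j => ∫⁻ x in Cov j, ∫⁻ y in Cov j, D x y ∂μ ∂μ)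
    (fun _ _ => zero_le) (Finset.mem_univ j)

end Good

lemma goodPair_univ {M ι : Type*} [MetricSpace M] [CompactSpace M] [ConnectedSpace M]
    [MeasurableSpace M] [BorelSpace M] (μ : Measure M) [IsFiniteMeasure μ]
    (hμ : ∀ U : Set M, IsOpen U → U.Nonempty → 0 < μ U)
    [Fintype ι] (Cov : ι → Set M) (hCopen : ∀ j, IsOpen (Cov j))
    (hCcover : univ ⊆ ⋃ j, Cov j) (K : ℝ≥0∞) (hK : K ≠ ⊤) : GoodPair μ K Cov univ univ := by
  have hcov : ∀ x, ∃ j, x ∈ Cov j := fun x => mem_iUnion.1 (hCcover (mem_univ x))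
  let P : M → M → Prop := fun x y => ∃ U ∈ nhds x, ∃ V ∈ nhds y, GoodPair μ K Cov U V
  have hμn : ∀ (y : M), ∀ N ∈ nhds y, μ N ≠ 0 := by
    intro y N hN
    have h1 := hμ (interior N) isOpen_interior ⟨y, mem_interior_iff_mem_nhds.2 hN⟩
    exact (h1.trans_le (measure_mono interior_subset)).ne'
  have htrans : ∀ x y z, P x y → P y z → P x z := by
    rintro x y z ⟨U, hU, V, hV, h⟩ ⟨V', hV', W, hW, h'⟩
    have hN : V ∩ V' ∈ nhds y := Filter.inter_mem hV hV'
    exact ⟨U, hU, W, hW, GoodPair.trans hK (hμn y _ hN) (h.mono subset_rfl inter_subset_left)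
      (h'.mono inter_subset_right subset_rfl)⟩
  have hcovP : ∀ j, ∀ x ∈ Cov j, ∀ y ∈ Cov j, P x y := fun j x hx y hy =>
    ⟨_, (hCopen j).mem_nhds hx, _, (hCopen j).mem_nhds hy, goodPair_cov j⟩
  have hall : ∀ x y, P x y := by
    intro x
    have hcl : IsClopen {y | P x y} := by
      constructor
      · rw [← isOpen_compl_iff, isOpen_iff_mem_nhds]
        intro y hy
        obtain ⟨j, hj⟩ := hcov y
        filter_upwards [(hCopen j).mem_nhds hj] with z hz hxz
        exact hy (htrans x z y hxz (hcovP j z hz y hj))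
      · rw [isOpen_iff_mem_nhds]
        intro y hy
        obtain ⟨j, hj⟩ := hcov y
        filter_upwards [(hCopen j).mem_nhds hj] with z hz
        exact htrans x y z hy (hcovP j y hj z hz)
    have hx : {y | P x y} = univ := by
      obtain ⟨j, hj⟩ := hcov x
      exact hcl.eq_univ ⟨x, hcovP j x hj x hj⟩
    intro y
    have : y ∈ {y | P x y} := by rw [hx]; trivial
    exact this
  have hempty : ∀ V : Set M, GoodPair μ K Cov V ∅ := fun V =>
    ⟨0, by simp, fun D _ => by simp⟩
  have hempty' : ∀ V : Set M, GoodPair μ K Cov ∅ V := fun V =>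
    ⟨0, by simp, fun D _ => by simp⟩
  have h1 : ∀ x, ∃ U ∈ nhds x, GoodPair μ K Cov U univ := by
    intro x
    refine isCompact_univ.induction_on (p := fun V => ∃ U ∈ nhds x, GoodPair μ K Cov U V)
      ⟨univ, Filter.univ_mem, hempty _⟩ ?_ ?_ ?_
    · rintro s t hst ⟨U, hU, h⟩
      exact ⟨U, hU, h.mono subset_rfl hst⟩
    · rintro s t ⟨U, hU, h⟩ ⟨U', hU', h'⟩
      exact ⟨U ∩ U', Filter.inter_mem hU hU', (h.mono inter_subset_left subset_rfl).union_right
        (h'.mono inter_subset_right subset_rfl)⟩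
    · intro y _
      obtain ⟨U, hU, V, hV, h⟩ := hall x y
      exact ⟨V, mem_nhdsWithin_of_mem_nhds hV, U, hU, h⟩
  refine isCompact_univ.induction_on (p := fun U => GoodPair μ K Cov U univ) (hempty' _)
    (fun s t hst h => h.mono hst subset_rfl) (fun s t h h' => h.union_left h') ?_
  intro x _
  obtain ⟨U, hU, h⟩ := h1 x
  exact ⟨U, mem_nhdsWithin_of_mem_nhds hU, h⟩

/-- **Seminorm patching inequality.** Let `0 < s < 1`, `1 ≤ p < ∞`, `m > 0`. Let `M` be a
connected compact metric space with a finite Borel measure `μ` positive on nonempty open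
sets, and let `(C_j)` be a finite open cover of `M`. Then there is a constant `C` such that
for every metric space `X` and every Borel measurable `u : M → X`,
`|u|_{W^{s,p}(M)}^p ≤ C ∑_j |u|_{W^{s,p}(C_j)}^p`, where
`|u|_{W^{s,p}(A)}^p := ∫_A∫_A d_X(u(x),u(y))^p/d(x,y)^{m+sp} dμ dμ`. -/
theorem seminorm_patching_inequality (s p m : ℝ) (hs0 : 0 < s) (hs1 : s < 1) (hp1 : 1 ≤ p)
    (hm : 0 < m) (M : Type*) [MetricSpace M] [CompactSpace M] [ConnectedSpace M]
    [MeasurableSpace M] [BorelSpace M] (μ : Measure M) [IsFiniteMeasure μ]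
    (hμ : ∀ U : Set M, IsOpen U → U.Nonempty → 0 < μ U)
    (ι : Type*) [Fintype ι] (Cov : ι → Set M) (hCopen : ∀ j, IsOpen (Cov j))
    (hCcover : univ ⊆ ⋃ j, Cov j) :
    ∃ C : ℝ, 0 < C ∧
      ∀ (X : Type*) [MetricSpace X] [MeasurableSpace X] [BorelSpace X] (u : M → X),
        Measurable u →
        (∫⁻ x, ∫⁻ y, edist (u x) (u y) ^ p / edist x y ^ (m + s * p) ∂μ ∂μ) ≤
          ENNReal.ofReal C *
            ∑ j : ι, ∫⁻ x in Cov j, ∫⁻ y in Cov j,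
              edist (u x) (u y) ^ p / edist x y ^ (m + s * p) ∂μ ∂μ := by
  have hp0 : 0 < p := by linarith
  have hq : 0 < m + s * p := by positivity
  set q := m + s * p with hqdef
  have hK : (2 : ℝ≥0∞) ^ (p - 1) ≠ ⊤ :=
    ENNReal.rpow_ne_top_of_nonneg (by linarith) (by simp)
  obtain ⟨C, hC, hgood⟩ := goodPair_univ μ hμ Cov hCopen hCcover _ hK
  obtain ⟨δ, hδ, hleb⟩ := lebesgue_number_lemma_of_emetric isCompact_univ hCopen hCcover
  have hcov : ∀ x y, edist x y < δ → ∃ j, x ∈ Cov j ∧ y ∈ Cov j := by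
    intro x y hxy
    obtain ⟨j, hj⟩ := hleb x (mem_univ x)
    refine ⟨j, hj (Metric.mem_eball_self hδ), hj ?_⟩
    rw [Metric.mem_eball, edist_comm]
    exact hxy
  set R : ℝ≥0∞ := Metric.ediam (univ : Set M) with hR
  have hRt : R ^ q ≠ ⊤ :=
    ENNReal.rpow_ne_top_of_nonneg hq.le isCompact_univ.isBounded.ediam_ne_top
  have hct : (δ ^ q)⁻¹ ≠ ⊤ := by
    rw [ENNReal.inv_ne_top]
    exact (ENNReal.rpow_pos_of_nonneg hδ hq.le).ne'
  set A : ℝ≥0∞ := 1 + (δ ^ q)⁻¹ * (C * R ^ q) with hA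
  have hAt : A ≠ ⊤ := by finiteness
  have hA1 : 1 ≤ A := le_self_add
  refine ⟨A.toReal, ENNReal.toReal_pos (one_pos.trans_le hA1).ne' hAt, ?_⟩
  intro X _ _ _ u hu
  rw [ENNReal.ofReal_toReal hAt]
  have hDm : Measurable fun z : M × M => edist (u z.1) (u z.2) ^ p :=
    (measurable_edist_uncurry u hu).pow_const p
  have hIm : Measurable fun z : M × M => edist (u z.1) (u z.2) ^ p / edist z.1 z.2 ^ q :=
    hDm.div (measurable_edist.pow_const q)
  have hadm : AdmKernel ((2 : ℝ≥0∞) ^ (p - 1)) (fun x y => edist (u x) (u y) ^ p) := by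
    refine ⟨hDm, fun x y z => ?_⟩
    exact (ENNReal.rpow_le_rpow (edist_triangle _ _ _) hp0.le).trans
      (ENNReal.rpow_add_le_mul_rpow_add_rpow _ _ hp1)
  have hDI : ∀ x y, edist (u x) (u y) ^ p ≤
      R ^ q * (edist (u x) (u y) ^ p / edist x y ^ q) := by
    intro x y
    by_cases hxy : x = y
    · subst hxy
      simp [hp0]
    · have h0 : edist x y ^ q ≠ 0 :=
        (ENNReal.rpow_pos_of_nonneg (edist_pos.2 hxy) hq.le).ne'
      have ht : edist x y ^ q ≠ ⊤ := ENNReal.rpow_ne_top_of_nonneg hq.le (edist_ne_top _ _)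
      calc edist (u x) (u y) ^ p = edist x y ^ q * (edist (u x) (u y) ^ p / edist x y ^ q) :=
            (ENNReal.mul_div_cancel h0 ht).symm
        _ ≤ _ := by
            gcongr
            exact Metric.edist_le_ediam_of_mem (mem_univ _) (mem_univ _)
  set T := ∑ j : ι, ∫⁻ x in Cov j, ∫⁻ y in Cov j,
      edist (u x) (u y) ^ p / edist x y ^ q ∂μ ∂μ with hT
  have hDT : ∫⁻ z, edist (u z.1) (u z.2) ^ p ∂(μ.prod μ) ≤ C * R ^ q * T := by
    rw [lintegral_prod _ hDm.aemeasurable, mul_assoc]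
    have h := hgood _ hadm
    simp only [Measure.restrict_univ] at h
    refine h.trans (mul_le_mul_right ?_ _)
    rw [hT, Finset.mul_sum]
    refine Finset.sum_le_sum fun j _ => ?_
    rw [← lintegral_const_mul' _ _ hRt]
    refine lintegral_mono fun x => ?_
    rw [← lintegral_const_mul' _ _ hRt]
    exact lintegral_mono fun y => hDI x y
  have hTprod : T = ∑ j : ι, ∫⁻ z in Cov j ×ˢ Cov j,
      edist (u z.1) (u z.2) ^ p / edist z.1 z.2 ^ q ∂(μ.prod μ) := by
    rw [hT]
    refine Finset.sum_congr rfl fun j _ => ?_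
    rw [← Measure.prod_restrict, lintegral_prod _ hIm.aemeasurable]
  have hmain : ∫⁻ x, ∫⁻ y, edist (u x) (u y) ^ p / edist x y ^ q ∂μ ∂μ
      = ∫⁻ z, edist (u z.1) (u z.2) ^ p / edist z.1 z.2 ^ q ∂(μ.prod μ) :=
    (lintegral_prod _ hIm.aemeasurable).symm
  rw [hmain]
  have hsub : (univ : Set (M × M)) ⊆
      (⋃ j, Cov j ×ˢ Cov j) ∪ {z : M × M | δ ≤ edist z.1 z.2} := by
    rintro ⟨x, y⟩ _
    rcases lt_or_ge (edist x y) δ with h | h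
    · obtain ⟨j, hj⟩ := hcov x y h
      exact Or.inl (mem_iUnion.2 ⟨j, hj⟩)
    · exact Or.inr h
  have hset : MeasurableSet {z : M × M | δ ≤ edist z.1 z.2} :=
    measurableSet_le measurable_const measurable_edist
  calc ∫⁻ z, edist (u z.1) (u z.2) ^ p / edist z.1 z.2 ^ q ∂(μ.prod μ)
      = ∫⁻ z in univ, edist (u z.1) (u z.2) ^ p / edist z.1 z.2 ^ q ∂(μ.prod μ) := by
        rw [Measure.restrict_univ]
    _ ≤ _ := lintegral_mono_set hsub
    _ ≤ _ := lintegral_union_le _ _ _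
    _ ≤ T + (δ ^ q)⁻¹ * (C * R ^ q * T) := by
        refine add_le_add ?_ ?_
        · rw [hTprod]
          refine (lintegral_iUnion_le _ _).trans ?_
          rw [tsum_fintype]
        · calc ∫⁻ z in {z : M × M | δ ≤ edist z.1 z.2},
                edist (u z.1) (u z.2) ^ p / edist z.1 z.2 ^ q ∂(μ.prod μ)
              ≤ ∫⁻ z in {z : M × M | δ ≤ edist z.1 z.2},
                (δ ^ q)⁻¹ * edist (u z.1) (u z.2) ^ p ∂(μ.prod μ) := by
                refine setLIntegral_mono' hset fun z hz => ?_
                rw [div_eq_mul_inv, mul_comm]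
                gcongr
                exact hz
            _ ≤ ∫⁻ z, (δ ^ q)⁻¹ * edist (u z.1) (u z.2) ^ p ∂(μ.prod μ) :=
                setLIntegral_le_lintegral _ _
            _ = (δ ^ q)⁻¹ * ∫⁻ z, edist (u z.1) (u z.2) ^ p ∂(μ.prod μ) :=
                lintegral_const_mul' _ _ hct
            _ ≤ _ := mul_le_mul_right hDT _
    _ = A * T := by rw [hA]; ring
end

section
/- Let m ≥ 3, let V ⊆ ℝ^m be an open set, and let Σ ⊆ ℝ^m be an affine subspace whose dimension n satisfies n ≤ m-3. If V is simply connected (as a topological space with the subspace topology), then V ∖ Σ is simply connected. -/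
open Set

open scoped unitInterval in
/-- General position: push a map of the square off an affine subspace of codimension `≥ 3`,
keeping it fixed on a closed set where it already avoids the subspace. -/
lemma push_off {E : Type*} [NormedAddCommGroup E] [InnerProductSpace ℝ E] [FiniteDimensional ℝ E]
    (V : Set E) (hV : IsOpen V) (Sig : AffineSubspace ℝ E) (hne : (Sig : Set E).Nonempty)
    (hdim : Module.finrank ℝ Sig.direction + 3 ≤ Module.finrank ℝ E)
    (H : I × I → E) (hH : Continuous H) (hHV : ∀ p, H p ∈ V)
    (B : Set (I × I)) (hB : IsClosed B) (hBS : ∀ p ∈ B, H p ∉ Sig) :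
    ∃ F : I × I → E, Continuous F ∧ (∀ p, F p ∈ V \ (Sig : Set E)) ∧ ∀ p ∈ B, F p = H p := by
  have hScl : IsClosed (Sig : Set E) := Sig.closed_of_finiteDimensional
  obtain ⟨e1, he1, h1⟩ := (isCompact_range hH).exists_thickening_subset_open hV
    (by rintro _ ⟨p, rfl⟩; exact hHV p)
  obtain ⟨d, hd, h2⟩ := (hB.isCompact.image hH).exists_thickening_subset_open hScl.isOpen_compl
    (by rintro _ ⟨p, hp, rfl⟩; exact hBS p hp)
  obtain ⟨e, he, hee, hed⟩ : ∃ e : ℝ, 0 < e ∧ e ≤ e1 ∧ 2 * e ≤ d :=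
    ⟨min e1 (d / 2), by positivity, min_le_left _ _, by linarith [min_le_right e1 (d / 2)]⟩
  have hBd : ∀ p ∈ B, 2 * e ≤ Metric.infDist (H p) Sig := by
    intro p hp
    by_contra! hlt
    obtain ⟨y, hy, hxy⟩ := (Metric.infDist_lt_iff hne).1 hlt
    exact h2 (Metric.mem_thickening_iff.2 ⟨H p, ⟨p, hp, rfl⟩, by rw [dist_comm]; linarith⟩) hy
  -- approximation avoiding `Sig`
  obtain ⟨G, hGc, hGd, hGS⟩ : ∃ G : I × I → E, Continuous G ∧ (∀ p, dist (G p) (H p) < e) ∧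
      ∀ p, G p ∉ Sig := by
    let pr : ℝ × ℝ → I × I := fun q => (projIcc 0 1 zero_le_one q.1, projIcc 0 1 zero_le_one q.2)
    have hpr : Continuous pr := by fun_prop
    obtain ⟨g, hg, hgd, -⟩ := (hH.comp hpr).exists_contDiff_approx 1
      (ε := fun _ => e / 2) continuous_const (fun _ => by positivity)
    obtain ⟨s, hs⟩ := hne
    let P := Sig.directionᗮ.orthogonalProjectionOnto
    have hf : ContDiff ℝ 1 (fun q : ℝ × ℝ => P (g q - s)) :=
      P.contDiff.comp (hg.sub contDiff_const)
    have hfr : Module.finrank ℝ (ℝ × ℝ) < Module.finrank ℝ Sig.directionᗮ := by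
      have := Sig.direction.finrank_add_finrank_orthogonal
      simp
      omega
    obtain ⟨c, hc, hcd⟩ := (hf.dense_compl_range_of_finrank_lt_finrank hfr).exists_dist_lt 0
      (half_pos he)
    refine ⟨fun p => g (p.1, p.2) - c, ?_, fun p => ?_, fun p hp => hc ⟨(p.1, p.2), ?_⟩⟩
    · have := hg.continuous
      fun_prop
    · have h := hgd (p.1, p.2)
      have h3 : pr ((p.1 : ℝ), (p.2 : ℝ)) = p := by simp [pr]
      simp only [Function.comp, h3] at h
      rw [dist_eq_norm] at *
      have h4 : ‖(c : E)‖ < e / 2 := by simpa using hcd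
      calc ‖g (p.1, p.2) - c - H p‖ = ‖(g (p.1, p.2) - H p) - c‖ := by congr 1; abel
        _ ≤ ‖g (p.1, p.2) - H p‖ + ‖(c : E)‖ := norm_sub_le _ _
        _ < e := by linarith
    · have h5 : g (p.1, p.2) - c - s ∈ Sig.direction := AffineSubspace.vsub_mem_direction hp hs
      have h6 : P (g (p.1, p.2) - c - s) = 0 :=
        Submodule.orthogonalProjectionOnto_eq_zero_iff.2
          (Sig.direction.le_orthogonal_orthogonal h5)
      have h7 : P (c : E) = c := Submodule.orthogonalProjectionOnto_mem_subspace_eq_self c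
      have h8 : g (p.1, p.2) - s = (g (p.1, p.2) - c - s) + c := by abel
      show P (g (p.1, p.2) - s) = c
      rw [h8, map_add, h6, h7, zero_add]
  let r : I × I → ℝ := fun p => max 0 (min 1 (2 - Metric.infDist (H p) Sig / e))
  have hr0 : ∀ p, 0 ≤ r p := fun p => le_max_left _ _
  have hr1 : ∀ p, r p ≤ 1 := fun p => max_le zero_le_one (min_le_left _ _)
  have hrc : Continuous r := by
    have : Continuous fun p => Metric.infDist (H p) Sig := (Metric.continuous_infDist_pt _).comp hH
    fun_prop
  have hFd : ∀ p, dist (H p + r p • (G p - H p)) (H p) < e := by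
    intro p
    rw [dist_eq_norm, add_sub_cancel_left, norm_smul, Real.norm_of_nonneg (hr0 p), ← dist_eq_norm]
    exact (mul_le_of_le_one_left dist_nonneg (hr1 p)).trans_lt (hGd p)
  refine ⟨fun p => H p + r p • (G p - H p), by fun_prop, fun p => ⟨?_, fun hp => ?_⟩, ?_⟩
  · exact h1 (Metric.mem_thickening_iff.2 ⟨H p, ⟨p, rfl⟩, (hFd p).trans_le hee⟩)
  · have hlt : Metric.infDist (H p) Sig < e :=
      (Metric.infDist_le_dist_of_mem hp).trans_lt (by rw [dist_comm]; exact hFd p)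
    have : r p = 1 := by
      have : Metric.infDist (H p) Sig / e ≤ 1 := (div_le_one he).2 hlt.le
      simp only [r]
      rw [min_eq_left (by linarith)]
      simp
    beta_reduce at hp
    rw [this, one_smul, add_sub_cancel] at hp
    exact hGS p hp
  · intro p hp
    have : r p = 0 := by
      have : 2 ≤ Metric.infDist (H p) Sig / e := (le_div_iff₀ he).2 (hBd p hp)
      simp only [r]
      exact max_eq_left ((min_le_right _ _).trans (by linarith))
    simp [this]

/-- Removing an affine subspace of codimension at least `3` from a simply connected open
subset of `ℝ^m` keeps it simply connected. -/
theorem simplyConnected_diff_affineSubspace (m : ℕ) (hm : 3 ≤ m)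
    (V : Set (EuclideanSpace ℝ (Fin m))) (hV : IsOpen V)
    (Sig : AffineSubspace ℝ (EuclideanSpace ℝ (Fin m)))
    (hSigne : (Sig : Set (EuclideanSpace ℝ (Fin m))).Nonempty)
    (hdim : Module.finrank ℝ Sig.direction ≤ m - 3)
    (hVsc : SimplyConnectedSpace V) :
    SimplyConnectedSpace ↥(V \ (Sig : Set (EuclideanSpace ℝ (Fin m)))) := by
  have key := push_off V hV Sig hSigne (by rw [finrank_euclideanSpace_fin]; omega)
  have hinc := continuous_inclusion (sdiff_subset : V \ (Sig : Set _) ⊆ V)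
  rw [simply_connected_iff_paths_homotopic']
  refine ⟨⟨?_, fun x y => ?_⟩, fun {x y} p₁ p₂ => ?_⟩
  · obtain ⟨v⟩ : Nonempty V := inferInstance
    obtain ⟨F, -, hF, -⟩ := key (fun _ => v) continuous_const (fun _ => v.2) ∅ isClosed_empty
      (by simp)
    exact ⟨⟨F (0, 0), hF _⟩⟩
  · let p := PathConnectedSpace.somePath (inclusion sdiff_subset x : V) (inclusion sdiff_subset y)
    obtain ⟨F, hFc, hF, hFB⟩ := key (fun q => p q.2) (by fun_prop) (fun q => (p q.2).2)
      {q | q.2 = 0 ∨ q.2 = 1}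
      ((isClosed_eq continuous_snd continuous_const).union
        (isClosed_eq continuous_snd continuous_const))
      (by
        rintro q (hq | hq)
        · simpa [hq] using x.2.2
        · simpa [hq] using y.2.2)
    refine ⟨⟨⟨fun t => ⟨F (0, t), hF _⟩, by fun_prop⟩, ?_, ?_⟩⟩
    · ext1
      simpa using hFB (0, 0) (Or.inl rfl)
    · ext1
      simpa using hFB (0, 1) (Or.inr rfl)
  · obtain ⟨h⟩ := SimplyConnectedSpace.paths_homotopic (p₁.map hinc) (p₂.map hinc)
    obtain ⟨F, hFc, hF, hFB⟩ := key (fun q => h q) (by fun_prop) (fun q => (h q).2)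
      {q | (q.1 = 0 ∨ q.1 = 1) ∨ (q.2 = 0 ∨ q.2 = 1)}
      (((isClosed_eq continuous_fst continuous_const).union
        (isClosed_eq continuous_fst continuous_const)).union
        ((isClosed_eq continuous_snd continuous_const).union
        (isClosed_eq continuous_snd continuous_const)))
      (by
        rintro ⟨s, t⟩ ((hq | hq) | (hq | hq)) <;> obtain rfl := hq
        · simpa using (p₁ t).2.2
        · simpa using (p₂ t).2.2
        · simpa using x.2.2
        · simpa using y.2.2)
    refine ⟨⟨⟨⟨fun q => ⟨F q, hF q⟩, by fun_prop⟩, fun t => ?_, fun t => ?_⟩, fun s t ht => ?_⟩⟩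
    · ext1
      simpa using hFB (0, t) (Or.inl (Or.inl rfl))
    · ext1
      simpa using hFB (1, t) (Or.inl (Or.inr rfl))
    · ext1
      rcases ht with rfl | ht
      · simpa using hFB (s, 0) (Or.inr (Or.inl rfl))
      · obtain rfl : t = 1 := ht
        simpa using hFB (s, 1) (Or.inr (Or.inr rfl))
end

section
/- Let 0<s<1 and 1≤p<∞ satisfy sp ≥ 1, and let m ≥ 1. Let (Ñ, d_Ñ) and (N, d_N) be metric spaces and π : Ñ → N be nonexpansive and an isometry at scale ρ>0 (i.e. d_N(π(a),π(b)) ≤ d_Ñ(a,b) for all a,b, with equality whenever d_Ñ(a,b) ≤ ρ). Let Ω ⊆ ℝ^m be a connected open set and let ũ, ṽ : Ω → Ñ be Borel measurable maps which belong to W^{s,p}_loc(Ω, Ñ) and satisfy π ∘ ũ = π ∘ ṽ almost everywhere on Ω. Then either ũ = ṽ almost everywhere on Ω, or ũ(x) ≠ ṽ(x) for almost every x ∈ Ω. -/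
open MeasureTheory Set ENNReal

/-- The Gagliardo `W^{s,p}` double integral of a map `w : ℝ^m → X` on a set `A`. -/
noncomputable def gagliardoIntegral {m : ℕ} {X : Type*} [PseudoEMetricSpace X] (s p : ℝ)
    (A : Set (EuclideanSpace ℝ (Fin m))) (w : EuclideanSpace ℝ (Fin m) → X) : ℝ≥0∞ :=
  ∫⁻ x in A, ∫⁻ y in A, edist (w x) (w y) ^ p / edist x y ^ ((m : ℝ) + s * p)

/-- `w ∈ W^{s,p}_loc(Ω, X)`: every point of `Ω` has an open neighborhood in `Ω` on which the
Gagliardo double integral is finite. -/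
def MemWsplocOn {m : ℕ} {X : Type*} [PseudoEMetricSpace X] (s p : ℝ)
    (Ω : Set (EuclideanSpace ℝ (Fin m))) (w : EuclideanSpace ℝ (Fin m) → X) : Prop :=
  ∀ x ∈ Ω, ∃ U : Set (EuclideanSpace ℝ (Fin m)),
    IsOpen U ∧ x ∈ U ∧ U ⊆ Ω ∧ gagliardoIntegral s p U w < ∞



theorem isSeparable_support_aux {X : Type*} [MetricSpace X] [MeasurableSpace X] [BorelSpace X]
    (μ : Measure X) [SFinite μ] : TopologicalSpace.IsSeparable μ.support := by
  obtain ⟨t, -, htc, ht⟩ := EMetric.subset_countable_closure_of_almost_dense_set μ.support (by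
    intro ε hε
    obtain ⟨δ, hδ0, hδ⟩ : ∃ δ : NNReal, 0 < δ ∧ (δ : ℝ≥0∞) < ε := by
      obtain ⟨δ, h1, h2⟩ := ENNReal.lt_iff_exists_nnreal_btwn.1 hε
      exact ⟨δ, by exact_mod_cast h1, h2⟩
    obtain ⟨M, hM⟩ := zorn_subset {N : Set X | N ⊆ μ.support ∧ Metric.IsSeparated δ N} (by
      intro c hc hchain
      refine ⟨⋃₀ c, ⟨sUnion_subset fun s hs => (hc hs).1, ?_⟩, fun s hs => subset_sUnion_of_mem hs⟩
      exact (pairwise_sUnion hchain.directedOn).2 fun s hs => (hc hs).2)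
    have hcov := Metric.IsCover.of_maximal_isSeparated hM
    refine ⟨M, ?_, ?_⟩
    · have hd : Pairwise fun i j : M => Disjoint (Metric.ball (i : X) (δ / 2)) (Metric.ball (j : X) (δ / 2)) := by
        intro i j hij
        apply Metric.ball_disjoint_ball
        have := hM.1.2 i.2 j.2 (fun h => hij (Subtype.ext h))
        change (δ : ℝ≥0∞) < edist (i : X) j at this
        rw [edist_nndist] at this
        have h2 : δ < nndist (i : X) j := by exact_mod_cast this
        have h3 : (δ : ℝ) < dist (i : X) j := by exact_mod_cast h2
        linarith
      have := Measure.countable_meas_pos_of_disjoint_iUnion (μ := μ)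
        (fun i : M => Metric.isOpen_ball.measurableSet) hd
      have hall : {i : M | 0 < μ (Metric.ball (i : X) (δ / 2))} = univ := by
        ext i
        refine iff_of_true ?_ (mem_univ _)
        exact (Measure.mem_support_iff_forall _).1 (hM.1.1 i.2) _
          (Metric.ball_mem_nhds _ (by positivity))
      rw [hall] at this
      exact countable_coe_iff.1 (countable_univ_iff.1 this)
    · rw [Metric.isCover_iff_subset_iUnion_closedEBall] at hcov
      refine hcov.trans (iUnion₂_mono fun i _ => ?_)
      exact Metric.closedEBall_subset_closedEBall hδ.le)
  exact ⟨t, htc, ht⟩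

theorem kernel_infinite_aux {m : ℕ} (hm : 1 ≤ m) (σ : ℝ) (hσ : 1 ≤ σ)
    (U : Set (EuclideanSpace ℝ (Fin m))) (hU : IsOpen U) (x : EuclideanSpace ℝ (Fin m))
    (hx : x ∈ U) : ∫⁻ y in U, 1 / edist x y ^ ((m : ℝ) + σ) = ∞ := by
  have : Nonempty (Fin m) := ⟨⟨0, hm⟩⟩
  obtain ⟨R, hR, hball⟩ := Metric.isOpen_iff.1 hU x hx
  set c := volume (Metric.ball (0 : EuclideanSpace ℝ (Fin m)) 1) with hc
  have hc0 : c ≠ 0 := (Metric.measure_ball_pos volume _ one_pos).ne'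
  have key : ∀ r : ℝ, 0 < r → r < R → r ≤ 1 →
      ENNReal.ofReal r⁻¹ * c ≤ ∫⁻ y in U, 1 / edist x y ^ ((m : ℝ) + σ) := by
    intro r hr hrR hr1
    calc ENNReal.ofReal r⁻¹ * c ≤ ENNReal.ofReal (r ^ ((m : ℝ) + σ))⁻¹ * (ENNReal.ofReal (r ^ m) * c) := by
          rw [← mul_assoc, ← ENNReal.ofReal_mul (by positivity)]
          gcongr
          rw [Real.rpow_add hr, Real.rpow_natCast, mul_inv, mul_comm, ← mul_assoc,
            mul_inv_cancel₀ (by positivity), one_mul]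
          gcongr
          simpa using Real.rpow_le_rpow_of_exponent_ge hr hr1 hσ
      _ = ∫⁻ y in Metric.ball x r, ENNReal.ofReal (r ^ ((m : ℝ) + σ))⁻¹ := by
          rw [setLIntegral_const, Measure.addHaar_ball volume x hr.le, finrank_euclideanSpace_fin]
      _ ≤ ∫⁻ y in Metric.ball x r, 1 / edist x y ^ ((m : ℝ) + σ) := by
          apply setLIntegral_mono' Metric.isOpen_ball.measurableSet
          intro y hy
          rw [one_div, ENNReal.ofReal_inv_of_pos (by positivity)]
          gcongr
          rw [← ENNReal.ofReal_rpow_of_pos hr]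
          gcongr
          rw [edist_dist]
          exact ENNReal.ofReal_le_ofReal (by rw [dist_comm]; exact (Metric.mem_ball.1 hy).le)
      _ ≤ _ := lintegral_mono_set ((Metric.ball_subset_ball hrR.le).trans hball)
  have h1 : Filter.Tendsto (fun r : ℝ => ENNReal.ofReal r⁻¹ * c) (nhdsWithin 0 (Ioi 0)) (nhds (∞ * c)) := by
    apply ENNReal.Tendsto.mul_const _ (Or.inl (by simp))
    exact ENNReal.tendsto_ofReal_atTop.comp tendsto_inv_nhdsGT_zero
  rw [ENNReal.top_mul hc0] at h1
  refine top_le_iff.1 (le_of_tendsto h1 ?_)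
  filter_upwards [self_mem_nhdsWithin, Ioo_mem_nhdsGT (lt_min hR one_pos)] with r hr hr2
  exact key r hr (hr2.2.trans_le (min_le_left _ _)) (hr2.2.le.trans (min_le_right _ _))

theorem lintegral_midpoint_aux {m : ℕ} (g : EuclideanSpace ℝ (Fin m) → ℝ≥0∞) (hg : Measurable g)
    (x : EuclideanSpace ℝ (Fin m)) :
    ∫⁻ y, g ((2⁻¹ : ℝ) • y + (2⁻¹ : ℝ) • x) = 2 ^ (m : ℝ) * ∫⁻ y, g y := by
  have h := Measure.map_addHaar_smul (volume : Measure (EuclideanSpace ℝ (Fin m)))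
    (r := (2⁻¹ : ℝ)) (by norm_num)
  rw [finrank_euclideanSpace_fin] at h
  have h2 : ∫⁻ y, g (y + (2⁻¹ : ℝ) • x) ∂(Measure.map ((2⁻¹ : ℝ) • ·) (volume : Measure (EuclideanSpace ℝ (Fin m))))
      = ∫⁻ y, g ((2⁻¹ : ℝ) • y + (2⁻¹ : ℝ) • x) :=
    lintegral_map (f := fun y => g (y + (2⁻¹ : ℝ) • x))
      (g := fun y : EuclideanSpace ℝ (Fin m) => (2⁻¹ : ℝ) • y)
      (hg.comp (measurable_id.add_const _)) (by fun_prop)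
  rw [← h2, h, lintegral_smul_measure, lintegral_add_right_eq_self g]
  congr 1
  rw [inv_pow, inv_inv, abs_of_pos (by positivity), ENNReal.ofReal_pow (by norm_num)]
  simp

theorem core_aux {m : ℕ} (σ : ℝ) (hσ : 1 ≤ σ) (D A : Set (EuclideanSpace ℝ (Fin m)))
    (hDc : Convex ℝ D) (hD : MeasurableSet D) (hA : MeasurableSet A)
    (hfin : ∫⁻ x in D ∩ A, ∫⁻ y in D \ A, 1 / edist x y ^ ((m : ℝ) + σ) < ∞) :
    volume (D ∩ A) = 0 ∨ volume (D \ A) = 0 := by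
  classical
  set q : ℝ := (m : ℝ) + σ with hq
  have hq0 : 0 < q := by positivity
  let E := EuclideanSpace ℝ (Fin m)
  let S : ℝ≥0∞ → Set (E × E) := fun t => {z | z.1 ∈ D ∩ A ∧ z.2 ∈ D \ A ∧ edist z.1 z.2 < t}
  have hS : ∀ t, MeasurableSet (S t) := by
    intro t
    refine (measurable_fst (hD.inter hA)).inter ((measurable_snd (hD.diff hA)).inter ?_)
    exact measurableSet_lt (f := fun z : E × E => edist z.1 z.2) (by fun_prop) measurable_const
  let f : ℝ≥0∞ → E × E → ℝ≥0∞ := fun t => (S t).indicator (fun z => 1 / edist z.1 z.2 ^ q)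
  have hf : ∀ t, Measurable (f t) := fun t => Measurable.indicator (by fun_prop) (hS t)
  let J : ℝ≥0∞ → ℝ≥0∞ := fun t => ∫⁻ z, f t z
  have hJ : ∀ t, J t = ∫⁻ x, ∫⁻ y, f t (x, y) := fun t => by
    change ∫⁻ z, f t z ∂(volume.prod volume) = _
    exact lintegral_prod _ (hf t).aemeasurable
  have hJ' : ∀ t, J t = ∫⁻ y, ∫⁻ x, f t (x, y) := fun t => by
    change ∫⁻ z, f t z ∂(volume.prod volume) = _
    exact lintegral_prod_symm _ (hf t).aemeasurable
  have hJtop : J ∞ < ∞ := by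
    rw [hJ]
    convert hfin using 1
    rw [← lintegral_indicator (hD.inter hA)]
    refine lintegral_congr fun x => ?_
    by_cases hx : x ∈ D ∩ A
    · rw [indicator_of_mem hx, ← lintegral_indicator (hD.diff hA)]
      refine lintegral_congr fun y => ?_
      by_cases hy : y ∈ D \ A
      · rw [indicator_of_mem hy]
        exact indicator_of_mem (show (x, y) ∈ S ∞ from ⟨hx, hy, edist_lt_top _ _⟩) _
      · rw [indicator_of_notMem hy]
        exact indicator_of_notMem (fun h => hy h.2.1) _
    · rw [indicator_of_notMem hx]
      have : ∀ y, f ∞ (x, y) = 0 := fun y => indicator_of_notMem (fun h => hx h.1) _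
      simp [this]
  -- pointwise halving
  have hpt : ∀ t x y, f t (x, y) ≤ 2 ^ (-q) * (f (t / 2) (x, (2⁻¹ : ℝ) • y + (2⁻¹ : ℝ) • x)
      + f (t / 2) ((2⁻¹ : ℝ) • x + (2⁻¹ : ℝ) • y, y)) := by
    intro t x y
    by_cases h : (x, y) ∈ S t
    · obtain ⟨hx, hy, hxy⟩ := h
      have e1 : edist x ((2⁻¹ : ℝ) • y + (2⁻¹ : ℝ) • x) = edist x y / 2 := by
        rw [edist_dist, edist_dist, dist_eq_norm, dist_eq_norm,
          show x - ((2⁻¹ : ℝ) • y + (2⁻¹ : ℝ) • x) = (2⁻¹ : ℝ) • (x - y) by module, norm_smul,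
          ENNReal.ofReal_mul (norm_nonneg _), Real.norm_of_nonneg (by norm_num),
          ENNReal.ofReal_inv_of_pos (by norm_num), mul_comm]
        simp [div_eq_mul_inv]
      have e2 : edist ((2⁻¹ : ℝ) • x + (2⁻¹ : ℝ) • y) y = edist x y / 2 := by
        rw [edist_dist, edist_dist, dist_eq_norm, dist_eq_norm,
          show ((2⁻¹ : ℝ) • x + (2⁻¹ : ℝ) • y) - y = (2⁻¹ : ℝ) • (x - y) by module, norm_smul,
          ENNReal.ofReal_mul (norm_nonneg _), Real.norm_of_nonneg (by norm_num),
          ENNReal.ofReal_inv_of_pos (by norm_num), mul_comm]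
        simp [div_eq_mul_inv]
      have hlt : edist x y / 2 < t / 2 :=
        ENNReal.div_lt_div_right (by simp) (by simp) hxy
      have hval : 1 / edist x y ^ q = 2 ^ (-q) * (1 / (edist x y / 2) ^ q) := by
        rw [ENNReal.div_rpow_of_nonneg _ _ hq0.le, one_div, one_div, ENNReal.inv_div (by simp) (by simp),
          div_eq_mul_inv, ← mul_assoc, ← ENNReal.rpow_add _ _ (by simp) (by simp)]
        simp
      have hmid : (2⁻¹ : ℝ) • y + (2⁻¹ : ℝ) • x ∈ D :=
        hDc hy.1 hx.1 (by norm_num) (by norm_num) (by norm_num)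
      have hmeq : (2⁻¹ : ℝ) • x + (2⁻¹ : ℝ) • y = (2⁻¹ : ℝ) • y + (2⁻¹ : ℝ) • x := add_comm _ _
      have hft : f t (x, y) = 1 / edist x y ^ q :=
        indicator_of_mem (show (x, y) ∈ S t from ⟨hx, hy, hxy⟩) _
      rw [hft, hval]
      gcongr
      by_cases hmA : (2⁻¹ : ℝ) • y + (2⁻¹ : ℝ) • x ∈ A
      · refine le_trans (le_of_eq ?_) le_add_self
        symm
        rw [← e2]
        exact indicator_of_mem (show ((2⁻¹ : ℝ) • x + (2⁻¹ : ℝ) • y, y) ∈ S (t/2) from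
          ⟨hmeq ▸ ⟨hmid, hmA⟩, hy, e2 ▸ hlt⟩) _
      · refine le_trans (le_of_eq ?_) le_self_add
        symm
        rw [← e1]
        exact indicator_of_mem (show (x, (2⁻¹ : ℝ) • y + (2⁻¹ : ℝ) • x) ∈ S (t/2) from
          ⟨hx, ⟨hmid, hmA⟩, e1 ▸ hlt⟩) _
    · rw [show f t (x, y) = 0 from indicator_of_notMem h _]
      exact zero_le
  have hhalf : ∀ t, J t ≤ J (t / 2) := by
    intro t
    have m1 : Measurable fun z : E × E => f (t / 2) (z.1, (2⁻¹ : ℝ) • z.2 + (2⁻¹ : ℝ) • z.1) :=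
      (hf _).comp (by fun_prop)
    have m2 : Measurable fun z : E × E => f (t / 2) ((2⁻¹ : ℝ) • z.1 + (2⁻¹ : ℝ) • z.2, z.2) :=
      (hf _).comp (by fun_prop)
    have i1 : ∫⁻ z : E × E, f (t / 2) (z.1, (2⁻¹ : ℝ) • z.2 + (2⁻¹ : ℝ) • z.1) = 2 ^ (m : ℝ) * J (t / 2) := by
      change ∫⁻ z, _ ∂(volume.prod volume) = _
      rw [lintegral_prod _ m1.aemeasurable, hJ, ← lintegral_const_mul' _ _ (by simp)]
      refine lintegral_congr fun x => ?_
      exact lintegral_midpoint_aux (fun y => f (t / 2) (x, y)) ((hf _).comp (by fun_prop)) x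
    have i2 : ∫⁻ z : E × E, f (t / 2) ((2⁻¹ : ℝ) • z.1 + (2⁻¹ : ℝ) • z.2, z.2) = 2 ^ (m : ℝ) * J (t / 2) := by
      change ∫⁻ z, _ ∂(volume.prod volume) = _
      rw [lintegral_prod_symm _ m2.aemeasurable, hJ', ← lintegral_const_mul' _ _ (by simp)]
      refine lintegral_congr fun y => ?_
      exact lintegral_midpoint_aux (fun x => f (t / 2) (x, y)) ((hf _).comp (by fun_prop)) y
    calc J t ≤ ∫⁻ z : E × E, 2 ^ (-q) * (f (t / 2) (z.1, (2⁻¹ : ℝ) • z.2 + (2⁻¹ : ℝ) • z.1)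
          + f (t / 2) ((2⁻¹ : ℝ) • z.1 + (2⁻¹ : ℝ) • z.2, z.2)) :=
          lintegral_mono fun z => hpt t z.1 z.2
      _ = 2 ^ (-q) * (2 ^ (m : ℝ) * J (t / 2) + 2 ^ (m : ℝ) * J (t / 2)) := by
          rw [lintegral_const_mul' _ _ (by simp), lintegral_add_left m1, i1, i2]
      _ = 2 ^ (-q + m + 1) * J (t / 2) := by
          rw [ENNReal.rpow_add _ _ (by simp) (by simp), ENNReal.rpow_add _ _ (by simp) (by simp),
            ENNReal.rpow_one]
          ring
      _ ≤ 1 * J (t / 2) := by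
          gcongr
          calc (2 : ℝ≥0∞) ^ (-q + m + 1) ≤ 2 ^ (0 : ℝ) :=
                ENNReal.rpow_le_rpow_of_exponent_le (by norm_num) (by rw [hq]; linarith)
            _ = 1 := ENNReal.rpow_zero
      _ = J (t / 2) := one_mul _
  have hiter : ∀ t : ℝ≥0∞, ∀ n : ℕ, J t ≤ J (t / 2 ^ n) := by
    intro t n
    induction n with
    | zero => simp
    | succ k ih =>
      refine ih.trans ((hhalf _).trans (le_of_eq ?_))
      rw [pow_succ, div_eq_mul_inv, div_eq_mul_inv, div_eq_mul_inv,
        ENNReal.mul_inv (by simp) (by simp), mul_assoc]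
  have hzero : ∀ t : ℝ≥0∞, t ≠ ∞ → J t = 0 := by
    intro t ht
    have hsc : Filter.Tendsto (fun n : ℕ => t / 2 ^ n) Filter.atTop (nhds 0) := by
      have h0 : Filter.Tendsto (fun n : ℕ => (2⁻¹ : ℝ≥0∞) ^ n) Filter.atTop (nhds 0) :=
        ENNReal.tendsto_pow_atTop_nhds_zero_of_lt_one (by simp)
      have := ENNReal.Tendsto.const_mul h0 (Or.inr ht)
      simpa [div_eq_mul_inv, ENNReal.inv_pow] using this
    have hlim : Filter.Tendsto (fun n : ℕ => J (t / 2 ^ n)) Filter.atTop (nhds (∫⁻ _ : E × E, 0)) := by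
      refine tendsto_lintegral_of_dominated_convergence (f ∞) (fun n => hf _) ?_ hJtop.ne ?_
      · intro n
        refine Filter.Eventually.of_forall fun z => ?_
        have hsub : S (t / 2 ^ n) ⊆ S ∞ := fun z hz => ⟨hz.1, hz.2.1, edist_lt_top _ _⟩
        exact indicator_le_indicator_of_subset hsub (fun _ => zero_le) z
      · refine Filter.Eventually.of_forall fun z => ?_
        apply tendsto_const_nhds.congr'
        by_cases hz : z.1 ∈ D ∩ A ∧ z.2 ∈ D \ A
        · have hne : 0 < edist z.1 z.2 := edist_pos.2 fun h => hz.2.2 (h ▸ hz.1.2)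
          filter_upwards [hsc.eventually (gt_mem_nhds hne)] with n hn
          exact (indicator_of_notMem (fun h => absurd h.2.2 (not_lt.2 hn.le)) _).symm
        · refine Filter.Eventually.of_forall fun n => ?_
          exact (indicator_of_notMem (fun h => hz ⟨h.1, h.2.1⟩) _).symm
    rw [lintegral_zero] at hlim
    exact le_antisymm (ge_of_tendsto' hlim (hiter t)) zero_le
  have hnull : ∀ n : ℕ, volume (S n) = 0 := by
    intro n
    have h := (lintegral_eq_zero_iff (hf n)).1 (hzero n (by simp))
    refine measure_mono_null (fun z hz => ?_) h
    change ¬ (f n z = 0)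
    rw [show f n z = 1 / edist z.1 z.2 ^ q from indicator_of_mem hz _, one_div]
    exact ENNReal.inv_ne_zero.2 (ENNReal.rpow_ne_top_of_nonneg hq0.le (edist_ne_top _ _))
  have hprod : (volume.prod volume) ((D ∩ A) ×ˢ (D \ A)) = 0 := by
    refine measure_mono_null (t := ⋃ n : ℕ, S n) (fun z hz => ?_) (measure_iUnion_null hnull)
    obtain ⟨n, hn⟩ := ENNReal.exists_nat_gt (edist_ne_top z.1 z.2)
    exact mem_iUnion.2 ⟨n, hz.1, hz.2, hn⟩
  rw [Measure.prod_prod] at hprod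
  exact mul_eq_zero.1 hprod

theorem aesm_aux {m : ℕ} (hm : 1 ≤ m) (s p : ℝ) (hp : 1 ≤ p) (hsp : 1 ≤ s * p)
    {X : Type*} [MetricSpace X] [MeasurableSpace X] [BorelSpace X]
    (w : EuclideanSpace ℝ (Fin m) → X) (hw : Measurable w)
    (U : Set (EuclideanSpace ℝ (Fin m))) (hU : IsOpen U)
    (hfin : gagliardoIntegral s p U w < ∞) : AEStronglyMeasurable w (volume.restrict U) := by
  set μ : Measure X := Measure.map w (volume.restrict U) with hμ
  have hsep := isSeparable_support_aux μ
  rw [aestronglyMeasurable_iff_aemeasurable_separable]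
  refine ⟨hw.aemeasurable, μ.support, hsep, ?_⟩
  have hBad : MeasurableSet (w ⁻¹' μ.supportᶜ) := hw Measure.isOpen_compl_support.measurableSet
  have hFtop : ∀ x ∈ U ∩ w ⁻¹' μ.supportᶜ,
      ∫⁻ y in U, edist (w x) (w y) ^ p / edist x y ^ ((m : ℝ) + s * p) = ∞ := by
    rintro x ⟨hxU, hx⟩
    obtain ⟨V, hV, hV0⟩ := Measure.notMem_support_iff_exists.1 hx
    obtain ⟨δ, hδ, hb⟩ := EMetric.mem_nhds_iff.1 hV
    have hb0 : ∀ᵐ y ∂(volume.restrict U), min δ 1 ≤ edist (w x) (w y) := by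
      have h0 := measure_mono_null hb hV0
      rw [hμ, Measure.map_apply hw Metric.isOpen_eball.measurableSet] at h0
      refine measure_mono_null (fun y hy => ?_) h0
      have hy' : ¬ (min δ 1 ≤ edist (w x) (w y)) := hy
      rw [not_le] at hy'
      change edist (w y) (w x) < δ
      rw [edist_comm]
      exact hy'.trans_le (min_le_left _ _)
    have hδ' : min δ 1 ^ p ≠ 0 := by
      have : 0 < min δ 1 := lt_min hδ one_pos
      exact (ENNReal.rpow_pos this (ne_top_of_le_ne_top one_ne_top (min_le_right _ _))).ne'
    have hδt : min δ 1 ^ p ≠ ∞ := ENNReal.rpow_ne_top_of_nonneg (by linarith)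
      (ne_top_of_le_ne_top one_ne_top (min_le_right _ _))
    rw [← top_le_iff]
    calc ∞ = min δ 1 ^ p * ∫⁻ y in U, 1 / edist x y ^ ((m : ℝ) + s * p) := by
          rw [kernel_infinite_aux hm _ hsp U hU x hxU, ENNReal.mul_top hδ']
      _ = ∫⁻ y in U, min δ 1 ^ p * (1 / edist x y ^ ((m : ℝ) + s * p)) :=
          (lintegral_const_mul' _ _ hδt).symm
      _ ≤ _ := by
          apply lintegral_mono_ae
          filter_upwards [hb0] with y hy
          rw [mul_one_div]
          gcongr
  have hnull : volume (U ∩ w ⁻¹' μ.supportᶜ) = 0 := by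
    by_contra hne
    have hmeas : MeasurableSet (U ∩ w ⁻¹' μ.supportᶜ) := hU.measurableSet.inter hBad
    have : ∞ ≤ gagliardoIntegral s p U w := by
      calc ∞ = ∫⁻ x in U ∩ w ⁻¹' μ.supportᶜ, ∞ := by
            rw [setLIntegral_const, ENNReal.top_mul hne]
        _ ≤ ∫⁻ x in U ∩ w ⁻¹' μ.supportᶜ,
              ∫⁻ y in U, edist (w x) (w y) ^ p / edist x y ^ ((m : ℝ) + s * p) :=
            setLIntegral_mono' hmeas fun x hx => (hFtop x hx).ge
        _ ≤ _ := lintegral_mono_set inter_subset_left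
    exact absurd hfin (not_lt.2 this)
  rw [ae_iff, Measure.restrict_apply' hU.measurableSet]
  refine measure_mono_null (fun x hx => ?_) hnull
  exact ⟨hx.2, hx.1⟩

theorem gagliardo_mono_aux {m : ℕ} {X : Type*} [PseudoEMetricSpace X] (s p : ℝ)
    {A B : Set (EuclideanSpace ℝ (Fin m))} (h : A ⊆ B) (w : EuclideanSpace ℝ (Fin m) → X) :
    gagliardoIntegral s p A w ≤ gagliardoIntegral s p B w :=
  (lintegral_mono fun _ => lintegral_mono_set h).trans (lintegral_mono_set h)

theorem local_aux {m : ℕ} (hm : 1 ≤ m) (s p : ℝ) (hp : 1 ≤ p) (hsp : 1 ≤ s * p)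
    {X : Type*} [MetricSpace X] [MeasurableSpace X] [BorelSpace X]
    (u v : EuclideanSpace ℝ (Fin m) → X) (hu : Measurable u) (hv : Measurable v)
    (D : Set (EuclideanSpace ℝ (Fin m))) (hD : IsOpen D) (hDc : Convex ℝ D)
    (hfu : gagliardoIntegral s p D u < ∞) (hfv : gagliardoIntegral s p D v < ∞)
    (ρ : ℝ) (hρ : 0 < ρ)
    (hsep : ∀ᵐ x ∂(volume.restrict D), u x = v x ∨ ρ < dist (u x) (v x)) :
    (∀ᵐ x ∂(volume.restrict D), u x = v x) ∨ (∀ᵐ x ∂(volume.restrict D), u x ≠ v x) := by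
  have hus := aesm_aux hm s p hp hsp u hu D hD hfu
  have hvs := aesm_aux hm s p hp hsp v hv D hD hfv
  set u' := hus.mk u with hu'
  set v' := hvs.mk v with hv'
  have hu's : StronglyMeasurable u' := hus.stronglyMeasurable_mk
  have hv's : StronglyMeasurable v' := hvs.stronglyMeasurable_mk
  have huu : u =ᵐ[volume.restrict D] u' := hus.ae_eq_mk
  have hvv : v =ᵐ[volume.restrict D] v' := hvs.ae_eq_mk
  set A := {x | u' x = v' x} with hAdef
  have hA : MeasurableSet A := hu's.measurableSet_eq_fun hv's
  set q : ℝ := (m : ℝ) + s * p with hq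
  set c : ℝ≥0∞ := ENNReal.ofReal (ρ / 2) ^ p with hc
  have hc0 : c ≠ 0 := (ENNReal.rpow_pos (by simpa using hρ) ofReal_ne_top).ne'
  have hct : c ≠ ∞ := ENNReal.rpow_ne_top_of_nonneg (by linarith) ofReal_ne_top
  -- the measurable integrands
  have mk : ∀ w : EuclideanSpace ℝ (Fin m) → X, StronglyMeasurable w →
      Measurable fun z : EuclideanSpace ℝ (Fin m) × EuclideanSpace ℝ (Fin m) =>
        edist (w z.1) (w z.2) ^ p / edist z.1 z.2 ^ q := by
    intro w hw
    have h1 : Measurable fun z : EuclideanSpace ℝ (Fin m) × EuclideanSpace ℝ (Fin m) =>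
        edist (w z.1) (w z.2) :=
      ((hw.comp_measurable measurable_fst).edist (hw.comp_measurable measurable_snd)).measurable
    have h2 : Measurable fun z : EuclideanSpace ℝ (Fin m) × EuclideanSpace ℝ (Fin m) =>
        edist z.1 z.2 := by fun_prop
    exact (h1.pow_const p).div (h2.pow_const q)
  have gcongr' : ∀ w w' : EuclideanSpace ℝ (Fin m) → X, w =ᵐ[volume.restrict D] w' →
      gagliardoIntegral s p D w = gagliardoIntegral s p D w' := by
    intro w w' h
    apply lintegral_congr_ae
    filter_upwards [h] with x hx
    apply lintegral_congr_ae
    filter_upwards [h] with y hy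
    rw [hx, hy]
  have hfu' : gagliardoIntegral s p D u' < ∞ := gcongr' u u' huu ▸ hfu
  have hfv' : gagliardoIntegral s p D v' < ∞ := gcongr' v v' hvv ▸ hfv
  have hsep' : ∀ᵐ x ∂(volume.restrict D), u' x = v' x ∨ ρ < dist (u' x) (v' x) := by
    filter_upwards [hsep, huu, hvv] with x h1 h2 h3
    rwa [← h2, ← h3]
  have hmain : c * ∫⁻ x in D ∩ A, ∫⁻ y in D \ A, 1 / edist x y ^ q
      ≤ gagliardoIntegral s p D u' + gagliardoIntegral s p D v' := by
    calc c * ∫⁻ x in D ∩ A, ∫⁻ y in D \ A, 1 / edist x y ^ q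
        = ∫⁻ x in D ∩ A, ∫⁻ y in D \ A, c * (1 / edist x y ^ q) := by
          rw [← lintegral_const_mul' _ _ hct]
          exact lintegral_congr fun x => (lintegral_const_mul' _ _ hct).symm
      _ ≤ ∫⁻ x in D ∩ A, ∫⁻ y in D \ A, (edist (u' x) (u' y) ^ p / edist x y ^ q
            + edist (v' x) (v' y) ^ p / edist x y ^ q) := by
          refine setLIntegral_mono' (hD.measurableSet.inter hA) fun x hx => ?_
          apply lintegral_mono_ae
          have hr := ae_restrict_of_ae_restrict_of_subset (s := D \ A) diff_subset hsep'
          filter_upwards [hr, ae_restrict_mem (hD.measurableSet.diff hA)] with y hy hyA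
          have hy2 : ρ < dist (u' y) (v' y) := hy.resolve_left hyA.2
          have hxe : u' x = v' x := hx.2
          rw [← ENNReal.add_div, mul_one_div]
          gcongr
          have htri : dist (u' y) (v' y) ≤ dist (u' x) (u' y) + dist (v' x) (v' y) := by
            have := dist_triangle (u' y) (u' x) (v' y)
            rw [dist_comm (u' y) (u' x)] at this
            rwa [hxe] at this ⊢
          rcases le_total (ρ / 2) (dist (u' x) (u' y)) with h | h
          · refine le_trans ?_ le_self_add
            rw [hc, edist_dist]
            gcongr
          · refine le_trans ?_ le_add_self
            rw [hc, edist_dist]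
            gcongr
            linarith
      _ ≤ ∫⁻ x in D, ∫⁻ y in D, (edist (u' x) (u' y) ^ p / edist x y ^ q
            + edist (v' x) (v' y) ^ p / edist x y ^ q) :=
          (lintegral_mono fun _ => lintegral_mono_set diff_subset).trans
            (lintegral_mono_set inter_subset_left)
      _ = gagliardoIntegral s p D u' + gagliardoIntegral s p D v' := by
          have e : ∀ x, ∫⁻ y in D, (edist (u' x) (u' y) ^ p / edist x y ^ q
            + edist (v' x) (v' y) ^ p / edist x y ^ q) =
            (∫⁻ y in D, edist (u' x) (u' y) ^ p / edist x y ^ q) +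
            ∫⁻ y in D, edist (v' x) (v' y) ^ p / edist x y ^ q := fun x =>
            lintegral_add_left ((mk u' hu's).comp measurable_prodMk_left) _
          rw [lintegral_congr e]
          exact lintegral_add_left (mk u' hu's).lintegral_prod_right' _
  have hfin : ∫⁻ x in D ∩ A, ∫⁻ y in D \ A, 1 / edist x y ^ q < ∞ := by
    have h := hmain.trans_lt (ENNReal.add_lt_top.2 ⟨hfu', hfv'⟩)
    by_contra hcon
    rw [not_lt, top_le_iff] at hcon
    rw [hcon, ENNReal.mul_top hc0] at h
    exact lt_irrefl _ h
  rcases core_aux (s * p) hsp D A hDc hD.measurableSet hA hfin with h | h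
  · right
    have h' : ∀ᵐ x ∂(volume.restrict D), u' x ≠ v' x := by
      rw [ae_iff, Measure.restrict_apply' hD.measurableSet]
      refine measure_mono_null (t := D ∩ A) ?_ h
      exact fun x hx => ⟨hx.2, not_not.1 hx.1⟩
    filter_upwards [h', huu, hvv] with x h1 h2 h3
    rwa [h2, h3]
  · left
    have h' : ∀ᵐ x ∂(volume.restrict D), u' x = v' x := by
      rw [ae_iff, Measure.restrict_apply' hD.measurableSet]
      refine measure_mono_null (t := D \ A) ?_ h
      exact fun x hx => ⟨hx.2, hx.1⟩
    filter_upwards [h', huu, hvv] with x h1 h2 h3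
    rwa [h2, h3]

theorem global_aux {m : ℕ} (Ω : Set (EuclideanSpace ℝ (Fin m)))
    (P : EuclideanSpace ℝ (Fin m) → Prop)
    (h : ∀ x ∈ Ω, ∃ r > 0, ∀ᵐ y ∂(volume.restrict (Metric.ball x r)), P y) (hΩ : IsOpen Ω) :
    ∀ᵐ x ∂(volume.restrict Ω), P x := by
  rw [ae_iff, Measure.restrict_apply' hΩ.measurableSet]
  apply measure_null_of_locally_null
  rintro x ⟨-, hx⟩
  obtain ⟨r, hr, hP⟩ := h x hx
  rw [ae_iff, Measure.restrict_apply' Metric.isOpen_ball.measurableSet] at hP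
  refine ⟨_, Filter.inter_mem self_mem_nhdsWithin
    (mem_nhdsWithin_of_mem_nhds (Metric.ball_mem_nhds x hr)), measure_mono_null ?_ hP⟩
  exact fun y hy => ⟨hy.1.1, hy.2⟩

theorem isOpen_aux {m : ℕ} (P : EuclideanSpace ℝ (Fin m) → Prop) :
    IsOpen {x | ∃ r > 0, ∀ᵐ y ∂(volume.restrict (Metric.ball x r)), P y} := by
  rw [Metric.isOpen_iff]
  rintro x ⟨r, hr, h⟩
  refine ⟨r / 2, by positivity, fun z hz => ⟨r / 2, by positivity, ?_⟩⟩
  refine ae_restrict_of_ae_restrict_of_subset (Metric.ball_subset_ball' ?_) h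
  have := Metric.mem_ball.1 hz
  linarith

/-- **Uniqueness of liftings (dichotomy).** For `sp ≥ 1`, if `π : Ñ → N` is nonexpansive and
an isometry at scale `ρ > 0`, `Ω ⊆ ℝ^m` is a connected open set and `ũ, ṽ ∈ W^{s,p}_loc(Ω,Ñ)`
are Borel measurable with `π ∘ ũ = π ∘ ṽ` a.e. on `Ω`, then either `ũ = ṽ` a.e. on `Ω` or
`ũ ≠ ṽ` a.e. on `Ω`. -/
theorem lifting_uniqueness_dichotomy (s p : ℝ) (m : ℕ) (hs0 : 0 < s) (hs1 : s < 1)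
    (hp1 : 1 ≤ p) (hsp : 1 ≤ s * p) (hm : 1 ≤ m)
    {Ntl N : Type*} [MetricSpace Ntl] [MetricSpace N]
    [MeasurableSpace Ntl] [BorelSpace Ntl]
    (π : Ntl → N) (ρ : ℝ) (hρ : 0 < ρ)
    (hnonexp : ∀ a b : Ntl, dist (π a) (π b) ≤ dist a b)
    (hiso : ∀ a b : Ntl, dist a b ≤ ρ → dist (π a) (π b) = dist a b)
    (Ω : Set (EuclideanSpace ℝ (Fin m))) (hΩo : IsOpen Ω) (hΩc : IsConnected Ω)
    (ut vt : EuclideanSpace ℝ (Fin m) → Ntl) (hutm : Measurable ut) (hvtm : Measurable vt)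
    (hutloc : MemWsplocOn s p Ω ut) (hvtloc : MemWsplocOn s p Ω vt)
    (hπ : ∀ᵐ x ∂(volume.restrict Ω), π (ut x) = π (vt x)) :
    (∀ᵐ x ∂(volume.restrict Ω), ut x = vt x) ∨
      (∀ᵐ x ∂(volume.restrict Ω), ut x ≠ vt x) := by
  have hsep : ∀ᵐ x ∂(volume.restrict Ω), ut x = vt x ∨ ρ < dist (ut x) (vt x) := by
    filter_upwards [hπ] with x hx
    rcases le_or_gt (dist (ut x) (vt x)) ρ with h | h
    · left
      have := hiso _ _ h
      rw [hx, dist_self] at this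
      exact dist_eq_zero.1 this.symm
    · exact Or.inr h
  have hloc : ∀ x ∈ Ω, (∃ r > 0, ∀ᵐ y ∂(volume.restrict (Metric.ball x r)), ut y = vt y) ∨
      (∃ r > 0, ∀ᵐ y ∂(volume.restrict (Metric.ball x r)), ut y ≠ vt y) := by
    intro x hx
    obtain ⟨U, hU, hxU, hUΩ, hUf⟩ := hutloc x hx
    obtain ⟨V, hV, hxV, -, hVf⟩ := hvtloc x hx
    obtain ⟨r, hr, hb⟩ := Metric.isOpen_iff.1 (hU.inter hV) x ⟨hxU, hxV⟩
    have hbU : Metric.ball x r ⊆ U := hb.trans inter_subset_left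
    have hbV : Metric.ball x r ⊆ V := hb.trans inter_subset_right
    rcases local_aux hm s p hp1 hsp ut vt hutm hvtm (Metric.ball x r) Metric.isOpen_ball
      (convex_ball x r) ((gagliardo_mono_aux s p hbU ut).trans_lt hUf)
      ((gagliardo_mono_aux s p hbV vt).trans_lt hVf) ρ hρ
      (ae_restrict_of_ae_restrict_of_subset (hbU.trans hUΩ) hsep) with h | h
    · exact Or.inl ⟨r, hr, h⟩
    · exact Or.inr ⟨r, hr, h⟩
  have hO1 := isOpen_aux (fun y => ut y = vt y)
  have hO2 := isOpen_aux (fun y => ut y ≠ vt y)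
  have hdisj : ∀ x, ¬ ((∃ r > 0, ∀ᵐ y ∂(volume.restrict (Metric.ball x r)), ut y = vt y) ∧
      (∃ r > 0, ∀ᵐ y ∂(volume.restrict (Metric.ball x r)), ut y ≠ vt y)) := by
    rintro x ⟨⟨r, hr, h1⟩, ⟨r', hr', h2⟩⟩
    have h1' := ae_restrict_of_ae_restrict_of_subset
      (Metric.ball_subset_ball (x := x) (min_le_left r r')) h1
    have h2' := ae_restrict_of_ae_restrict_of_subset
      (Metric.ball_subset_ball (x := x) (min_le_right r r')) h2
    have h3 : ∀ᵐ y ∂(volume.restrict (Metric.ball x (min r r'))), False := by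
      filter_upwards [h1', h2'] with y ha hb using hb ha
    rw [Filter.eventually_false_iff_eq_bot, ae_eq_bot, Measure.restrict_eq_zero] at h3
    exact (Metric.measure_ball_pos volume x (lt_min hr hr')).ne' h3
  by_cases hne : ∃ x ∈ Ω, ∃ r > 0, ∀ᵐ y ∂(volume.restrict (Metric.ball x r)), ut y = vt y
  · left
    obtain ⟨x, hx, hx1⟩ := hne
    refine global_aux Ω _ (fun y hy => ?_) hΩo
    rcases hloc y hy with h | h
    · exact h
    · obtain ⟨z, -, hz⟩ := hΩc.isPreconnected _ _ hO1 hO2 (fun z hz => hloc z hz)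
        ⟨x, hx, hx1⟩ ⟨y, hy, h⟩
      exact absurd hz (hdisj z)
  · right
    refine global_aux Ω _ (fun y hy => ?_) hΩo
    exact (hloc y hy).resolve_left fun h => hne ⟨y, hy, h⟩
end
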